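/- arXiv:0712.1514 — 2 statements merged into one kernel-verified Lean document; each statement's English description precedes it below -/
import Mathlib

section
/- Let b > 0 and λ > 0. Then the density of states of the constant-field Landau Hamiltonian on ℝ² satisfies the Colin de Verdière formula: lim_{R→∞} N(λ; q_b, (-R/2, R/2)²) / R² = (b/2π) · #{ n ∈ ℕ : (2n+1)b < λ }. -/
open MeasureTheory Real Filter

noncomputable section

/-- The upper half-plane ℍ as a subset of ℝ². -/
def UHP : Set (ℝ × ℝ) := {p : ℝ × ℝ | 0 < p.2}

/-- The hyperbolic measure `dv = y⁻² dx dy` on ℍ. -/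
def volH : Measure (ℝ × ℝ) :=
  (volume.restrict UHP).withDensity fun p => ENNReal.ofReal ((p.2 ^ 2)⁻¹)

/-- x-derivative of a complex function on ℝ². -/
def dX (f : ℝ × ℝ → ℂ) (p : ℝ × ℝ) : ℂ := fderiv ℝ f p (1, 0)

/-- y-derivative of a complex function on ℝ². -/
def dY (f : ℝ × ℝ → ℂ) (p : ℝ × ℝ) : ℂ := fderiv ℝ f p (0, 1)

/-- x-derivative of a real function on ℝ². -/
def dXr (f : ℝ × ℝ → ℝ) (p : ℝ × ℝ) : ℝ := fderiv ℝ f p (1, 0)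

/-- y-derivative of a real function on ℝ². -/
def dYr (f : ℝ × ℝ → ℝ) (p : ℝ × ℝ) : ℝ := fderiv ℝ f p (0, 1)

/-- The magnetic field `b̃ = y² (∂ₓA₂ - ∂_yA₁)`. -/
def fieldB (A₁ A₂ : ℝ × ℝ → ℝ) (p : ℝ × ℝ) : ℝ := p.2 ^ 2 * (dXr A₂ p - dYr A₁ p)

/-- The magnetic intensity `b = |b̃|`. -/
def intenB (A₁ A₂ : ℝ × ℝ → ℝ) (p : ℝ × ℝ) : ℝ := |fieldB A₁ A₂ p|

/-- Smooth compactly supported test functions with support inside a set `Ω`. -/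
def IsTestOn (Ω : Set (ℝ × ℝ)) (f : ℝ × ℝ → ℂ) : Prop :=
  ContDiff ℝ (⊤ : ℕ∞) f ∧ HasCompactSupport f ∧ tsupport f ⊆ Ω

/-- The quadratic form of the magnetic Laplacian on ℍ. -/
def qA (A₁ A₂ : ℝ × ℝ → ℝ) (f : ℝ × ℝ → ℂ) : ℝ :=
  ∫ p, p.2 ^ 2 * (‖-Complex.I * dX f p - (A₁ p : ℂ) * f p‖ ^ 2 +
    ‖-Complex.I * dY f p - (A₂ p : ℂ) * f p‖ ^ 2) ∂volH

/-- hyperbolic distance from `(x,y)` to `(0,1)`. -/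
def hDist (p : ℝ × ℝ) : ℝ :=
  2 * Real.arsinh (Real.sqrt (p.1 ^ 2 + (p.2 - 1) ^ 2) / (2 * Real.sqrt p.2))

/-- (H1) : the magnetic intensity tends to +∞ at infinity. -/
def H1 (A₁ A₂ : ℝ × ℝ → ℝ) : Prop :=
  ∀ M : ℝ, ∃ R : ℝ, ∀ p ∈ UHP, R ≤ hDist p → M ≤ intenB A₁ A₂ p

/-- (H2) : control of the derivative of the magnetic field. -/
def H2 (C₀ : ℝ) (A₁ A₂ : ℝ × ℝ → ℝ) : Prop :=
  ∀ p ∈ UHP, p.2 * Real.sqrt ((dXr (fieldB A₁ A₂) p) ^ 2 + (dYr (fieldB A₁ A₂) p) ^ 2)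
    ≤ C₀ * (intenB A₁ A₂ p + 1)

/-- Counting function of a quadratic form `q` with form domain `dom` and squared
norm `nsq`, via Glazman's lemma. -/
def NN (q : (ℝ × ℝ → ℂ) → ℝ) (dom : Set (ℝ × ℝ → ℂ)) (nsq : (ℝ × ℝ → ℂ) → ℝ)
    (lam : ℝ) : ℕ :=
  sSup {n : ℕ | ∃ V : Submodule ℂ (ℝ × ℝ → ℂ), (V : Set (ℝ × ℝ → ℂ)) ⊆ dom ∧
    Module.finrank ℂ V = n ∧ ∀ u ∈ V, u ≠ 0 → q u < lam * nsq u}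

/-- Heaviside function `[ρ]₊⁰`. -/
def heav (ρ : ℝ) : ℝ := if 0 < ρ then 1 else 0


/-- The quadratic form of the Landau Hamiltonian with constant field `b` on ℝ². -/
def qb (b : ℝ) (u : ℝ × ℝ → ℂ) : ℝ :=
  ∫ p : ℝ × ℝ, (‖-Complex.I * dX u p - ((b * p.2 / 2 : ℝ) : ℂ) * u p‖ ^ 2 +
    ‖-Complex.I * dY u p + ((b * p.1 / 2 : ℝ) : ℂ) * u p‖ ^ 2)

/-- Dirichlet eigenvalue counting function of the Landau Hamiltonian on `Ω`. -/
def NNb (b lam : ℝ) (Ω : Set (ℝ × ℝ)) : ℕ :=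
  NN (qb b) {u | IsTestOn Ω u} (fun u => ∫ p : ℝ × ℝ, ‖u p‖ ^ 2) lam

/-- Number of Landau levels below `lam` : `#{n ∈ ℕ : (2n+1)b < lam}`. -/
def landauCount (b lam : ℝ) : ℕ := Nat.card {n : ℕ | (2 * (n : ℝ) + 1) * b < lam}

/-- The open rectangle `(-R₁/2, R₁/2) × (-R₂/2, R₂/2)`. -/
def rectR (R₁ R₂ : ℝ) : Set (ℝ × ℝ) :=
  Set.Ioo (-R₁ / 2) (R₁ / 2) ×ˢ Set.Ioo (-R₂ / 2) (R₂ / 2)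


lemma osc_intcs {f : ℝ → ℝ} (hf : Continuous f) (h : HasCompactSupport f) : Integrable f :=
  hf.integrable_of_hasCompactSupport h

lemma int_lin3 {f g h : ℝ → ℝ} (hf : Integrable f) (hg : Integrable g) (hh : Integrable h)
    (a c d : ℝ) : ∫ x, (a * f x + c * g x + d * h x) =
      a * (∫ x, f x) + c * (∫ x, g x) + d * ∫ x, h x := by
  rw [integral_add (f := fun x => a * f x + c * g x) ((hf.const_mul _).add (hg.const_mul _))
    (hh.const_mul _), integral_add (hf.const_mul _) (hg.const_mul _)]
  simp only [integral_const_mul]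

/-- Solve `-w' + b x w = f`. -/
lemma osc_solve (b : ℝ) (f : ℝ → ℝ) (hf : Continuous f) (hc : HasCompactSupport f)
    (h0 : ∫ x, f x * exp (-b * x ^ 2 / 2) = 0) :
    ∃ w : ℝ → ℝ, HasCompactSupport w ∧ ∀ x, HasDerivAt w (b * x * w x - f x) x := by
  obtain ⟨A, hA⟩ := hc.isCompact.isBounded.subset_closedBall 0
  have hA' : ∀ x, A < |x| → f x = 0 := by
    intro x hx
    by_contra h
    have := hA (subset_tsupport f h)
    simp [Metric.mem_closedBall] at this
    linarith
  set g : ℝ → ℝ := fun x => f x * exp (-b * x ^ 2 / 2) with hg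
  have hgc : Continuous g := by fun_prop
  have hg0 : ∀ x, A < |x| → g x = 0 := fun x hx => by simp [hg, hA' x hx]
  refine ⟨fun x => - exp (b * x ^ 2 / 2) * ∫ t in (-|A| - 1)..x, g t, ?_, ?_⟩
  · refine HasCompactSupport.intro (isCompact_Icc (a := -|A| - 1) (b := |A| + 1)) ?_
    intro x hx
    rw [Set.mem_Icc, not_and_or, not_le, not_le] at hx
    have : ∫ t in (-|A| - 1)..x, g t = 0 := by
      rcases hx with hx | hx
      · rw [intervalIntegral.integral_congr (g := fun _ => (0 : ℝ))]
        · simp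
        · intro t ht
          rw [Set.uIcc_of_ge hx.le] at ht
          apply hg0
          rw [abs_of_neg] <;> linarith [ht.2, abs_nonneg A, le_abs_self A]
      · have : ∫ t in (-|A| - 1)..x, g t = ∫ t, g t := by
          rw [intervalIntegral.integral_of_le (by linarith [abs_nonneg A])]
          apply setIntegral_eq_integral_of_forall_compl_eq_zero
          intro t ht
          apply hg0
          rw [Set.mem_Ioc, not_and_or, not_lt, not_le] at ht
          rcases ht with ht | ht
          · rw [abs_of_neg] <;> linarith [abs_nonneg A, le_abs_self A]
          · rw [abs_of_pos] <;> linarith [abs_nonneg A, le_abs_self A]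
        rw [this, h0]
    simp [this]
  · intro x
    have h1 : HasDerivAt (fun x => ∫ t in (-|A| - 1)..x, g t) (g x) x :=
      intervalIntegral.integral_hasDerivAt_right (hgc.intervalIntegrable _ _)
        (hgc.stronglyMeasurableAtFilter _ _) hgc.continuousAt
    have h2 : HasDerivAt (fun x : ℝ => - exp (b * x ^ 2 / 2)) (- (exp (b * x ^ 2 / 2) * (b * x))) x := by
      have : HasDerivAt (fun x : ℝ => b * x ^ 2 / 2) (b * x) x := by
        refine HasDerivAt.congr_deriv (((hasDerivAt_pow 2 x).const_mul b).div_const 2) ?_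
        simp; ring
      exact this.exp.neg
    refine HasDerivAt.congr_deriv (h2.mul h1) ?_
    have : exp (b * x ^ 2 / 2) * exp (-b * x ^ 2 / 2) = 1 := by
      rw [← Real.exp_add]; simp; ring
    simp only [hg]
    linear_combination (-f x) * this

/-- Harmonic oscillator lower bound on the orthogonal complement of the first `K` levels. -/
lemma osc_real (b : ℝ) (hb : 0 < b) (K : ℕ) : ∀ f f' : ℝ → ℝ, (∀ x, HasDerivAt f (f' x) x) →
    Continuous f' → HasCompactSupport f →
    (∀ j < K, ∫ x, f x * (x ^ j * exp (-b * x ^ 2 / 2)) = 0) →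
    2 * b * K * ∫ x, f x ^ 2 ≤ ∫ x, (f' x + b * x * f x) ^ 2 := by
  induction K with
  | zero =>
    intro f f' _ _ _ _
    simp
    exact integral_nonneg fun x => sq_nonneg _
  | succ K ih =>
    intro f f' hd hf' hc horth
    have hfc : Continuous f := continuous_iff_continuousAt.2 fun x => (hd x).continuousAt
    have hcf' : HasCompactSupport f' := by
      have : f' = deriv f := funext fun x => (hd x).deriv.symm
      rw [this]; exact hc.deriv
    obtain ⟨w, hwc, hw⟩ := osc_solve b f hfc hc (by simpa using horth 0 (Nat.succ_pos _))
    have hwcont : Continuous w := continuous_iff_continuousAt.2 fun x => (hw x).continuousAt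
    set w' : ℝ → ℝ := fun x => b * x * w x - f x with hw'
    have hw'c : Continuous w' := by fun_prop
    have hcw' : HasCompactSupport w' := by
      have : w' = deriv w := funext fun x => (hw x).deriv.symm
      rw [this]; exact hwc.deriv
    have horthw : ∀ j < K, ∫ x, w x * (x ^ j * exp (-b * x ^ 2 / 2)) = 0 := by
      intro j hj
      have h1 := horth (j + 1) (by omega)
      have h2 : ∀ x, HasDerivAt (fun x => w x * (x ^ (j + 1) * exp (-b * x ^ 2 / 2)))
          ((j + 1) * (w x * (x ^ j * exp (-b * x ^ 2 / 2)))
            - f x * (x ^ (j + 1) * exp (-b * x ^ 2 / 2))) x := by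
        intro x
        have h3 : HasDerivAt (fun x : ℝ => -b * x ^ 2 / 2) (-b * x) x := by
          refine HasDerivAt.congr_deriv (((hasDerivAt_pow 2 x).const_mul (-b)).div_const 2) ?_
          simp; ring
        refine HasDerivAt.congr_deriv ((hw x).mul ((hasDerivAt_pow (j + 1) x).mul h3.exp)) ?_
        push_cast
        ring
      have hi1 : Integrable fun x => w x * (x ^ j * exp (-b * x ^ 2 / 2)) :=
        osc_intcs (by fun_prop) hwc.mul_right
      have hi2 : Integrable fun x => f x * (x ^ (j + 1) * exp (-b * x ^ 2 / 2)) :=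
        osc_intcs (by fun_prop) hc.mul_right
      have h4 := integral_eq_zero_of_hasDerivAt_of_integrable h2
        ((hi1.const_mul _).sub hi2) (osc_intcs (by fun_prop) hwc.mul_right)
      rw [integral_sub (hi1.const_mul _) hi2, h1, integral_const_mul] at h4
      have : ((j : ℝ) + 1) ≠ 0 := by positivity
      simpa [this] using h4
    have hI := ih w w' hw hw'c hwc horthw
    -- integrabilities
    have sq_cs : ∀ g : ℝ → ℝ, HasCompactSupport g → HasCompactSupport fun x => g x ^ 2 := by
      intro g hg; exact hg.comp_left (g := fun y : ℝ => y ^ 2) (by simp)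
    have hcg : HasCompactSupport fun x => f' x + b * x * f x := hcf'.add hc.mul_left
    have hcgw : HasCompactSupport fun x => w' x + b * x * w x := hcw'.add hwc.mul_left
    have i1 : Integrable fun x => f x ^ 2 := osc_intcs (by fun_prop) (sq_cs _ hc)
    have i2 : Integrable fun x => w x ^ 2 := osc_intcs (by fun_prop) (sq_cs _ hwc)
    have i3 : Integrable fun x => (f' x + b * x * f x) ^ 2 :=
      osc_intcs (by fun_prop) (sq_cs _ hcg)
    have i4 : Integrable fun x => (w' x + b * x * w x) ^ 2 :=
      osc_intcs (by fun_prop) (sq_cs _ hcgw)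
    have i5 : Integrable fun x => w x * (f' x + b * x * f x) :=
      osc_intcs (by fun_prop) hwc.mul_right
    -- commutator
    have c1 : ∫ x, f x ^ 2 = (∫ x, (w' x + b * x * w x) ^ 2) + 2 * b * ∫ x, w x ^ 2 := by
      have h2 : ∀ x, HasDerivAt (fun x => (b * x) * (w x * w x))
          (1/2 * (((w' x + b * x * w x) ^ 2 + 2 * b * w x ^ 2) - f x ^ 2)) x := by
        intro x
        refine HasDerivAt.congr_deriv (((hasDerivAt_id x).const_mul b).mul ((hw x).mul (hw x))) ?_
        simp [hw']
        ring
      have h4 := integral_eq_zero_of_hasDerivAt_of_integrable h2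
        (((i4.add (i2.const_mul (2 * b))).sub i1).const_mul _)
        (osc_intcs (by fun_prop) hwc.mul_right.mul_left)
      have h5 := int_lin3 i4 i2 i1 (1/2) b (-1/2)
      have h6 := h4.symm.trans ((congrArg (integral volume) (funext fun x => by ring)).trans h5)
      linarith
    have c2 : ∫ x, f x ^ 2 = ∫ x, w x * (f' x + b * x * f x) := by
      have h2 : ∀ x, HasDerivAt (fun x => w x * f x)
          (w x * (f' x + b * x * f x) - f x ^ 2) x := by
        intro x
        refine HasDerivAt.congr_deriv ((hw x).mul (hd x)) ?_
        ring
      have h4 := integral_eq_zero_of_hasDerivAt_of_integrable h2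
        (i5.sub i1) (osc_intcs (by fun_prop) hwc.mul_right)
      rw [integral_sub i5 i1] at h4
      linarith
    have c3 : 0 ≤ ∫ x, ((f' x + b * x * f x) - 2 * b * (K + 1) * w x) ^ 2 :=
      integral_nonneg fun x => sq_nonneg _
    have c4 : ∫ x, ((f' x + b * x * f x) - 2 * b * (K + 1) * w x) ^ 2 =
        (∫ x, (f' x + b * x * f x) ^ 2) - (4 * b * (K + 1)) * (∫ x, w x * (f' x + b * x * f x))
        + (2 * b * (K + 1)) ^ 2 * ∫ x, w x ^ 2 := by
      have h5 := int_lin3 i3 i5 i2 1 (-(4 * b * (K + 1))) ((2 * b * (K + 1)) ^ 2)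
      refine ((congrArg (integral volume) (funext fun x => by ring)).trans h5).trans ?_
      ring
    have c5 : 2 * b * (K + 1) * (∫ x, w x ^ 2) ≤ ∫ x, f x ^ 2 := by
      rw [c1]; nlinarith
    push_cast
    have : 0 ≤ 2 * b * ((K:ℝ) + 1) := by positivity
    nlinarith [mul_le_mul_of_nonneg_left c5 this]

/-- The full oscillator form. -/
lemma osc_real' (b : ℝ) (hb : 0 < b) (K : ℕ) (f f' : ℝ → ℝ) (hd : ∀ x, HasDerivAt f (f' x) x)
    (hf' : Continuous f') (hc : HasCompactSupport f)
    (horth : ∀ j < K, ∫ x, f x * (x ^ j * exp (-b * x ^ 2 / 2)) = 0) :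
    (2 * K + 1) * b * ∫ x, f x ^ 2 ≤ ∫ x, (f' x ^ 2 + (b * x * f x) ^ 2) := by
  have h := osc_real b hb K f f' hd hf' hc horth
  have hfc : Continuous f := continuous_iff_continuousAt.2 fun x => (hd x).continuousAt
  have hcf' : HasCompactSupport f' := by
    have : f' = deriv f := funext fun x => (hd x).deriv.symm
    rw [this]; exact hc.deriv
  have sq_cs : ∀ g : ℝ → ℝ, HasCompactSupport g → HasCompactSupport fun x => g x ^ 2 := by
    intro g hg; exact hg.comp_left (g := fun y : ℝ => y ^ 2) (by simp)
  have i1 : Integrable fun x => f x ^ 2 := osc_intcs (by fun_prop) (sq_cs _ hc)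
  have i3 : Integrable fun x => (f' x + b * x * f x) ^ 2 :=
    osc_intcs (by fun_prop) (sq_cs _ (hcf'.add hc.mul_left))
  have i2 : Integrable fun x => (f' x ^ 2 + (b * x * f x) ^ 2) :=
    osc_intcs (by fun_prop) ((sq_cs _ hcf').add (sq_cs _ hc.mul_left))
  have h2 : ∀ x, HasDerivAt (fun x => (b * x) * (f x * f x))
      ((f' x + b * x * f x) ^ 2 - (f' x ^ 2 + (b * x * f x) ^ 2) + b * f x ^ 2) x := by
    intro x
    refine HasDerivAt.congr_deriv (((hasDerivAt_id x).const_mul b).mul ((hd x).mul (hd x))) ?_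
    simp
    ring
  have h4 := integral_eq_zero_of_hasDerivAt_of_integrable h2
    ((i3.sub i2).add (i1.const_mul _)) (osc_intcs (by fun_prop) hc.mul_right.mul_left)
  have h5 := int_lin3 i3 i2 i1 1 (-1) b
  have h6 := h4.symm.trans ((congrArg (integral volume) (funext fun x => by ring)).trans h5)
  linarith

/-- Complex, shifted version. -/
lemma osc_cplx (b : ℝ) (hb : 0 < b) (K : ℕ) (k : ℝ) (f f' : ℝ → ℂ)
    (hd : ∀ x, HasDerivAt f (f' x) x) (hf' : Continuous f') (hc : HasCompactSupport f)
    (horth : ∀ j < K, ∫ x, f x * (((x + k / b) ^ j * exp (-b * (x + k / b) ^ 2 / 2) : ℝ) : ℂ) = 0) :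
    (2 * K + 1) * b * ∫ x, ‖f x‖ ^ 2 ≤ ∫ x, (‖f' x‖ ^ 2 + ‖((k + b * x : ℝ) : ℂ) * f x‖ ^ 2) := by
  have hfc : Continuous f := continuous_iff_continuousAt.2 fun x => (hd x).continuousAt
  have hcf' : HasCompactSupport f' := by
    have : f' = deriv f := funext fun x => (hd x).deriv.symm
    rw [this]; exact hc.deriv
  have key : ∀ L : ℂ →L[ℝ] ℝ, (2 * K + 1) * b * ∫ x, (L (f x)) ^ 2 ≤
      ∫ x, (L (f' x) ^ 2 + ((k + b * x) * L (f x)) ^ 2) := by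
    intro L
    have hk : ∀ g : ℝ → ℝ, ∫ x, g x = ∫ x, g (x - k / b) := fun g =>
      (integral_sub_right_eq_self g (k / b)).symm
    rw [hk (fun x => (L (f x)) ^ 2), hk (fun x => (L (f' x) ^ 2 + ((k + b * x) * L (f x)) ^ 2))]
    have := osc_real' b hb K (fun x => L (f (x - k / b))) (fun x => L (f' (x - k / b)))
      (fun x => by
        have h1 := (hd (x - k / b)).comp_sub_const x (k / b)
        exact L.hasFDerivAt.comp_hasDerivAt x h1) (by fun_prop)
      (by
        have : HasCompactSupport (fun x => f (x - k / b)) := by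
          have := hc.comp_homeomorph (Homeomorph.subRight (k / b))
          exact this
        exact this.comp_left (g := L) (by simp))
      (by
        intro j hj
        have h1 := horth j hj
        have h2 := L.integral_comp_comm (μ := volume) (φ := fun x => f x * (((x + k / b) ^ j * exp (-b * (x + k / b) ^ 2 / 2) : ℝ) : ℂ))
          (Continuous.integrable_of_hasCompactSupport (by fun_prop) hc.mul_right)
        rw [h1, map_zero, hk] at h2
        rw [← h2]
        congr 1; ext x
        rw [mul_comm (f _), ← Complex.real_smul, map_smul, smul_eq_mul, mul_comm]
        simp)
    refine this.trans_eq ?_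
    congr 1; ext x
    congr 2
    field_simp
    ring
  have hre := key Complex.reCLM
  have him := key Complex.imCLM
  have sq_cs : ∀ g : ℝ → ℝ, HasCompactSupport g → HasCompactSupport fun x => g x ^ 2 := by
    intro g hg; exact hg.comp_left (g := fun y : ℝ => y ^ 2) (by simp)
  have lc : ∀ (L : ℂ →L[ℝ] ℝ) (g : ℝ → ℂ), HasCompactSupport g →
      HasCompactSupport fun x => L (g x) := by
    intro L g hg; exact hg.comp_left (g := L) (by simp)
  have i1 : ∀ L : ℂ →L[ℝ] ℝ, Integrable fun x => L (f x) ^ 2 := fun L =>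
    osc_intcs (by fun_prop) (sq_cs _ (lc L _ hc))
  have i2 : ∀ L : ℂ →L[ℝ] ℝ, Integrable fun x => (L (f' x) ^ 2 + ((k + b * x) * L (f x)) ^ 2) :=
    fun L => osc_intcs (by fun_prop) ((sq_cs _ (lc L _ hcf')).add (sq_cs _ ((lc L _ hc).mul_left)))
  have nsq : ∀ z : ℂ, ‖z‖ ^ 2 = Complex.reCLM z ^ 2 + Complex.imCLM z ^ 2 := by
    intro z; rw [Complex.sq_norm, Complex.normSq_apply]; simp; ring
  have e1 : ∫ x, ‖f x‖ ^ 2 = (∫ x, Complex.reCLM (f x) ^ 2) + ∫ x, Complex.imCLM (f x) ^ 2 := by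
    rw [← integral_add (i1 _) (i1 _)]; congr 1; ext x; exact nsq _
  have e2 : ∫ x, (‖f' x‖ ^ 2 + ‖((k + b * x : ℝ) : ℂ) * f x‖ ^ 2) =
      (∫ x, (Complex.reCLM (f' x) ^ 2 + ((k + b * x) * Complex.reCLM (f x)) ^ 2)) +
      ∫ x, (Complex.imCLM (f' x) ^ 2 + ((k + b * x) * Complex.imCLM (f x)) ^ 2) := by
    rw [← integral_add (i2 _) (i2 _)]; congr 1; ext x
    rw [norm_mul, mul_pow, nsq, nsq (f x), Complex.norm_real, Real.norm_eq_abs, sq_abs]; ring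
  rw [e1, e2]
  linarith

/-- Fourier coefficients in the second variable (unnormalised). -/
def fcoef (R : ℝ) (g : ℝ × ℝ → ℂ) (m : ℤ) (x : ℝ) : ℂ :=
  ∫ y in (-R / 2)..(R / 2), Complex.exp (-(Complex.I * ((2 * π * m / R : ℝ) : ℂ) * (y : ℂ))) * g (x, y)

lemma fcoef_eq (R : ℝ) (hR : 0 < R) (g : ℝ × ℝ → ℂ) (m : ℤ) (x : ℝ)
    (hab : -R / 2 < R / 2) :
    ‖fourierCoeffOn hab (fun y => g (x, y)) m‖ ^ 2 = (1 / R ^ 2) * ‖fcoef R g m x‖ ^ 2 := by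
  rw [fourierCoeffOn_eq_integral, fcoef, norm_smul, mul_pow]
  congr 1
  · rw [Real.norm_eq_abs, sq_abs]
    have : R / 2 - -R / 2 = R := by ring
    rw [this]; ring
  · congr 2
    apply intervalIntegral.integral_congr
    intro y _
    simp only [smul_eq_mul]
    congr 1
    rw [fourier_coe_apply]
    congr 1
    push_cast
    have : (R : ℂ) ≠ 0 := by exact_mod_cast hR.ne'
    have h2 : ((R : ℂ) / 2 - -(R : ℂ) / 2) = R := by ring
    rw [h2]
    field_simp

lemma fcoef_cont (R : ℝ) (g : ℝ × ℝ → ℂ) (hg : Continuous g) (m : ℤ) : Continuous (fcoef R g m) := by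
  unfold fcoef
  apply intervalIntegral.continuous_parametric_intervalIntegral_of_continuous'
  simp only [Function.uncurry_def]
  fun_prop

lemma parseval_lint (R : ℝ) (hR : 0 < R) (g : ℝ × ℝ → ℂ) (hg : Continuous g)
    (hs : ∀ p, p ∉ rectR R R → g p = 0) :
    ENNReal.ofReal (1 / R) * ∑' m : ℤ, ∫⁻ x, ENNReal.ofReal (‖fcoef R g m x‖ ^ 2) =
      ∫⁻ p, ENNReal.ofReal (‖g p‖ ^ 2) := by
  have hab : -R / 2 < R / 2 := by linarith
  rw [← lintegral_tsum (fun m => by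
    have := fcoef_cont R g hg m
    exact (Measurable.ennreal_ofReal (by fun_prop)).aemeasurable)]
  rw [← lintegral_const_mul' _ _ (by simp)]
  rw [Measure.volume_eq_prod, lintegral_prod _ (by
    exact (Measurable.ennreal_ofReal (by fun_prop)).aemeasurable)]
  congr 1; ext x
  have hgx : Continuous fun y => g (x, y) := by fun_prop
  have hgx2 : Continuous fun y => ‖g (x, y)‖ ^ 2 := by fun_prop
  have hsy : ∀ y, y ∉ Set.Ioc (-R / 2) (R / 2) → g (x, y) = 0 := by
    intro y hy
    apply hs
    intro h
    exact hy ⟨h.2.1, h.2.2.le⟩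
  have hmem : MemLp (fun y => g (x, y)) 2 (volume.restrict (Set.Ioc (-R / 2) (R / 2))) := by
    have h1 : Integrable (fun y => ‖g (x, y)‖ ^ 2) (volume.restrict (Set.Ioc (-R / 2) (R / 2))) :=
      (hgx2.integrableOn_Icc).mono_set Set.Ioc_subset_Icc_self
    exact (memLp_two_iff_integrable_sq_norm hgx.aestronglyMeasurable).2 h1
  have hP := hasSum_sq_fourierCoeffOn hab hmem
  simp_rw [fcoef_eq R hR g _ x hab] at hP
  have hint : ∫ y in (-R / 2)..(R / 2), ‖g (x, y)‖ ^ 2 = ∫ y, ‖g (x, y)‖ ^ 2 := by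
    rw [intervalIntegral.integral_of_le hab.le]
    apply setIntegral_eq_integral_of_forall_compl_eq_zero
    intro y hy; simp [hsy y hy]
  have hcs : HasCompactSupport fun y => ‖g (x, y)‖ ^ 2 := by
    refine HasCompactSupport.intro (isCompact_Icc (a := -R/2) (b := R/2)) fun y hy => ?_
    rw [hsy y (fun h => hy ⟨h.1.le, h.2⟩)]; simp
  have hI : Integrable fun y => ‖g (x, y)‖ ^ 2 := hgx2.integrable_of_hasCompactSupport hcs
  rw [← ofReal_integral_eq_lintegral_ofReal hI (Eventually.of_forall fun y => sq_nonneg _), ← hint]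
  have hR2 : R / 2 - -R / 2 = R := by ring
  rw [hR2] at hP
  have hP2 := hP.mul_left R
  have e : R * R⁻¹ • (∫ y in (-R / 2)..(R / 2), ‖g (x, y)‖ ^ 2) =
    ∫ y in (-R / 2)..(R / 2), ‖g (x, y)‖ ^ 2 := by rw [smul_eq_mul]; field_simp
  rw [e] at hP2
  rw [← hP2.tsum_eq, ENNReal.ofReal_tsum_of_nonneg (fun n => by positivity) hP2.summable,
    ← ENNReal.tsum_mul_left]
  congr 1; ext m
  rw [← ENNReal.ofReal_mul (by positivity)]
  congr 1
  field_simp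

lemma fcoef_hasDeriv (R : ℝ) (v : ℝ × ℝ → ℂ) (hv : ContDiff ℝ 1 v)
    (hc : HasCompactSupport v) (m : ℤ) (x : ℝ) :
    HasDerivAt (fcoef R v m) (fcoef R (dX v) m x) x := by
  have hdc : Continuous (dX v) := by
    unfold dX
    exact (hv.continuous_fderiv one_ne_zero).clm_apply continuous_const
  have hdcs : HasCompactSupport (dX v) := by
    refine (hc.fderiv (𝕜 := ℝ)).comp_left (g := fun L : ℝ × ℝ →L[ℝ] ℂ => L (1, 0)) (by simp)
  obtain ⟨C, hC⟩ := hdc.bounded_above_of_compact_support hdcs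
  have hvc := hv.continuous
  have := intervalIntegral.hasDerivAt_integral_of_dominated_loc_of_deriv_le (μ := volume)
    (a := -R / 2) (b := R / 2) (x₀ := x) (s := Set.univ) (bound := fun _ => C)
    (F := fun x y => Complex.exp (-(Complex.I * ((2 * π * m / R : ℝ) : ℂ) * (y : ℂ))) * v (x, y))
    (F' := fun x y => Complex.exp (-(Complex.I * ((2 * π * m / R : ℝ) : ℂ) * (y : ℂ))) * dX v (x, y))
    Filter.univ_mem
    (Eventually.of_forall fun x => (Continuous.aestronglyMeasurable (by fun_prop)))
    (Continuous.intervalIntegrable (by fun_prop) _ _)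
    (Continuous.aestronglyMeasurable (by fun_prop))
    (Eventually.of_forall fun y _ x _ => by
      rw [norm_mul]
      have : ‖Complex.exp (-(Complex.I * ((2 * π * m / R : ℝ) : ℂ) * (y : ℂ)))‖ = 1 := by
        have : -(Complex.I * ((2 * π * m / R : ℝ) : ℂ) * (y : ℂ)) =
          ((-(2 * π * m / R * y) : ℝ) : ℂ) * Complex.I := by push_cast; ring
        rw [this, Complex.norm_exp_ofReal_mul_I]
      rw [this, one_mul]
      exact hC _)
    (by simp)
    (Eventually.of_forall fun y _ x _ => by
      apply HasDerivAt.const_mul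
      have h1 := (hv.differentiable one_ne_zero (x, y)).hasFDerivAt
      have h2 : HasDerivAt (fun x : ℝ => (x, y)) ((1 : ℝ), (0 : ℝ)) x :=
        (hasDerivAt_id x).prodMk (hasDerivAt_const x y)
      exact h1.comp_hasDerivAt x h2)
  exact this.2

lemma fcoef_dY (R b : ℝ) (v : ℝ × ℝ → ℂ) (hv : ContDiff ℝ 1 v)
    (hs : ∀ p, p ∉ rectR R R → v p = 0) (m : ℤ) (x : ℝ) :
    fcoef R (fun p => -Complex.I * dY v p + ((b * p.1 : ℝ) : ℂ) * v p) m x =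
      ((2 * π * m / R + b * x : ℝ) : ℂ) * fcoef R v m x := by
  have hdc : Continuous (dY v) := by
    unfold dY
    exact (hv.continuous_fderiv one_ne_zero).clm_apply continuous_const
  have hvc := hv.continuous
  set k : ℝ := 2 * π * m / R with hk
  have hder : ∀ y : ℝ, HasDerivAt (fun y : ℝ => Complex.exp (-(Complex.I * (k : ℂ) * (y : ℂ))) * v (x, y))
      (Complex.exp (-(Complex.I * (k : ℂ) * (y : ℂ))) * dY v (x, y)
        - Complex.I * k * (Complex.exp (-(Complex.I * (k : ℂ) * (y : ℂ))) * v (x, y))) y := by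
    intro y
    have h1 := (hv.differentiable one_ne_zero (x, y)).hasFDerivAt
    have h2 : HasDerivAt (fun y : ℝ => (x, y)) ((0 : ℝ), (1 : ℝ)) y :=
      (hasDerivAt_const y x).prodMk (hasDerivAt_id y)
    have h3 := h1.comp_hasDerivAt y h2
    have h4 : HasDerivAt (fun y : ℝ => -(Complex.I * (k : ℂ) * (y : ℂ))) (-(Complex.I * k)) y := by
      have := ((Complex.ofRealCLM.hasDerivAt (x := y)).const_mul (Complex.I * (k:ℂ))).neg
      exact HasDerivAt.congr_deriv this (by simp)
    refine HasDerivAt.congr_deriv (h4.cexp.mul h3) ?_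
    simp only [dY]
    ring
  have i1 : IntervalIntegrable (fun y : ℝ => Complex.exp (-(Complex.I * (k : ℂ) * (y : ℂ))) * dY v (x, y)) volume (-R/2) (R/2) :=
    Continuous.intervalIntegrable (by fun_prop) _ _
  have i2 : IntervalIntegrable (fun y : ℝ => Complex.exp (-(Complex.I * (k : ℂ) * (y : ℂ))) * v (x, y)) volume (-R/2) (R/2) :=
    Continuous.intervalIntegrable (by fun_prop) _ _
  have h := intervalIntegral.integral_eq_sub_of_hasDerivAt (a := -R / 2) (b := R / 2)
    (fun y _ => hder y) (i1.sub (i2.const_mul _))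
  rw [hs (x, R / 2) (fun h => lt_irrefl _ h.2.2), hs (x, -R / 2) (fun h => lt_irrefl _ h.2.1),
    intervalIntegral.integral_sub i1 (i2.const_mul _), intervalIntegral.integral_const_mul] at h
  simp only [mul_zero, sub_zero] at h
  unfold fcoef
  rw [← hk]
  have e : ∀ y : ℝ, Complex.exp (-(Complex.I * (k : ℂ) * (y : ℂ))) * (-Complex.I * dY v (x, y) + ((b * x : ℝ) : ℂ) * v (x, y))
    = -Complex.I * (Complex.exp (-(Complex.I * (k : ℂ) * (y : ℂ))) * dY v (x, y)) +
      ((b * x : ℝ) : ℂ) * (Complex.exp (-(Complex.I * (k : ℂ) * (y : ℂ))) * v (x, y)) := by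
    intro y; ring
  simp_rw [e]
  rw [intervalIntegral.integral_add (i1.const_mul _) (i2.const_mul _),
    intervalIntegral.integral_const_mul, intervalIntegral.integral_const_mul]
  rw [sub_eq_zero] at h
  rw [h]
  push_cast
  linear_combination (-(k:ℂ) * ∫ (x_1 : ℝ) in -R / 2..R / 2, Complex.exp (-(Complex.I * (k : ℂ) * (x_1 : ℂ))) * v (x, x_1)) * Complex.I_sq

/-- test functional in the upper bound -/
def ufun (b R : ℝ) (m : ℤ) (j : ℕ) (p : ℝ × ℝ) : ℂ :=
  (((p.1 + (2 * π * m / R) / b) ^ j * exp (-b * (p.1 + (2 * π * m / R) / b) ^ 2 / 2) : ℝ) : ℂ) *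
    Complex.exp (-(Complex.I * ((2 * π * m / R : ℝ) : ℂ) * (p.2 : ℂ)))

lemma upper_key (b lam R : ℝ) (hb : 0 < b) (hlam : 0 < lam) (hR : 0 < R) (K : ℕ)
    (hK : lam ≤ (2 * K + 1) * b) (v : ℝ × ℝ → ℂ) (hv : ContDiff ℝ 1 v)
    (hcs : HasCompactSupport v) (hs : tsupport v ⊆ rectR R R) (M : ℤ)
    (hM : ∀ m : ℤ, m ∉ Finset.Icc (-M) M → b * R / 2 + √lam ≤ |2 * π * m / R|)
    (horth : ∀ m ∈ Finset.Icc (-M) M, ∀ j < K, ∫ p, v p * ufun b R m j p = 0) :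
    lam * ∫ p, ‖v p‖ ^ 2 ≤
      ∫ p, (‖dX v p‖ ^ 2 + ‖-Complex.I * dY v p + ((b * p.1 : ℝ) : ℂ) * v p‖ ^ 2) := by
  have hvc := hv.continuous
  have hdX : Continuous (dX v) := by
    unfold dX
    exact (hv.continuous_fderiv one_ne_zero).clm_apply continuous_const
  have hdY : Continuous (dY v) := by
    unfold dY
    exact (hv.continuous_fderiv one_ne_zero).clm_apply continuous_const
  have hcX : HasCompactSupport (dX v) :=
    (hcs.fderiv (𝕜 := ℝ)).comp_left (g := fun L : ℝ × ℝ →L[ℝ] ℂ => L (1, 0)) (by simp)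
  have hcY : HasCompactSupport (dY v) :=
    (hcs.fderiv (𝕜 := ℝ)).comp_left (g := fun L : ℝ × ℝ →L[ℝ] ℂ => L (0, 1)) (by simp)
  have hs0 : ∀ p, p ∉ rectR R R → v p = 0 := fun p hp => by
    by_contra h; exact hp (hs (subset_tsupport _ h))
  have hf0 : ∀ p, p ∉ rectR R R → fderiv ℝ v p = 0 := fun p hp => by
    by_contra h; exact hp (hs (support_fderiv_subset ℝ h))
  set W : ℝ × ℝ → ℂ := fun p => -Complex.I * dY v p + ((b * p.1 : ℝ) : ℂ) * v p with hW
  have hWc : Continuous W := by fun_prop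
  have hWcs : HasCompactSupport W := hcY.mul_left.add hcs.mul_left
  have sq_cs : ∀ g : ℝ × ℝ → ℂ, HasCompactSupport g → HasCompactSupport fun p => ‖g p‖ ^ 2 := by
    intro g hg; exact hg.comp_left (g := fun y : ℂ => ‖y‖ ^ 2) (by simp)
  have hfin : ∀ g : ℝ × ℝ → ℂ, Continuous g → HasCompactSupport g →
      Integrable fun p => ‖g p‖ ^ 2 := fun g hg hgc =>
    Continuous.integrable_of_hasCompactSupport (by fun_prop) (sq_cs g hgc)
  have hp1 := parseval_lint R hR v hvc hs0
  have hp2 := parseval_lint R hR (dX v) hdX (fun p hp => by simp [dX, hf0 p hp])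
  have hp3 := parseval_lint R hR W hWc (fun p hp => by simp [hW, dY, hf0 p hp, hs0 p hp])
  rw [← ofReal_integral_eq_lintegral_ofReal (hfin _ hvc hcs) (Eventually.of_forall fun _ => sq_nonneg _)] at hp1
  rw [← ofReal_integral_eq_lintegral_ofReal (hfin _ hdX hcX) (Eventually.of_forall fun _ => sq_nonneg _)] at hp2
  rw [← ofReal_integral_eq_lintegral_ofReal (hfin _ hWc hWcs) (Eventually.of_forall fun _ => sq_nonneg _)] at hp3
  rw [integral_add (hfin _ hdX hcX) (hfin _ hWc hWcs)]
  rw [← ENNReal.ofReal_le_ofReal_iff (by positivity),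
    ENNReal.ofReal_mul hlam.le, ENNReal.ofReal_add (by positivity) (by positivity), ← hp1, ← hp2, ← hp3,
    ← mul_add, mul_left_comm]
  refine mul_le_mul_right ?_ _
  rw [← ENNReal.tsum_mul_left, ← ENNReal.tsum_add]
  refine ENNReal.tsum_le_tsum fun m => ?_
  -- the single-momentum inequality
  set k : ℝ := 2 * π * m / R with hk
  have hd := fcoef_hasDeriv R v hv hcs m
  have hfc := fcoef_cont R v hvc m
  have hfc' := fcoef_cont R (dX v) hdX m
  have hfs : ∀ x, x ∉ Set.Icc (-R/2) (R/2) → fcoef R v m x = 0 := by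
    intro x hx
    unfold fcoef
    have : ∀ y, v (x, y) = 0 := fun y => hs0 _ fun h => hx ⟨h.1.1.le, h.1.2.le⟩
    simp [this]
  have hfcs : HasCompactSupport (fcoef R v m) :=
    HasCompactSupport.intro isCompact_Icc fun x hx => hfs x hx
  have hfcs' : HasCompactSupport (fcoef R (dX v) m) := by
    have : fcoef R (dX v) m = deriv (fcoef R v m) := funext fun x => (hd x).deriv.symm
    rw [this]; exact hfcs.deriv
  have eW : ∀ x, fcoef R W m x = ((k + b * x : ℝ) : ℂ) * fcoef R v m x := fun x =>
    fcoef_dY R b v hv hs0 m x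
  have sq1 : ∀ g : ℝ → ℂ, Continuous g → HasCompactSupport g →
      Integrable fun p => ‖g p‖ ^ 2 := fun g hg hgc =>
    Continuous.integrable_of_hasCompactSupport (by fun_prop)
      (hgc.comp_left (g := fun y : ℂ => ‖y‖ ^ 2) (by simp))
  have j1 := sq1 _ hfc hfcs
  have j2 := sq1 _ hfc' hfcs'
  have j3 := sq1 (fun x => ((k + b * x : ℝ) : ℂ) * fcoef R v m x) (by fun_prop) hfcs.mul_left
  simp_rw [eW]
  rw [← ofReal_integral_eq_lintegral_ofReal j1 (Eventually.of_forall fun _ => sq_nonneg _),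
    ← ofReal_integral_eq_lintegral_ofReal j2 (Eventually.of_forall fun _ => sq_nonneg _),
    ← ofReal_integral_eq_lintegral_ofReal j3 (Eventually.of_forall fun _ => sq_nonneg _),
    ← ENNReal.ofReal_mul hlam.le, ← ENNReal.ofReal_add (by positivity) (by positivity)]
  apply ENNReal.ofReal_le_ofReal
  by_cases hm : m ∈ Finset.Icc (-M) M
  · have := osc_cplx b hb K k (fcoef R v m) (fcoef R (dX v) m) hd hfc' hfcs (by
      intro j hj
      rw [← horth m hm j hj, Measure.volume_eq_prod, integral_prod (fun p => v p * ufun b R m j p)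
        (Continuous.integrable_of_hasCompactSupport (by unfold ufun; fun_prop) hcs.mul_right)]
      congr 1; ext x
      have e2 : ∫ y, v (x, y) * ufun b R m j (x, y) =
          ∫ y in (-R/2)..(R/2), v (x, y) * ufun b R m j (x, y) := by
        rw [intervalIntegral.integral_of_le (by linarith)]
        symm
        apply setIntegral_eq_integral_of_forall_compl_eq_zero
        intro y hy
        rw [hs0 (x, y) fun h => hy ⟨h.2.1, h.2.2.le⟩, zero_mul]
      rw [e2, fcoef, ← intervalIntegral.integral_mul_const]
      apply intervalIntegral.integral_congr
      intro y _
      simp only [ufun]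
      ring)
    rw [integral_add j2 j3] at this
    refine le_trans ?_ this
    gcongr
  · have hkM := hM m hm
    have : lam * ∫ x, ‖fcoef R v m x‖ ^ 2 ≤ ∫ x, ‖((k + b * x : ℝ) : ℂ) * fcoef R v m x‖ ^ 2 := by
      rw [← integral_const_mul]
      refine integral_mono (j1.const_mul _) j3 fun x => ?_
      by_cases hx : x ∈ Set.Icc (-R/2) (R/2)
      · simp only [norm_mul, mul_pow]
        gcongr
        rw [Complex.norm_real, Real.norm_eq_abs]
        have h1 : √lam ≤ |k + b * x| := by
          have h2 : |b * x| ≤ b * R / 2 := by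
            rw [abs_mul, abs_of_pos hb]
            have : |x| ≤ R / 2 := abs_le.2 ⟨by linarith [hx.1], hx.2⟩
            nlinarith
          have h3 : |k| ≤ |k + b * x| + |b * x| := by
            have := abs_sub (k + b * x) (b * x)
            simpa using this
          linarith
        calc lam = √lam ^ 2 := (Real.sq_sqrt hlam.le).symm
          _ ≤ _ := by gcongr
      · simp [hfs x hx]
    have : 0 ≤ ∫ x, ‖fcoef R (dX v) m x‖ ^ 2 := by positivity
    linarith

/-- the gauge phase -/
def gph (b : ℝ) (p : ℝ × ℝ) : ℂ := Complex.exp (((b * p.1 * p.2 / 2 : ℝ) : ℂ) * Complex.I)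

lemma gph_norm (b : ℝ) (p : ℝ × ℝ) : ‖gph b p‖ = 1 := by
  rw [gph, Complex.norm_exp_ofReal_mul_I]

lemma gph_mul (b : ℝ) (p : ℝ × ℝ) : gph b p * gph (-b) p = 1 := by
  rw [gph, gph, ← Complex.exp_add, ← Complex.exp_zero]
  congr 1
  push_cast
  ring

lemma gph_contDiff (b : ℝ) : ContDiff ℝ (⊤ : ℕ∞) (gph b) := by
  unfold gph
  have : ContDiff ℝ (⊤ : ℕ∞) fun p : ℝ × ℝ => ((b * p.1 * p.2 / 2 : ℝ) : ℂ) :=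
    Complex.ofRealCLM.contDiff.comp (ContDiff.div_const (by fun_prop) _)
  fun_prop

lemma gph_fderiv (b : ℝ) (p w : ℝ × ℝ) : fderiv ℝ (gph b) p w =
    gph b p * (((b * (p.1 * w.2 + p.2 * w.1) / 2 : ℝ) : ℂ) * Complex.I) := by
  have h1 : HasFDerivAt (fun p : ℝ × ℝ => p.1 * p.2)
      (p.1 • ContinuousLinearMap.snd ℝ ℝ ℝ + p.2 • ContinuousLinearMap.fst ℝ ℝ ℝ) p :=
    (hasFDerivAt_fst (p := p)).mul (hasFDerivAt_snd (p := p))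
  have h2 := (((Complex.ofRealCLM.hasFDerivAt (x := p.1 * p.2)).comp p h1).const_mul
    ((b : ℂ) / 2 * Complex.I)).cexp
  have h3 : (fun p : ℝ × ℝ => Complex.exp ((b : ℂ) / 2 * Complex.I * (Complex.ofRealCLM ∘ fun p : ℝ × ℝ => p.1 * p.2) p)) = gph b := by
    ext q
    simp only [gph, Function.comp]
    congr 1
    simp
    ring
  rw [h3] at h2
  rw [h2.fderiv]
  have h4 := congrFun h3 p
  beta_reduce at h4
  rw [h4]
  simp
  ring

lemma gauge_form (b : ℝ) (v : ℝ × ℝ → ℂ) (hv : Differentiable ℝ v) :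
    qb b (fun p => gph b p * v p) =
      ∫ p, (‖dX v p‖ ^ 2 + ‖-Complex.I * dY v p + ((b * p.1 : ℝ) : ℂ) * v p‖ ^ 2) := by
  unfold qb
  congr 1; ext p
  have hg : DifferentiableAt ℝ (gph b) p := (gph_contDiff b).differentiable (by simp) p
  have hd : ∀ w, fderiv ℝ (fun p => gph b p * v p) p w =
      gph b p * (fderiv ℝ v p w) + gph b p * (((b * (p.1 * w.2 + p.2 * w.1) / 2 : ℝ) : ℂ) * Complex.I) * v p := by
    intro w
    have := (hg.hasFDerivAt.mul (hv p).hasFDerivAt).fderiv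
    have h2 : fderiv ℝ (fun p => gph b p * v p) p = _ := this
    rw [h2]
    simp only [add_apply, smul_apply, gph_fderiv, smul_eq_mul]
    ring
  have hX : -Complex.I * dX (fun p => gph b p * v p) p - ((b * p.2 / 2 : ℝ) : ℂ) * (gph b p * v p) =
      gph b p * (-Complex.I * dX v p) := by
    simp only [dX, hd]
    push_cast
    simp
    linear_combination (-(b:ℂ) * p.2 / 2 * gph b p * v p) * Complex.I_sq
  have hY : -Complex.I * dY (fun p => gph b p * v p) p + ((b * p.1 / 2 : ℝ) : ℂ) * (gph b p * v p) =
      gph b p * (-Complex.I * dY v p + ((b * p.1 : ℝ) : ℂ) * v p) := by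
    simp only [dY, hd]
    push_cast
    simp
    linear_combination (-(b:ℂ) * p.1 / 2 * gph b p * v p) * Complex.I_sq
  rw [hX, hY, norm_mul, norm_mul (gph b p), gph_norm]
  simp

lemma upper_dim (b lam R : ℝ) (hb : 0 < b) (hlam : 0 < lam) (hR : 0 < R) (K : ℕ)
    (hK : lam ≤ (2 * K + 1) * b) (M : ℕ)
    (hM : ∀ m : ℤ, m ∉ Finset.Icc (-(M : ℤ)) M → b * R / 2 + √lam ≤ |2 * π * m / R|)
    (V : Submodule ℂ (ℝ × ℝ → ℂ)) (hV : (V : Set (ℝ × ℝ → ℂ)) ⊆ {u | IsTestOn (rectR R R) u})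
    (hq : ∀ u ∈ V, u ≠ 0 → qb b u < lam * ∫ p : ℝ × ℝ, ‖u p‖ ^ 2) :
    Module.finrank ℂ V ≤ (2 * M + 1) * K := by
  have hgc : Continuous (gph (-b)) := (gph_contDiff (-b)).continuous
  have huc : ∀ m j, Continuous (ufun b R m j) := fun m j => by unfold ufun; fun_prop
  have hint : ∀ u ∈ V, ∀ m j, Integrable fun p => (gph (-b) p * u p) * ufun b R m j p := by
    intro u hu m j
    obtain ⟨h1, h2, h3⟩ := hV hu
    have := h1.continuous
    have := huc m j
    exact Continuous.integrable_of_hasCompactSupport (by fun_prop) h2.mul_left.mul_right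
  let L : V →ₗ[ℂ] ((Finset.Icc (-(M : ℤ)) M) × Fin K → ℂ) :=
    { toFun := fun u a => ∫ p, (gph (-b) p * (u : ℝ × ℝ → ℂ) p) * ufun b R a.1 a.2 p
      map_add' := by
        intro u w
        ext a
        simp only [Pi.add_apply]
        rw [← integral_add (hint u u.2 _ _) (hint w w.2 _ _)]
        congr 1; ext p
        simp
        ring
      map_smul' := by
        intro c u
        ext a
        simp only [Pi.smul_apply, RingHom.id_apply, smul_eq_mul]
        rw [← integral_const_mul]
        congr 1; ext p
        simp
        ring }
  have hinj : Function.Injective L := by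
    rw [← LinearMap.ker_eq_bot, LinearMap.ker_eq_bot']
    intro u hu
    by_contra hne
    have hne' : (u : ℝ × ℝ → ℂ) ≠ 0 := fun h => hne (Subtype.ext h)
    have hlt := hq u u.2 hne'
    obtain ⟨h1, h2, h3⟩ := hV u.2
    set v : ℝ × ℝ → ℂ := fun p => gph (-b) p * (u : ℝ × ℝ → ℂ) p with hvdef
    have hvs : ContDiff ℝ (⊤ : ℕ∞) v := (gph_contDiff (-b)).mul h1
    have hv1 : ContDiff ℝ 1 v := hvs.of_le (by exact_mod_cast le_top)
    have huv : (u : ℝ × ℝ → ℂ) = fun p => gph b p * v p := by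
      ext p
      simp only [hvdef]
      rw [← mul_assoc, gph_mul, one_mul]
    have hkey := upper_key b lam R hb hlam hR K hK v hv1 h2.mul_left
      ((tsupport_mul_subset_right).trans h3) M hM (by
        intro m hm j hj
        exact congrFun hu (⟨m, hm⟩, ⟨j, hj⟩))
    rw [← gauge_form b v (hv1.differentiable one_ne_zero), ← huv] at hkey
    have hn : ∀ p, ‖v p‖ = ‖(u : ℝ × ℝ → ℂ) p‖ := fun p => by
      simp only [hvdef]; rw [norm_mul, gph_norm, one_mul]
    simp_rw [hn] at hkey
    linarith
  have := LinearMap.finrank_le_finrank_of_injective hinj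
  rw [Module.finrank_fintype_fun_eq_card, Fintype.card_prod, Fintype.card_fin, Fintype.card_coe,
    Int.card_Icc] at this
  refine this.trans (Nat.mul_le_mul_right _ ?_)
  omega

/-- Hermite polynomials adapted to the oscillator with frequency `b`. -/
def hpoly (b : ℝ) : ℕ → Polynomial ℝ
  | 0 => 1
  | n + 1 => Polynomial.C (2 * b) * Polynomial.X * hpoly b n - Polynomial.derivative (hpoly b n)

lemma hpoly_deriv (b : ℝ) (n : ℕ) :
    Polynomial.derivative (hpoly b (n + 1)) = Polynomial.C (2 * b * (n + 1)) * hpoly b n := by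
  induction n with
  | zero => simp [hpoly]
  | succ n ih =>
    rw [hpoly]
    simp only [Polynomial.derivative_sub, Polynomial.derivative_mul, ih, Polynomial.derivative_C,
      Polynomial.derivative_X]
    rw [hpoly]
    push_cast
    simp only [map_mul, map_add, map_one]
    ring

/-- Hermite functions. -/
def hfun (b : ℝ) (n : ℕ) (x : ℝ) : ℝ := (hpoly b n).eval x * exp (-b * x ^ 2 / 2)

/-- Annihilation operator applied to Hermite functions. -/
def afun (b : ℝ) (n : ℕ) (x : ℝ) : ℝ :=
  (Polynomial.derivative (hpoly b n)).eval x * exp (-b * x ^ 2 / 2)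

lemma hfun_succ (b : ℝ) (n : ℕ) (x : ℝ) : hfun b (n + 1) x = 2 * b * x * hfun b n x - afun b n x := by
  simp [hfun, afun, hpoly]; ring

lemma afun_zero (b : ℝ) (x : ℝ) : afun b 0 x = 0 := by simp [afun, hpoly]

lemma afun_succ (b : ℝ) (n : ℕ) (x : ℝ) : afun b (n + 1) x = 2 * b * (n + 1) * hfun b n x := by
  simp only [afun, hpoly_deriv, hfun]; simp; ring

lemma gauss_deriv (b x : ℝ) : HasDerivAt (fun x : ℝ => exp (-b * x ^ 2 / 2)) (exp (-b * x ^ 2 / 2) * (-b * x)) x := by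
  have h3 : HasDerivAt (fun x : ℝ => -b * x ^ 2 / 2) (-b * x) x := by
    refine HasDerivAt.congr_deriv (((hasDerivAt_pow 2 x).const_mul (-b)).div_const 2) ?_
    simp; ring
  exact h3.exp

lemma hfun_deriv (b : ℝ) (n : ℕ) (x : ℝ) :
    HasDerivAt (hfun b n) (afun b n x - b * x * hfun b n x) x := by
  refine HasDerivAt.congr_deriv (((hpoly b n).hasDerivAt x).mul (gauss_deriv b x)) ?_
  simp only [afun, hfun]; ring

lemma hfun_contDiff (b : ℝ) (n : ℕ) : ContDiff ℝ (⊤ : ℕ∞) (hfun b n) := by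
  unfold hfun
  have h1 : ContDiff ℝ (⊤ : ℕ∞) fun x : ℝ => (hpoly b n).eval x := by
    have := (hpoly b n).contDiff_aeval (𝕜 := ℝ) (⊤ : ℕ∞)
    simpa using this
  have h2 : ContDiff ℝ (⊤ : ℕ∞) fun x : ℝ => -b * x ^ 2 / 2 := ContDiff.div_const (by fun_prop) _
  exact h1.mul h2.exp

lemma polyg_int (b : ℝ) (hb : 0 < b) (P : Polynomial ℝ) :
    Integrable fun x => P.eval x * exp (-b * x ^ 2) := by
  induction P using Polynomial.induction_on' with
  | add p q hp hq =>
    refine (hp.add hq).congr (Eventually.of_forall fun x => ?_)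
    simp [add_mul]
  | monomial n a =>
    have := (integrable_rpow_mul_exp_neg_mul_sq hb (s := n) (by linarith [(Nat.cast_nonneg n : (0:ℝ) ≤ n)])).const_mul a
    simpa [mul_assoc] using this

lemma polyg_int2 (b : ℝ) (hb : 0 < b) (P Q : Polynomial ℝ) :
    Integrable fun x => (P.eval x * exp (-b * x ^ 2 / 2)) * (Q.eval x * exp (-b * x ^ 2 / 2)) := by
  refine (polyg_int b hb (P * Q)).congr (Eventually.of_forall fun x => ?_)
  have : exp (-b * x ^ 2) = exp (-b * x ^ 2 / 2) * exp (-b * x ^ 2 / 2) := by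
    rw [← Real.exp_add]; ring_nf
  simp only [Polynomial.eval_mul, this]; ring

lemma hh_int (b : ℝ) (hb : 0 < b) (m n : ℕ) : Integrable fun x => hfun b m x * hfun b n x :=
  polyg_int2 b hb _ _

lemma ha_int (b : ℝ) (hb : 0 < b) (m n : ℕ) : Integrable fun x => hfun b m x * afun b n x :=
  polyg_int2 b hb _ _

lemma aa_int (b : ℝ) (hb : 0 < b) (m n : ℕ) : Integrable fun x => afun b m x * afun b n x :=
  polyg_int2 b hb _ _

lemma xhxh_int (b : ℝ) (hb : 0 < b) (m n : ℕ) :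
    Integrable fun x => (x * hfun b m x) * (x * hfun b n x) := by
  refine (polyg_int2 b hb (Polynomial.X * hpoly b m) (Polynomial.X * hpoly b n)).congr
    (Eventually.of_forall fun x => ?_)
  simp [hfun]; ring

lemma xhh_int (b : ℝ) (hb : 0 < b) (m n : ℕ) :
    Integrable fun x => b * x * (hfun b m x * hfun b n x) := by
  refine (polyg_int2 b hb (Polynomial.C b * Polynomial.X * hpoly b m) (hpoly b n)).congr
    (Eventually.of_forall fun x => ?_)
  simp [hfun]; ring

lemma dd_int (b : ℝ) (hb : 0 < b) (m n : ℕ) :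
    Integrable fun x => (afun b m x - b * x * hfun b m x) * (afun b n x - b * x * hfun b n x) := by
  refine (polyg_int2 b hb (Polynomial.derivative (hpoly b m) - Polynomial.C b * Polynomial.X * hpoly b m)
    (Polynomial.derivative (hpoly b n) - Polynomial.C b * Polynomial.X * hpoly b n)).congr
    (Eventually.of_forall fun x => ?_)
  simp [hfun, afun]; ring

lemma hh_step (b : ℝ) (hb : 0 < b) (m n : ℕ) :
    ∫ x, hfun b (m + 1) x * hfun b n x = ∫ x, hfun b m x * afun b n x := by
  have h2 : ∀ x, HasDerivAt (fun x => hfun b m x * hfun b n x)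
      (hfun b m x * afun b n x - hfun b (m + 1) x * hfun b n x) x := by
    intro x
    refine HasDerivAt.congr_deriv ((hfun_deriv b m x).mul (hfun_deriv b n x)) ?_
    rw [hfun_succ]; ring
  have h4 := integral_eq_zero_of_hasDerivAt_of_integrable h2
    ((ha_int b hb m n).sub (hh_int b hb _ _)) (hh_int b hb m n)
  rw [integral_sub (ha_int b hb m n) (hh_int b hb _ _)] at h4
  linarith

lemma hh_succ_zero (b : ℝ) (hb : 0 < b) (m : ℕ) : ∫ x, hfun b (m + 1) x * hfun b 0 x = 0 := by
  rw [hh_step b hb]; simp [afun_zero]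

lemma hh_succ_succ (b : ℝ) (hb : 0 < b) (m n : ℕ) :
    ∫ x, hfun b (m + 1) x * hfun b (n + 1) x = 2 * b * (n + 1) * ∫ x, hfun b m x * hfun b n x := by
  rw [hh_step b hb, ← integral_const_mul]
  congr 1; ext x; rw [afun_succ]; ring

lemma hh_ne (b : ℝ) (hb : 0 < b) (m : ℕ) : ∀ n, m ≠ n → ∫ x, hfun b m x * hfun b n x = 0 := by
  induction m with
  | zero =>
    intro n hn
    obtain ⟨k, rfl⟩ := Nat.exists_eq_succ_of_ne_zero (Ne.symm hn)
    simp_rw [mul_comm (hfun b 0 _)]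
    exact hh_succ_zero b hb k
  | succ m ih =>
    intro n hn
    cases n with
    | zero => exact hh_succ_zero b hb m
    | succ n => rw [hh_succ_succ b hb, ih n (by omega), mul_zero]

lemma hh_pos (b : ℝ) (hb : 0 < b) (n : ℕ) : 0 < ∫ x, hfun b n x * hfun b n x := by
  induction n with
  | zero =>
    rw [integral_pos_iff_support_of_nonneg (fun x => mul_self_nonneg _) (hh_int b hb 0 0)]
    have : Function.support (fun x => hfun b 0 x * hfun b 0 x) = Set.univ := by
      ext x; simp [hfun, hpoly]
    rw [this]; simp
  | succ n ih => rw [hh_succ_succ b hb]; positivity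

lemma hh_energy (b : ℝ) (hb : 0 < b) (m n : ℕ) :
    (∫ x, (afun b m x - b * x * hfun b m x) * (afun b n x - b * x * hfun b n x)) +
      b ^ 2 * ∫ x, (x * hfun b m x) * (x * hfun b n x) =
    (2 * n + 1) * b * ∫ x, hfun b m x * hfun b n x := by
  have haa : ∫ x, afun b m x * afun b n x = 2 * n * b * ∫ x, hfun b m x * hfun b n x := by
    cases n with
    | zero => simp [afun_zero]
    | succ n =>
      cases m with
      | zero =>
        rw [hh_ne b hb 0 (n + 1) (by omega)]; simp [afun_zero]
      | succ m =>
        rw [hh_succ_succ b hb]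
        simp_rw [afun_succ]
        by_cases h : m = n
        · subst h
          rw [← integral_const_mul, ← integral_const_mul]
          congr 1; ext x; push_cast; ring
        · have h0 := hh_ne b hb m n h
          have : (fun x => 2 * b * ((m:ℝ) + 1) * hfun b m x * (2 * b * ((n:ℝ) + 1) * hfun b n x)) =
              fun x => (2 * b * ((m:ℝ) + 1) * (2 * b * ((n:ℝ) + 1))) * (hfun b m x * hfun b n x) := by
            ext x; ring
          rw [this, integral_const_mul, h0]; simp
  have h2 : ∀ x, HasDerivAt (fun x => (b * x) * (hfun b m x * hfun b n x))
      (afun b m x * afun b n x + b * (hfun b m x * hfun b n x) -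
        ((afun b m x - b * x * hfun b m x) * (afun b n x - b * x * hfun b n x)
          + b ^ 2 * ((x * hfun b m x) * (x * hfun b n x)))) x := by
    intro x
    refine HasDerivAt.congr_deriv (((hasDerivAt_id x).const_mul b).mul ((hfun_deriv b m x).mul (hfun_deriv b n x))) ?_
    simp
    ring
  have i1 := aa_int b hb m n
  have i2 := hh_int b hb m n
  have i3 := dd_int b hb m n
  have i4 := xhxh_int b hb m n
  have h4 := integral_eq_zero_of_hasDerivAt_of_integrable h2
    ((i1.add (i2.const_mul b)).sub (i3.add (i4.const_mul (b ^ 2)))) (xhh_int b hb m n)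
  rw [integral_sub (f := fun x => afun b m x * afun b n x + b * (hfun b m x * hfun b n x))
    (g := fun x => (afun b m x - b * x * hfun b m x) * (afun b n x - b * x * hfun b n x)
          + b ^ 2 * ((x * hfun b m x) * (x * hfun b n x)))
    (i1.add (i2.const_mul b)) (i3.add (i4.const_mul (b ^ 2))), integral_add i1 (i2.const_mul b),
    integral_add i3 (i4.const_mul _), integral_const_mul, integral_const_mul, haa] at h4
  linarith

lemma osc_basis (b : ℝ) (hb : 0 < b) : ∃ φ φ' : ℕ → ℝ → ℝ,
    (∀ n, ContDiff ℝ (⊤ : ℕ∞) (φ n)) ∧ (∀ n x, HasDerivAt (φ n) (φ' n x) x) ∧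
    (∀ n, Continuous (φ' n)) ∧
    (∀ n, Integrable fun x => φ n x ^ 2) ∧ (∀ n, Integrable fun x => φ' n x ^ 2) ∧
    (∀ n, Integrable fun x => (x * φ n x) ^ 2) ∧
    (∀ m n, ∫ x, φ m x * φ n x = if m = n then 1 else 0) ∧
    (∀ m n, (∫ x, φ' m x * φ' n x) + b ^ 2 * (∫ x, (x * φ m x) * (x * φ n x)) =
      if m = n then (2 * n + 1) * b else 0) := by
  set s : ℕ → ℝ := fun n => √(∫ x, hfun b n x * hfun b n x) with hs
  have hs0 : ∀ n, 0 < s n := fun n => Real.sqrt_pos.2 (hh_pos b hb n)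
  have hs2 : ∀ n, s n * s n = ∫ x, hfun b n x * hfun b n x := fun n =>
    Real.mul_self_sqrt (hh_pos b hb n).le
  have e0 : ∀ m n, ∫ x, hfun b m x * hfun b n x = if m = n then s m * s n else 0 := by
    intro m n
    split_ifs with h
    · subst h; exact (hs2 m).symm
    · exact hh_ne b hb m n h
  have hA : ∀ n, Continuous (afun b n) := by
    intro n; unfold afun
    have := (Polynomial.derivative (hpoly b n)).continuous
    fun_prop
  have hH : ∀ n, Continuous (hfun b n) := fun n => (hfun_contDiff b n).continuous
  refine ⟨fun n x => (s n)⁻¹ * hfun b n x, fun n x => (s n)⁻¹ * (afun b n x - b * x * hfun b n x),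
    fun n => contDiff_const.mul (hfun_contDiff b n), fun n x => (hfun_deriv b n x).const_mul _,
    fun n => ?_, ?_, ?_, ?_, ?_, ?_⟩
  · have := hA n
    have := hH n
    fun_prop
  · intro n
    exact ((hh_int b hb n n).const_mul ((s n)⁻¹ ^ 2)).congr (Eventually.of_forall fun x => by ring)
  · intro n
    exact ((dd_int b hb n n).const_mul ((s n)⁻¹ ^ 2)).congr (Eventually.of_forall fun x => by ring)
  · intro n
    exact ((xhxh_int b hb n n).const_mul ((s n)⁻¹ ^ 2)).congr (Eventually.of_forall fun x => by ring)
  · intro m n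
    have : (fun x => (s m)⁻¹ * hfun b m x * ((s n)⁻¹ * hfun b n x)) =
      fun x => ((s m)⁻¹ * (s n)⁻¹) * (hfun b m x * hfun b n x) := by ext x; ring
    rw [this, integral_const_mul, e0]
    have := (hs0 m).ne'
    have := (hs0 n).ne'
    split_ifs
    · field_simp
    · simp
  · intro m n
    have h1 : (fun x => (s m)⁻¹ * (afun b m x - b * x * hfun b m x) * ((s n)⁻¹ * (afun b n x - b * x * hfun b n x))) =
      fun x => ((s m)⁻¹ * (s n)⁻¹) * ((afun b m x - b * x * hfun b m x) * (afun b n x - b * x * hfun b n x)) := by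
      ext x; ring
    have h2 : (fun x => x * ((s m)⁻¹ * hfun b m x) * (x * ((s n)⁻¹ * hfun b n x))) =
      fun x => ((s m)⁻¹ * (s n)⁻¹) * ((x * hfun b m x) * (x * hfun b n x)) := by ext x; ring
    rw [h1, h2, integral_const_mul, integral_const_mul]
    have h3 := hh_energy b hb m n
    rw [e0] at h3
    have := (hs0 m).ne'
    have := (hs0 n).ne'
    trans ((s m)⁻¹ * (s n)⁻¹) * ((2 * n + 1) * b * if m = n then s m * s n else 0)
    · rw [← h3]; ring
    · split_ifs
      · field_simp
      · simp

open Matrix ComplexOrder in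
lemma trace_sub {ι : Type*} [Fintype ι] [DecidableEq ι] (T : Matrix ι ι ℂ) (hT : T.PosSemidef)
    (ε : ℝ) (hε : 0 < ε) : ∃ W : Submodule ℂ (ι → ℂ),
    (Fintype.card ι : ℝ) - T.trace.re / ε ≤ Module.finrank ℂ W ∧
    ∀ c ∈ W, (star c ⬝ᵥ (T *ᵥ c)).re ≤ ε * ∑ i, ‖c i‖ ^ 2 := by
  have hA := hT.1
  set U : Matrix ι ι ℂ := (hA.eigenvectorUnitary : Matrix ι ι ℂ) with hU
  have hUU : U * star U = 1 := Unitary.mul_star_self_of_mem hA.eigenvectorUnitary.2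
  have hUU' : star U * U = 1 := Unitary.star_mul_self_of_mem hA.eigenvectorUnitary.2
  have hspec : T = U * diagonal (RCLike.ofReal ∘ hA.eigenvalues) * star U := by
    conv_lhs => rw [hA.spectral_theorem]
    rw [Unitary.conjStarAlgAut_apply]
  have hnn := hT.eigenvalues_nonneg
  have htr : T.trace.re = ∑ i, hA.eigenvalues i := by
    rw [hA.trace_eq_sum_eigenvalues]; simp
  let S := {i : ι // ε < hA.eigenvalues i}
  let L : (ι → ℂ) →ₗ[ℂ] (S → ℂ) := (LinearMap.funLeft ℂ ℂ (Subtype.val : S → ι)) ∘ₗ (star U).mulVecLin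
  refine ⟨LinearMap.ker L, ?_, ?_⟩
  · have h1 := LinearMap.finrank_range_add_finrank_ker L
    have h2 : Module.finrank ℂ (LinearMap.range L) ≤ Fintype.card S := by
      refine (Submodule.finrank_le _).trans ?_
      simp
    have h3 : (Fintype.card S : ℝ) * ε ≤ ∑ i, hA.eigenvalues i := by
      calc (Fintype.card S : ℝ) * ε = ∑ i : S, ε := by simp
        _ ≤ ∑ i : S, hA.eigenvalues i := Finset.sum_le_sum fun i _ => i.2.le
        _ = ∑ i ∈ Finset.univ.filter (fun i => ε < hA.eigenvalues i), hA.eigenvalues i := by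
            exact (Finset.sum_subtype (p := fun i => ε < hA.eigenvalues i) _ (by simp) _).symm
        _ ≤ _ := Finset.sum_le_sum_of_subset_of_nonneg (Finset.subset_univ _) fun i _ _ => hnn i
    have h4 : (Fintype.card S : ℝ) ≤ T.trace.re / ε := by
      rw [le_div_iff₀ hε, htr]; exact h3
    have h5 : Module.finrank ℂ (ι → ℂ) = Fintype.card ι := by simp
    have h6 : (Fintype.card ι : ℝ) ≤ Fintype.card S + Module.finrank ℂ (LinearMap.ker L) := by
      rw [← h5, ← h1]; push_cast
      gcongr
    linarith
  · intro c hc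
    set d := star U *ᵥ c with hd
    have hd0 : ∀ i, ε < hA.eigenvalues i → d i = 0 := by
      intro i hi
      have := congrFun (LinearMap.mem_ker.1 hc) ⟨i, hi⟩
      exact this
    have hsd : star c ᵥ* U = star d := by
      rw [hd, star_mulVec]
      simp [star_eq_conjTranspose]
    have e1 : star c ⬝ᵥ (T *ᵥ c) = ∑ i, (hA.eigenvalues i : ℂ) * (‖d i‖ ^ 2 : ℝ) := by
      have hTc : T *ᵥ c = U *ᵥ (diagonal (RCLike.ofReal ∘ hA.eigenvalues) *ᵥ d) := by
        rw [hd, mulVec_mulVec, mulVec_mulVec]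
        exact congrArg (fun A => A *ᵥ c) hspec
      rw [hTc, dotProduct_mulVec, hsd]
      simp only [dotProduct, mulVec_diagonal, Function.comp, Pi.star_apply]
      refine Finset.sum_congr rfl fun i _ => ?_
      have := Complex.conj_mul' (d i)
      push_cast
      rw [← this]
      simp; ring
    have e2 : ∑ i, ‖d i‖ ^ 2 = ∑ i, ‖c i‖ ^ 2 := by
      have h : star d ⬝ᵥ d = star c ⬝ᵥ c := by
        rw [← hsd, hd, ← dotProduct_mulVec, mulVec_mulVec, hUU, one_mulVec]
      have h' : ∀ z : ι → ℂ, star z ⬝ᵥ z = ((∑ i, ‖z i‖ ^ 2 : ℝ) : ℂ) := by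
        intro z
        simp only [dotProduct, Pi.star_apply]
        push_cast
        exact Finset.sum_congr rfl fun i _ => Complex.conj_mul' (z i)
      rw [h', h'] at h
      exact_mod_cast h
    rw [e1, ← e2, Finset.mul_sum, Complex.re_sum]
    refine Finset.sum_le_sum fun i _ => ?_
    rw [← Complex.ofReal_mul, Complex.ofReal_re]
    by_cases hi : ε < hA.eigenvalues i
    · simp [hd0 i hi]
    · exact mul_le_mul_of_nonneg_right (not_lt.1 hi) (by positivity)

open Matrix ComplexOrder in
lemma gram_norm {ι X : Type*} [Fintype ι] [MeasurableSpace X] (ν : Measure X) (F : ι → X → ℂ)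
    (hF : ∀ α β, Integrable (fun p => star (F α p) * F β p) ν) (c : ι → ℂ) :
    star c ⬝ᵥ ((Matrix.of fun α β => ∫ p, star (F α p) * F β p ∂ν) *ᵥ c) =
      ((∫ p, ‖∑ α, c α * F α p‖ ^ 2 ∂ν : ℝ) : ℂ) := by
  rw [← integral_complex_ofReal]
  have e : ∀ p, ((‖∑ α, c α * F α p‖ ^ 2 : ℝ) : ℂ) =
      ∑ α, ∑ β, star (c α) * ((star (F α p) * F β p) * c β) := by
    intro p
    push_cast
    rw [← Complex.conj_mul', map_sum, Finset.sum_mul_sum]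
    refine Finset.sum_congr rfl fun α _ => Finset.sum_congr rfl fun β _ => ?_
    simp; ring
  simp_rw [e]
  rw [integral_finsetSum _ fun α _ => integrable_finsetSum _ fun β _ =>
    ((hF α β).mul_const _).const_mul _]
  simp only [dotProduct, mulVec, Finset.mul_sum, Matrix.of_apply, Pi.star_apply]
  refine Finset.sum_congr rfl fun α _ => ?_
  rw [integral_finsetSum _ fun β _ => ((hF α β).mul_const _).const_mul _]
  refine Finset.sum_congr rfl fun β _ => ?_
  rw [integral_const_mul, integral_mul_const]

open Matrix ComplexOrder in
lemma gram_psd {ι X : Type*} [Fintype ι] [MeasurableSpace X] (ν : Measure X) (F : ι → X → ℂ)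
    (hF : ∀ α β, Integrable (fun p => star (F α p) * F β p) ν) :
    (Matrix.of fun α β => ∫ p, star (F α p) * F β p ∂ν).PosSemidef := by
  refine Matrix.PosSemidef.of_dotProduct_mulVec_nonneg ?_ ?_
  · ext α β
    simp only [conjTranspose_apply, of_apply]
    have := integral_conj (μ := ν) (f := fun p => star (F β p) * F α p)
    refine this.symm.trans ?_
    congr 1; ext p; simp; ring
  · intro c
    rw [gram_norm ν F hF c]
    exact_mod_cast integral_nonneg fun p => by positivity

/-- orthogonal families. -/
lemma gram_diag {ι X : Type*} [Fintype ι] [DecidableEq ι] [MeasurableSpace X] (ν : Measure X) (F : ι → X → ℂ)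
    (hF : ∀ α β, Integrable (fun p => star (F α p) * F β p) ν) (c : ι → ℂ) :
    ∫ p, ‖∑ α, c α * F α p‖ ^ 2 ∂ν =
     (∑ α, ∑ β, star (c α) * ((∫ p, star (F α p) * F β p ∂ν) * c β)).re := by
  have := gram_norm ν F hF c
  rw [← Complex.ofReal_re (∫ p, ‖∑ α, c α * F α p‖ ^ 2 ∂ν), ← this]
  simp only [dotProduct, Matrix.mulVec, Finset.mul_sum, Matrix.of_apply, Pi.star_apply]

lemma cutoff (δ : ℝ) (h0 : 0 < δ) (h1 : δ < 1) : ∃ (η : ℝ → ℝ) (B : ℝ), ContDiff ℝ (⊤ : ℕ∞) η ∧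
    (∀ t, 0 ≤ η t) ∧ (∀ t, η t ≤ 1) ∧ (∀ t, |t| ≤ (1 - δ) / 2 → η t = 1) ∧
    (∀ t, (1 - δ / 2) / 2 ≤ |t| → η t = 0) ∧ 0 ≤ B ∧ ∀ t, |deriv η t| ≤ B := by
  let f : ContDiffBump (0 : ℝ) := ⟨(1 - δ) / 2, (1 - δ / 2) / 2, by linarith, by linarith⟩
  have hc : ContDiff ℝ (⊤ : ℕ∞) f := f.contDiff
  have hd : Continuous (deriv f) := hc.continuous_deriv (by simp)
  obtain ⟨B, hB⟩ := f.hasCompactSupport.deriv.exists_bound_of_continuous hd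
  refine ⟨f, B, hc, fun t => f.nonneg, fun t => f.le_one, fun t ht => ?_, fun t ht => ?_, ?_, hB⟩
  · apply f.one_of_mem_closedBall; simpa using ht
  · apply f.zero_of_le_dist; simpa using ht
  · exact (norm_nonneg _).trans (hB 0)

/-- Strip measure. -/
def nuR (R : ℝ) : Measure (ℝ × ℝ) := (volume : Measure ℝ).prod (volume.restrict (Set.Ioc (-R / 2) (R / 2)))

lemma nuR_eq (R : ℝ) : nuR R = volume.restrict (Set.univ ×ˢ Set.Ioc (-R / 2) (R / 2)) := by
  rw [nuR, Measure.volume_eq_prod, ← Measure.prod_restrict, Measure.restrict_univ]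

/-- Plane-wave times a shifted profile. -/
def Ew (b R : ℝ) (f : ℝ → ℝ) (m : ℤ) (p : ℝ × ℝ) : ℂ :=
  (((√R)⁻¹ : ℝ) : ℂ) * Complex.exp (((2 * π * m / R * p.2 : ℝ) : ℂ) * Complex.I) *
    ((f (p.1 + 2 * π * m / R / b) : ℝ) : ℂ)

lemma Ew_normsq (b R : ℝ) (hR : 0 < R) (f : ℝ → ℝ) (m : ℤ) (p : ℝ × ℝ) :
    ‖Ew b R f m p‖ ^ 2 = f (p.1 + 2 * π * m / R / b) ^ 2 * R⁻¹ := by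
  unfold Ew
  rw [norm_mul, norm_mul, Complex.norm_exp_ofReal_mul_I, Complex.norm_real, Complex.norm_real, mul_one, mul_pow,
    norm_eq_abs, norm_eq_abs, sq_abs, sq_abs, inv_pow, sq_sqrt hR.le]
  ring

lemma exp_orth (R : ℝ) (hR : 0 < R) (m m' : ℤ) :
    ∫ y in Set.Ioc (-R / 2) (R / 2), ((R⁻¹ : ℝ) : ℂ) * Complex.exp (((2 * π * (m' - m : ℤ) / R * y : ℝ) : ℂ) * Complex.I)
      = if m = m' then 1 else 0 := by
  rw [integral_const_mul, ← intervalIntegral.integral_of_le (by linarith)]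
  have hRc : (R : ℂ) ≠ 0 := by exact_mod_cast hR.ne'
  split_ifs with h
  · subst h
    simp
    field_simp; ring
  · have hc : ((2 * π * (m' - m : ℤ) / R : ℝ) : ℂ) * Complex.I ≠ 0 := by
      refine mul_ne_zero ?_ Complex.I_ne_zero
      norm_cast
      have : ((m' - m : ℤ) : ℝ) ≠ 0 := by exact_mod_cast sub_ne_zero.2 (Ne.symm h)
      positivity
    have e : ∀ y : ℝ, Complex.exp (((2 * π * (m' - m : ℤ) / R * y : ℝ) : ℂ) * Complex.I) =
        Complex.exp ((((2 * π * (m' - m : ℤ) / R : ℝ) : ℂ) * Complex.I) * y) := by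
      intro y; congr 1; push_cast; ring
    simp_rw [e]
    rw [integral_exp_mul_complex hc]
    have : Complex.exp ((((2 * π * (m' - m : ℤ) / R : ℝ) : ℂ) * Complex.I) * ((R / 2 : ℝ) : ℂ)) =
      Complex.exp ((((2 * π * (m' - m : ℤ) / R : ℝ) : ℂ) * Complex.I) * ((-R / 2 : ℝ) : ℂ)) := by
      rw [Complex.exp_eq_exp_iff_exists_int]
      refine ⟨m' - m, ?_⟩
      push_cast; field_simp; ring
    rw [this]; simp

lemma Ew_prod (b R : ℝ) (hR : 0 < R) (f g : ℝ → ℝ) (m m' : ℤ) (p : ℝ × ℝ) :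
    star (Ew b R f m p) * Ew b R g m' p =
      ((f (p.1 + 2 * π * m / R / b) * g (p.1 + 2 * π * m' / R / b) : ℝ) : ℂ) *
      (((R⁻¹ : ℝ) : ℂ) * Complex.exp (((2 * π * (m' - m : ℤ) / R * p.2 : ℝ) : ℂ) * Complex.I)) := by
  unfold Ew
  have h1 : ((R⁻¹ : ℝ) : ℂ) = (((√R)⁻¹ : ℝ) : ℂ) * (((√R)⁻¹ : ℝ) : ℂ) := by
    rw [← Complex.ofReal_mul, ← mul_inv, mul_self_sqrt hR.le]
  have h2 : Complex.exp (((2 * π * (m' - m : ℤ) / R * p.2 : ℝ) : ℂ) * Complex.I) =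
     star (Complex.exp (((2 * π * m / R * p.2 : ℝ) : ℂ) * Complex.I)) *
      Complex.exp (((2 * π * m' / R * p.2 : ℝ) : ℂ) * Complex.I) := by
    rw [Complex.star_def, ← Complex.exp_conj, ← Complex.exp_add]
    congr 1
    rw [map_mul, Complex.conj_ofReal, Complex.conj_I]
    push_cast; ring
  rw [h1, h2]
  simp only [star_mul', Complex.star_def, Complex.conj_ofReal]
  push_cast; ring

lemma prod_int2 (f g : ℝ → ℝ) (hf : Continuous f) (hg : Continuous g) (hf2 : Integrable fun x => f x ^ 2)
    (hg2 : Integrable fun x => g x ^ 2) (a a' : ℝ) : Integrable fun x => f (x + a) * g (x + a') := by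
  refine ((hf2.comp_add_right a).add (hg2.comp_add_right a')).mono' (by fun_prop) (ae_of_all _ fun x => ?_)
  simp only [Pi.add_apply, norm_eq_abs, abs_mul]
  nlinarith [sq_nonneg (|f (x + a)| - |g (x + a')|), sq_abs (f (x + a)), sq_abs (g (x + a'))]

lemma Ew_int (b R : ℝ) (hR : 0 < R) (f g : ℝ → ℝ) (hf : Continuous f) (hg : Continuous g)
    (hf2 : Integrable fun x => f x ^ 2) (hg2 : Integrable fun x => g x ^ 2) (m m' : ℤ) :
    Integrable (fun p => star (Ew b R f m p) * Ew b R g m' p) (nuR R) := by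
  simp_rw [Ew_prod b R hR]
  unfold nuR
  refine Integrable.mul_prod (f := fun x : ℝ => ((f (x + 2 * π * m / R / b) * g (x + 2 * π * m' / R / b) : ℝ) : ℂ))
    (g := fun y : ℝ => ((R⁻¹ : ℝ) : ℂ) * Complex.exp (((2 * π * (m' - m : ℤ) / R * y : ℝ) : ℂ) * Complex.I))
    (prod_int2 f g hf hg hf2 hg2 _ _).ofReal ?_
  exact (Continuous.integrableOn_Ioc (by fun_prop))

lemma Ew_gram (b R : ℝ) (hR : 0 < R) (f g : ℝ → ℝ) (m m' : ℤ) :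
    ∫ p, star (Ew b R f m p) * Ew b R g m' p ∂(nuR R) = if m = m' then ((∫ x, f x * g x : ℝ) : ℂ) else 0 := by
  simp_rw [Ew_prod b R hR]
  unfold nuR
  rw [integral_prod_mul (fun x : ℝ => ((f (x + 2 * π * m / R / b) * g (x + 2 * π * m' / R / b) : ℝ) : ℂ))
    (fun y : ℝ => ((R⁻¹ : ℝ) : ℂ) * Complex.exp (((2 * π * (m' - m : ℤ) / R * y : ℝ) : ℂ) * Complex.I)),
    exp_orth R hR]
  split_ifs with h
  · subst h
    rw [mul_one, integral_complex_ofReal]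
    rw [integral_add_right_eq_self (fun x => f x * g x)]
  · simp

lemma Ew_contDiff (b R : ℝ) (f : ℝ → ℝ) (hf : ContDiff ℝ (⊤ : ℕ∞) f) (m : ℤ) :
    ContDiff ℝ (⊤ : ℕ∞) (Ew b R f m) := by
  unfold Ew
  refine ContDiff.mul (ContDiff.mul contDiff_const ?_) ?_
  · refine Complex.contDiff_exp.comp ?_
    refine ContDiff.mul ?_ contDiff_const
    exact Complex.ofRealCLM.contDiff.comp (g := Complex.ofRealCLM) (f := fun p : ℝ × ℝ => 2 * π * m / R * p.2) (contDiff_const.mul contDiff_snd)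
  · exact Complex.ofRealCLM.contDiff.comp (hf.comp (by fun_prop))

lemma Ew_dX (b R : ℝ) (f f' : ℝ → ℝ) (hf : ContDiff ℝ (⊤ : ℕ∞) f) (hd : ∀ x, HasDerivAt f (f' x) x) (m : ℤ)
    (p : ℝ × ℝ) : dX (Ew b R f m) p = Ew b R f' m p := by
  have h1 : HasFDerivAt (Ew b R f m) (fderiv ℝ (Ew b R f m) p) p :=
    ((Ew_contDiff b R f hf m).differentiable (by simp) p).hasFDerivAt
  have h2 : HasDerivAt (fun t : ℝ => ((t, p.2) : ℝ × ℝ)) (1, 0) p.1 :=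
    (hasDerivAt_id p.1).prodMk (hasDerivAt_const _ _)
  have h3 : HasDerivAt (fun t => Ew b R f m (t, p.2)) (fderiv ℝ (Ew b R f m) p (1, 0)) p.1 :=
    h1.comp_hasDerivAt (f := fun t : ℝ => ((t, p.2) : ℝ × ℝ)) p.1 h2
  have h4 : HasDerivAt (fun t => Ew b R f m (t, p.2)) (Ew b R f' m p) p.1 := by
    have h6 : HasDerivAt (fun t : ℝ => ((f (t + 2 * π * m / R / b) : ℝ) : ℂ)) ((f' (p.1 + 2 * π * m / R / b) : ℝ) : ℂ) p.1 :=
      ((hd _).comp_add_const _ _).ofReal_comp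
    exact h6.const_mul ((((√R)⁻¹ : ℝ) : ℂ) * Complex.exp (((2 * π * m / R * p.2 : ℝ) : ℂ) * Complex.I))
  exact h3.unique h4

lemma Ew_dY (b R : ℝ) (f : ℝ → ℝ) (hf : ContDiff ℝ (⊤ : ℕ∞) f) (m : ℤ)
    (p : ℝ × ℝ) : dY (Ew b R f m) p = ((2 * π * m / R : ℝ) : ℂ) * Complex.I * Ew b R f m p := by
  have h1 : HasFDerivAt (Ew b R f m) (fderiv ℝ (Ew b R f m) p) p :=
    ((Ew_contDiff b R f hf m).differentiable (by simp) p).hasFDerivAt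
  have h2 : HasDerivAt (fun t : ℝ => ((p.1, t) : ℝ × ℝ)) (0, 1) p.2 :=
    (hasDerivAt_const _ _).prodMk (hasDerivAt_id p.2)
  have h3 : HasDerivAt (fun t => Ew b R f m (p.1, t)) (fderiv ℝ (Ew b R f m) p (0, 1)) p.2 :=
    h1.comp_hasDerivAt (f := fun t : ℝ => ((p.1, t) : ℝ × ℝ)) p.2 h2
  have h4 : HasDerivAt (fun t => Ew b R f m (p.1, t)) (((2 * π * m / R : ℝ) : ℂ) * Complex.I * Ew b R f m p) p.2 := by
    have h5 : HasDerivAt (fun t : ℝ => ((2 * π * m / R * t : ℝ) : ℂ) * Complex.I)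
        (((2 * π * m / R : ℝ) : ℂ) * Complex.I) p.2 := by
      have := (((hasDerivAt_id p.2).const_mul (2 * π * m / R : ℝ)).ofReal_comp).mul_const Complex.I
      simpa using this
    have h6 := ((h5.cexp).const_mul (((√R)⁻¹ : ℝ) : ℂ)).mul_const ((f (p.1 + 2 * π * m / R / b) : ℝ) : ℂ)
    refine HasDerivAt.congr_deriv h6 ?_
    unfold Ew; ring
  exact h3.unique h4

lemma Ew_pY (b R : ℝ) (hb : 0 < b) (f : ℝ → ℝ) (hf : ContDiff ℝ (⊤ : ℕ∞) f) (m : ℤ)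
    (p : ℝ × ℝ) : -Complex.I * dY (Ew b R f m) p + ((b * p.1 : ℝ) : ℂ) * Ew b R f m p =
      Ew b R (fun x => b * (x * f x)) m p := by
  rw [Ew_dY b R f hf]
  unfold Ew
  have hbc : (b : ℂ) ≠ 0 := by exact_mod_cast hb.ne'
  set e := Complex.exp (((2 * π * m / R * p.2 : ℝ) : ℂ) * Complex.I)
  have : ((b * ((p.1 + 2 * π * m / R / b) * f (p.1 + 2 * π * m / R / b)) : ℝ) : ℂ)
      = (((2 * π * m / R : ℝ) : ℂ) + ((b * p.1 : ℝ) : ℂ)) * (f (p.1 + 2 * π * m / R / b) : ℝ) := by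
    rw [← Complex.ofReal_add, ← Complex.ofReal_mul]
    congr 1
    have h : b * (p.1 + 2 * π * m / R / b) = 2 * π * m / R + b * p.1 := by
      rw [mul_add, mul_div_cancel₀ _ hb.ne']; ring
    rw [← mul_assoc, h]
  rw [this]
  linear_combination (-((2 * π * m / R : ℝ) : ℂ) * ((((√R)⁻¹ : ℝ) : ℂ) * e * (f (p.1 + 2 * π * m / R / b) : ℝ))) * Complex.I_sq

/-- Index set. -/
abbrev Idx (M K : ℕ) := ↥(Finset.Icc (-(M : ℤ)) M) × Fin K

/-- Superposition of profiles. -/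
def Sup (b R : ℝ) {M K : ℕ} (f : ℕ → ℝ → ℝ) (c : Idx M K → ℂ) (p : ℝ × ℝ) : ℂ :=
  ∑ α : Idx M K, c α * Ew b R (f α.2) α.1 p

lemma gram_int {ι X : Type*} [Fintype ι] [MeasurableSpace X] (ν : Measure X) (F : ι → X → ℂ)
    (hF : ∀ α β, Integrable (fun p => star (F α p) * F β p) ν) (c : ι → ℂ) :
    Integrable (fun p => ‖∑ α, c α * F α p‖ ^ 2) ν := by
  have e : ∀ p, ‖∑ α, c α * F α p‖ ^ 2 =
      (∑ α, ∑ β, star (c α) * ((star (F α p) * F β p) * c β)).re := by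
    intro p
    rw [← Complex.ofReal_re (‖∑ α, c α * F α p‖ ^ 2)]
    congr 1
    push_cast
    rw [← Complex.conj_mul', map_sum, Finset.sum_mul_sum]
    refine Finset.sum_congr rfl fun α _ => Finset.sum_congr rfl fun β _ => ?_
    simp; ring
  simp_rw [e]
  refine Integrable.re (𝕜 := ℂ) ?_
  exact integrable_finsetSum _ fun α _ => integrable_finsetSum _ fun β _ =>
    ((hF α β).mul_const _).const_mul _

lemma Sup_int (b R : ℝ) (hR : 0 < R) {M K : ℕ} (f : ℕ → ℝ → ℝ) (hf : ∀ n, Continuous (f n))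
    (hf2 : ∀ n, Integrable fun x => f n x ^ 2) (c : Idx M K → ℂ) :
    Integrable (fun p => ‖Sup b R f c p‖ ^ 2) (nuR R) :=
  gram_int (nuR R) (fun α : Idx M K => Ew b R (f α.2) α.1)
    (fun α β => Ew_int b R hR _ _ (hf _) (hf _) (hf2 _) (hf2 _) _ _) c

lemma Sup_norm (b R : ℝ) (hR : 0 < R) {M K : ℕ} (f : ℕ → ℝ → ℝ) (hf : ∀ n, Continuous (f n))
    (hf2 : ∀ n, Integrable fun x => f n x ^ 2) (c : Idx M K → ℂ) :
    ∫ p, ‖Sup b R f c p‖ ^ 2 ∂(nuR R) = ∑ α : Idx M K, ∑ β : Idx M K,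
      if (α.1 : ℤ) = β.1 then (star (c α) * c β).re * ∫ x, f α.2 x * f β.2 x else 0 := by
  have := gram_diag (nuR R) (fun α : Idx M K => Ew b R (f α.2) α.1)
    (fun α β => Ew_int b R hR _ _ (hf _) (hf _) (hf2 _) (hf2 _) _ _) c
  unfold Sup
  rw [this, Complex.re_sum]
  refine Finset.sum_congr rfl fun α _ => ?_
  rw [Complex.re_sum]
  refine Finset.sum_congr rfl fun β _ => ?_
  rw [Ew_gram b R hR]
  split_ifs with h
  · rw [mul_left_comm, Complex.re_ofReal_mul, mul_comm]
  · simp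

lemma diag_sum {M K : ℕ} (c : Idx M K → ℂ) (g : ℕ → ℝ) :
    (∑ α : Idx M K, ∑ β : Idx M K, if (α.1 : ℤ) = β.1 then (star (c α) * c β).re *
      (if (α.2 : ℕ) = β.2 then g β.2 else 0) else 0) = ∑ α : Idx M K, g α.2 * ‖c α‖ ^ 2 := by
  refine Finset.sum_congr rfl fun α _ => ?_
  rw [Finset.sum_eq_single α]
  · have : star (c α) * c α = ((‖c α‖ ^ 2 : ℝ) : ℂ) := by push_cast; exact Complex.conj_mul' (c α)
    simp only [if_true, this, Complex.ofReal_re]; ring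
  · intro β _ hne
    split_ifs with h1 h2
    · exact absurd (Prod.ext (Subtype.ext h1.symm) (Fin.ext h2.symm)) hne
    · simp
    · rfl
  · simp

lemma Sup_contDiff (b R : ℝ) {M K : ℕ} (f : ℕ → ℝ → ℝ) (hf : ∀ n, ContDiff ℝ (⊤ : ℕ∞) (f n)) (c : Idx M K → ℂ) :
    ContDiff ℝ (⊤ : ℕ∞) (Sup b R f c) := by
  unfold Sup
  exact ContDiff.sum fun α _ => contDiff_const.mul (Ew_contDiff b R _ (hf _) _)

lemma Sup_fderiv (b R : ℝ) {M K : ℕ} (f : ℕ → ℝ → ℝ) (hf : ∀ n, ContDiff ℝ (⊤ : ℕ∞) (f n))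
    (c : Idx M K → ℂ) (p w : ℝ × ℝ) :
    fderiv ℝ (Sup b R f c) p w = ∑ α : Idx M K, c α * fderiv ℝ (Ew b R (f α.2) α.1) p w := by
  have hd : ∀ α : Idx M K, DifferentiableAt ℝ (Ew b R (f α.2) α.1) p :=
    fun α => (Ew_contDiff b R _ (hf _) _).differentiable (by simp) p
  have h : HasFDerivAt (Sup b R f c) (∑ α : Idx M K, c α • fderiv ℝ (Ew b R (f α.2) α.1) p) p := by
    unfold Sup
    exact HasFDerivAt.fun_sum fun α _ => (hd α).hasFDerivAt.const_mul (c α)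
  rw [h.fderiv]
  simp

lemma Sup_dX (b R : ℝ) {M K : ℕ} (f f' : ℕ → ℝ → ℝ) (hf : ∀ n, ContDiff ℝ (⊤ : ℕ∞) (f n))
    (hd : ∀ n x, HasDerivAt (f n) (f' n x) x) (c : Idx M K → ℂ) (p : ℝ × ℝ) :
    dX (Sup b R f c) p = Sup b R f' c p := by
  unfold dX
  rw [Sup_fderiv b R f hf]
  unfold Sup
  refine Finset.sum_congr rfl fun α _ => ?_
  rw [← Ew_dX b R _ _ (hf _) (hd _)]; rfl

lemma Sup_pY (b R : ℝ) (hb : 0 < b) {M K : ℕ} (f : ℕ → ℝ → ℝ) (hf : ∀ n, ContDiff ℝ (⊤ : ℕ∞) (f n))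
    (c : Idx M K → ℂ) (p : ℝ × ℝ) :
    -Complex.I * dY (Sup b R f c) p + ((b * p.1 : ℝ) : ℂ) * Sup b R f c p =
      Sup b R (fun n x => b * (x * f n x)) c p := by
  unfold dY
  rw [Sup_fderiv b R f hf]
  unfold Sup
  rw [Finset.mul_sum, Finset.mul_sum, ← Finset.sum_add_distrib]
  refine Finset.sum_congr rfl fun α _ => ?_
  rw [← Ew_pY b R hb _ (hf _)]; unfold dY; ring

/-- Two-dimensional cutoff. -/
def chi (R : ℝ) (η : ℝ → ℝ) (p : ℝ × ℝ) : ℝ := η (p.1 / R) * η (p.2 / R)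

lemma chi_contDiff (R : ℝ) (η : ℝ → ℝ) (hη : ContDiff ℝ (⊤ : ℕ∞) η) : ContDiff ℝ (⊤ : ℕ∞) (chi R η) := by
  unfold chi
  exact (hη.comp (contDiff_fst.div_const _)).mul (hη.comp (contDiff_snd.div_const _))

lemma chiC_contDiff (R : ℝ) (η : ℝ → ℝ) (hη : ContDiff ℝ (⊤ : ℕ∞) η) :
    ContDiff ℝ (⊤ : ℕ∞) (fun p => (chi R η p : ℂ)) :=
  Complex.ofRealCLM.contDiff.comp (chi_contDiff R η hη)

lemma chi_dX (R : ℝ) (η : ℝ → ℝ) (hη : ContDiff ℝ (⊤ : ℕ∞) η) (p : ℝ × ℝ) :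
    dX (fun p => (chi R η p : ℂ)) p = ((deriv η (p.1 / R) * (1 / R) * η (p.2 / R) : ℝ) : ℂ) := by
  have h1 := ((chiC_contDiff R η hη).differentiable (by simp) p).hasFDerivAt
  have h2 : HasDerivAt (fun t : ℝ => ((t, p.2) : ℝ × ℝ)) (1, 0) p.1 :=
    (hasDerivAt_id p.1).prodMk (hasDerivAt_const _ _)
  have h3 := h1.comp_hasDerivAt (f := fun t : ℝ => ((t, p.2) : ℝ × ℝ)) p.1 h2
  have h4 : HasDerivAt (fun t : ℝ => ((η (t / R) * η (p.2 / R) : ℝ) : ℂ))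
      ((deriv η (p.1 / R) * (1 / R) * η (p.2 / R) : ℝ) : ℂ) p.1 := by
    have h5 : HasDerivAt η (deriv η (p.1 / R)) (p.1 / R) := (hη.differentiable (by simp) _).hasDerivAt
    have h6 := h5.comp p.1 ((hasDerivAt_id p.1).div_const R)
    exact (h6.mul_const _).ofReal_comp
  exact h3.unique h4

lemma chi_dY (R : ℝ) (η : ℝ → ℝ) (hη : ContDiff ℝ (⊤ : ℕ∞) η) (p : ℝ × ℝ) :
    dY (fun p => (chi R η p : ℂ)) p = ((η (p.1 / R) * (deriv η (p.2 / R) * (1 / R)) : ℝ) : ℂ) := by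
  have h1 := ((chiC_contDiff R η hη).differentiable (by simp) p).hasFDerivAt
  have h2 : HasDerivAt (fun t : ℝ => ((p.1, t) : ℝ × ℝ)) (0, 1) p.2 :=
    (hasDerivAt_const _ _).prodMk (hasDerivAt_id p.2)
  have h3 := h1.comp_hasDerivAt (f := fun t : ℝ => ((p.1, t) : ℝ × ℝ)) p.2 h2
  have h4 : HasDerivAt (fun t : ℝ => ((η (p.1 / R) * η (t / R) : ℝ) : ℂ))
      ((η (p.1 / R) * (deriv η (p.2 / R) * (1 / R)) : ℝ) : ℂ) p.2 := by
    have h5 : HasDerivAt η (deriv η (p.2 / R)) (p.2 / R) := (hη.differentiable (by simp) _).hasDerivAt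
    have h6 := h5.comp p.2 ((hasDerivAt_id p.2).div_const R)
    exact (h6.const_mul _).ofReal_comp
  exact h3.unique h4

lemma fd_mul (f g : ℝ × ℝ → ℂ) (p w : ℝ × ℝ) (hf : DifferentiableAt ℝ f p) (hg : DifferentiableAt ℝ g p) :
    fderiv ℝ (fun p => f p * g p) p w = f p * fderiv ℝ g p w + fderiv ℝ f p w * g p := by
  rw [(hf.hasFDerivAt.fun_mul hg.hasFDerivAt).fderiv]
  simp; ring

lemma eps_ineq (ε : ℝ) (hε : 0 < ε) (x y : ℂ) :
    ‖x + y‖ ^ 2 ≤ (1 + ε) * ‖x‖ ^ 2 + (1 + 1 / ε) * ‖y‖ ^ 2 := by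
  have h := norm_add_le x y
  have h1 : ‖x + y‖ ^ 2 ≤ (‖x‖ + ‖y‖) ^ 2 := pow_le_pow_left₀ (norm_nonneg _) h 2
  have h2 : 2 * ‖x‖ * ‖y‖ ≤ ε * ‖x‖ ^ 2 + 1 / ε * ‖y‖ ^ 2 := by
    have : 0 ≤ (ε * ‖x‖ - ‖y‖) ^ 2 / ε := by positivity
    have e : (ε * ‖x‖ - ‖y‖) ^ 2 / ε = ε * ‖x‖ ^ 2 + 1 / ε * ‖y‖ ^ 2 - 2 * ‖x‖ * ‖y‖ := by
      field_simp; ring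
    linarith
  nlinarith

lemma kin_pt (b R : ℝ) (hR : 0 < R) (η : ℝ → ℝ) (B ε : ℝ) (hε : 0 < ε) (hη : ContDiff ℝ (⊤ : ℕ∞) η)
    (h0 : ∀ t, 0 ≤ η t) (h1 : ∀ t, η t ≤ 1) (hB : ∀ t, |deriv η t| ≤ B)
    (ψ : ℝ × ℝ → ℂ) (hψ : Differentiable ℝ ψ) (p : ℝ × ℝ) :
    ‖dX (fun p => (chi R η p : ℂ) * ψ p) p‖ ^ 2 +
      ‖-Complex.I * dY (fun p => (chi R η p : ℂ) * ψ p) p + ((b * p.1 : ℝ) : ℂ) * ((chi R η p : ℂ) * ψ p)‖ ^ 2 ≤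
    (1 + ε) * (‖dX ψ p‖ ^ 2 + ‖-Complex.I * dY ψ p + ((b * p.1 : ℝ) : ℂ) * ψ p‖ ^ 2) +
      (1 + 1 / ε) * (2 * B ^ 2 / R ^ 2) * ‖ψ p‖ ^ 2 := by
  have hc := (chiC_contDiff R η hη).differentiable (by simp) p
  have eX : dX (fun p => (chi R η p : ℂ) * ψ p) p = (chi R η p : ℂ) * dX ψ p + dX (fun p => (chi R η p : ℂ)) p * ψ p :=
    fd_mul _ _ _ _ hc (hψ p)
  have eY : dY (fun p => (chi R η p : ℂ) * ψ p) p = (chi R η p : ℂ) * dY ψ p + dY (fun p => (chi R η p : ℂ)) p * ψ p :=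
    fd_mul _ _ _ _ hc (hψ p)
  have eY2 : -Complex.I * dY (fun p => (chi R η p : ℂ) * ψ p) p + ((b * p.1 : ℝ) : ℂ) * ((chi R η p : ℂ) * ψ p) =
      (chi R η p : ℂ) * (-Complex.I * dY ψ p + ((b * p.1 : ℝ) : ℂ) * ψ p) +
        -Complex.I * dY (fun p => (chi R η p : ℂ)) p * ψ p := by
    rw [eY]; ring
  have hchi : ∀ z : ℂ, ‖(chi R η p : ℂ) * z‖ ^ 2 ≤ ‖z‖ ^ 2 := by
    intro z
    have : ‖(chi R η p : ℂ)‖ ≤ 1 := by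
      rw [Complex.norm_real, norm_eq_abs, chi, abs_of_nonneg (mul_nonneg (h0 _) (h0 _))]
      exact mul_le_one₀ (h1 _) (h0 _) (h1 _)
    rw [norm_mul]
    exact pow_le_pow_left₀ (by positivity) (mul_le_of_le_one_left (norm_nonneg _) this) 2
  have hB0 : 0 ≤ B := (abs_nonneg _).trans (hB 0)
  have kX : ‖dX (fun p => (chi R η p : ℂ)) p * ψ p‖ ^ 2 ≤ B ^ 2 / R ^ 2 * ‖ψ p‖ ^ 2 := by
    rw [chi_dX R η hη, norm_mul, mul_pow, Complex.norm_real, norm_eq_abs, ← div_pow]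
    gcongr
    rw [abs_mul, abs_mul, abs_of_pos (by positivity : 0 < 1 / R), abs_of_nonneg (h0 _)]
    calc _ ≤ B * (1 / R) * 1 := mul_le_mul (mul_le_mul_of_nonneg_right (hB _) (by positivity)) (h1 _) (h0 _) (by positivity)
      _ = B / R := by ring
  have kY : ‖-Complex.I * dY (fun p => (chi R η p : ℂ)) p * ψ p‖ ^ 2 ≤ B ^ 2 / R ^ 2 * ‖ψ p‖ ^ 2 := by
    rw [chi_dY R η hη, norm_mul, norm_mul, norm_neg, Complex.norm_I, one_mul, mul_pow, Complex.norm_real, norm_eq_abs, ← div_pow]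
    gcongr
    rw [abs_mul, abs_mul, abs_of_pos (by positivity : 0 < 1 / R), abs_of_nonneg (h0 _)]
    calc _ ≤ 1 * (B * (1 / R)) := by gcongr; exact h1 _; exact hB _
      _ = B / R := by ring
  rw [eX, eY2]
  have i1 := eps_ineq ε hε ((chi R η p : ℂ) * dX ψ p) (dX (fun p => (chi R η p : ℂ)) p * ψ p)
  have i2 := eps_ineq ε hε ((chi R η p : ℂ) * (-Complex.I * dY ψ p + ((b * p.1 : ℝ) : ℂ) * ψ p)) (-Complex.I * dY (fun p => (chi R η p : ℂ)) p * ψ p)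
  have hε1 : 0 ≤ 1 + 1 / ε := by positivity
  have hε2 : 0 ≤ 1 + ε := by positivity
  have j1 := mul_le_mul_of_nonneg_left (hchi (dX ψ p)) hε2
  have j2 := mul_le_mul_of_nonneg_left (hchi (-Complex.I * dY ψ p + ((b * p.1 : ℝ) : ℂ) * ψ p)) hε2
  have j3 := mul_le_mul_of_nonneg_left kX hε1
  have j4 := mul_le_mul_of_nonneg_left kY hε1
  have e : (1 + 1 / ε) * (2 * B ^ 2 / R ^ 2) * ‖ψ p‖ ^ 2 = (1 + 1 / ε) * (B ^ 2 / R ^ 2 * ‖ψ p‖ ^ 2) + (1 + 1 / ε) * (B ^ 2 / R ^ 2 * ‖ψ p‖ ^ 2) := by ring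
  rw [e]
  linarith

lemma chi_pt (R δ a : ℝ) (hR : 0 < R) (hδ : 0 < δ) (η : ℝ → ℝ) (h0 : ∀ t, 0 ≤ η t) (h1 : ∀ t, η t ≤ 1)
    (hone : ∀ t, |t| ≤ (1 - δ) / 2 → η t = 1) (ha : |a| ≤ (1 - 2 * δ) * R / 2) (p : ℝ × ℝ) :
    1 - chi R η p ^ 2 ≤ (1 - (Set.Icc (-((1 - δ) * R / 2)) ((1 - δ) * R / 2)).indicator (fun _ => (1 : ℝ)) p.2) +
      4 / (δ * R) ^ 2 * (p.1 + a) ^ 2 := by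
  have hle : 1 - chi R η p ^ 2 ≤ 1 := by have := sq_nonneg (chi R η p); linarith
  have hpos : 0 ≤ 4 / (δ * R) ^ 2 * (p.1 + a) ^ 2 := by positivity
  by_cases hy : p.2 ∈ Set.Icc (-((1 - δ) * R / 2)) ((1 - δ) * R / 2)
  · rw [Set.indicator_of_mem hy]
    by_cases hx : |p.1 / R| ≤ (1 - δ) / 2
    · have hy' : |p.2 / R| ≤ (1 - δ) / 2 := by
        rw [abs_div, abs_of_pos hR, div_le_iff₀ hR]
        have := abs_le.2 hy
        linarith
      have : chi R η p = 1 := by rw [chi, hone _ hx, hone _ hy', mul_one]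
      rw [this]; linarith
    · rw [not_le, abs_div, abs_of_pos hR, lt_div_iff₀ hR] at hx
      have h3 : δ * R / 2 ≤ |p.1 + a| := by
        have := abs_sub_abs_le_abs_sub p.1 (-a)
        rw [abs_neg, sub_neg_eq_add] at this
        nlinarith
      have h4 : (δ * R / 2) ^ 2 ≤ (p.1 + a) ^ 2 := by
        rw [← sq_abs (p.1 + a)]
        exact pow_le_pow_left₀ (by positivity) h3 2
      have h5 : 1 ≤ 4 / (δ * R) ^ 2 * (p.1 + a) ^ 2 := by
        calc (1 : ℝ) = 4 / (δ * R) ^ 2 * (δ * R / 2) ^ 2 := by field_simp; norm_num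
          _ ≤ _ := by gcongr
      linarith
  · rw [Set.indicator_of_notMem hy]; linarith

lemma strip_int (R δ : ℝ) (hR : 0 < R) (hδ : 0 < δ) (hδ1 : δ < 1) :
    ∫ y in Set.Ioc (-R / 2) (R / 2), (1 - (Set.Icc (-((1 - δ) * R / 2)) ((1 - δ) * R / 2)).indicator (fun _ => (1 : ℝ)) y)
      = δ * R := by
  have hsub : Set.Icc (-((1 - δ) * R / 2)) ((1 - δ) * R / 2) ⊆ Set.Ioc (-R / 2) (R / 2) := by
    intro y hy
    have := mul_pos hδ hR
    constructor
    · linarith [hy.1]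
    · linarith [hy.2]
  rw [integral_sub (by simp) ((integrable_const _).indicator measurableSet_Icc)]
  rw [setIntegral_indicator measurableSet_Icc, Set.inter_eq_right.2 hsub]
  have := mul_pos (sub_pos.2 hδ1) hR
  simp only [setIntegral_const, smul_eq_mul, mul_one, Measure.real, Real.volume_Ioc, Real.volume_Icc]
  rw [ENNReal.toReal_ofReal (by linarith), ENNReal.toReal_ofReal (by linarith)]
  ring

lemma diag_bd (b R δ : ℝ) (hR : 0 < R) (hδ : 0 < δ) (hδ1 : δ < 1) (η : ℝ → ℝ) (h0 : ∀ t, 0 ≤ η t)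
    (h1 : ∀ t, η t ≤ 1)
    (hone : ∀ t, |t| ≤ (1 - δ) / 2 → η t = 1) (m : ℤ) (ha : |2 * π * m / R / b| ≤ (1 - 2 * δ) * R / 2)
    (f : ℝ → ℝ) (hf2 : Integrable fun x => f x ^ 2) (hf3 : Integrable fun x => (x * f x) ^ 2)
    (hn : ∫ x, f x ^ 2 = 1) :
    ∫ p, (1 - chi R η p ^ 2) * ‖Ew b R f m p‖ ^ 2 ∂(nuR R) ≤ δ + 4 / (δ * R) ^ 2 * ∫ x, (x * f x) ^ 2 := by
  set a := 2 * π * m / R / b with had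
  set s := (Set.Icc (-((1 - δ) * R / 2)) ((1 - δ) * R / 2)).indicator (fun _ => (1 : ℝ)) with hs
  have hchi : ∀ p, 0 ≤ 1 - chi R η p ^ 2 := by
    intro p
    have : chi R η p ≤ 1 := mul_le_one₀ (h1 _) (h0 _) (h1 _)
    have h' : 0 ≤ chi R η p := mul_nonneg (h0 _) (h0 _)
    nlinarith
  have hsi : Integrable (fun y => R⁻¹ * (1 - s y)) (volume.restrict (Set.Ioc (-R / 2) (R / 2))) :=
    (Integrable.sub (by simp) ((integrable_const _).indicator measurableSet_Icc)).const_mul _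
  have hci : Integrable (fun _ : ℝ => R⁻¹) (volume.restrict (Set.Ioc (-R / 2) (R / 2))) := by simp
  have i1 : Integrable (fun p : ℝ × ℝ => f (p.1 + a) ^ 2 * (R⁻¹ * (1 - s p.2))) (nuR R) :=
    Integrable.mul_prod (hf2.comp_add_right a) hsi
  have i2 : Integrable (fun p : ℝ × ℝ => ((p.1 + a) * f (p.1 + a)) ^ 2 * R⁻¹) (nuR R) :=
    Integrable.mul_prod (hf3.comp_add_right a) hci
  have e1 : ∫ p : ℝ × ℝ, f (p.1 + a) ^ 2 * (R⁻¹ * (1 - s p.2)) ∂(nuR R) = δ := by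
    unfold nuR
    rw [integral_prod_mul (fun x => f (x + a) ^ 2) (fun y => R⁻¹ * (1 - s y)),
      integral_add_right_eq_self (fun x => f x ^ 2), hn, integral_const_mul, strip_int R δ hR hδ hδ1]
    field_simp
  have e2 : ∫ p : ℝ × ℝ, ((p.1 + a) * f (p.1 + a)) ^ 2 * R⁻¹ ∂(nuR R) = ∫ x, (x * f x) ^ 2 := by
    unfold nuR
    rw [integral_prod_mul (fun x => ((x + a) * f (x + a)) ^ 2) (fun y => R⁻¹),
      integral_add_right_eq_self (fun x => (x * f x) ^ 2)]
    simp only [setIntegral_const, smul_eq_mul, Measure.real, Real.volume_Ioc]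
    rw [ENNReal.toReal_ofReal (by linarith)]
    field_simp; ring
  calc _ ≤ ∫ p : ℝ × ℝ, (f (p.1 + a) ^ 2 * (R⁻¹ * (1 - s p.2)) +
        4 / (δ * R) ^ 2 * (((p.1 + a) * f (p.1 + a)) ^ 2 * R⁻¹)) ∂(nuR R) := by
        refine integral_mono_of_nonneg (ae_of_all _ fun p => mul_nonneg (hchi p) (by positivity))
          (i1.add (i2.const_mul _)) (ae_of_all _ fun p => ?_)
        simp only
        rw [Ew_normsq b R hR]
        have := chi_pt R δ a hR hδ η h0 h1 hone ha p
        calc _ ≤ _ := mul_le_mul_of_nonneg_right this (by positivity)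
          _ = _ := by rw [← had]; ring
    _ = _ := by
        rw [integral_add (f := fun p : ℝ × ℝ => f (p.1 + a) ^ 2 * (R⁻¹ * (1 - s p.2))) i1 (i2.const_mul _),
          integral_const_mul, e1, e2]

/-- Weighted waves. -/
def Fw (b R : ℝ) (η f : ℝ → ℝ) (m : ℤ) (p : ℝ × ℝ) : ℂ :=
  ((√(1 - chi R η p ^ 2) : ℝ) : ℂ) * Ew b R f m p

lemma Fw_prod (b R : ℝ) (η f g : ℝ → ℝ) (h0 : ∀ t, 0 ≤ η t) (h1 : ∀ t, η t ≤ 1) (m m' : ℤ) (p : ℝ × ℝ) :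
    star (Fw b R η f m p) * Fw b R η g m' p =
      ((1 - chi R η p ^ 2 : ℝ) : ℂ) * (star (Ew b R f m p) * Ew b R g m' p) := by
  have hchi : 0 ≤ 1 - chi R η p ^ 2 := by
    have : chi R η p ≤ 1 := mul_le_one₀ (h1 _) (h0 _) (h1 _)
    have h' : 0 ≤ chi R η p := mul_nonneg (h0 _) (h0 _)
    nlinarith
  have e : ((1 - chi R η p ^ 2 : ℝ) : ℂ) = ((√(1 - chi R η p ^ 2) : ℝ) : ℂ) * ((√(1 - chi R η p ^ 2) : ℝ) : ℂ) := by
    rw [← Complex.ofReal_mul, mul_self_sqrt hchi]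
  rw [e]; unfold Fw
  simp only [star_mul', Complex.star_def, Complex.conj_ofReal]
  ring

lemma Fw_int (b R : ℝ) (hR : 0 < R) (η f g : ℝ → ℝ) (hη : Continuous η) (h0 : ∀ t, 0 ≤ η t) (h1 : ∀ t, η t ≤ 1)
    (hf : Continuous f) (hg : Continuous g)
    (hf2 : Integrable fun x => f x ^ 2) (hg2 : Integrable fun x => g x ^ 2) (m m' : ℤ) :
    Integrable (fun p => star (Fw b R η f m p) * Fw b R η g m' p) (nuR R) := by
  simp_rw [Fw_prod b R η f g h0 h1]
  refine (Ew_int b R hR f g hf hg hf2 hg2 m m').bdd_mul (c := 1) ?_ (ae_of_all _ fun p => ?_)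
  · refine Continuous.aestronglyMeasurable ?_
    unfold chi; fun_prop
  · have : chi R η p ≤ 1 := mul_le_one₀ (h1 _) (h0 _) (h1 _)
    have h' : 0 ≤ chi R η p := mul_nonneg (h0 _) (h0 _)
    rw [Complex.norm_real, norm_eq_abs, abs_le]
    constructor <;> nlinarith

lemma cut_test (b R δ : ℝ) (hR : 0 < R) (hδ : 0 < δ) (η : ℝ → ℝ) (hη : ContDiff ℝ (⊤ : ℕ∞) η)
    (hz : ∀ t, (1 - δ / 2) / 2 ≤ |t| → η t = 0) (ψ : ℝ × ℝ → ℂ) (hψ : ContDiff ℝ (⊤ : ℕ∞) ψ) :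
    IsTestOn (rectR R R) (fun p => gph b p * ((chi R η p : ℂ) * ψ p)) := by
  set r := (1 - δ / 2) / 2 * R with hr
  have hsup : tsupport (fun p => gph b p * ((chi R η p : ℂ) * ψ p)) ⊆ Set.Icc (-r) r ×ˢ Set.Icc (-r) r := by
    refine closure_minimal (fun p hp => ?_) (isClosed_Icc.prod isClosed_Icc)
    have hc : chi R η p ≠ 0 := by
      intro h; apply hp; simp [h]
    have key : ∀ t, η (t / R) ≠ 0 → t ∈ Set.Icc (-r) r := by
      intro t ht
      have : ¬ (1 - δ / 2) / 2 ≤ |t / R| := fun h => ht (hz _ h)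
      rw [not_le, abs_div, abs_of_pos hR, div_lt_iff₀ hR] at this
      exact abs_le.1 this.le
    exact ⟨key _ (left_ne_zero_of_mul hc), key _ (right_ne_zero_of_mul hc)⟩
  refine ⟨(gph_contDiff b).mul ((chiC_contDiff R η hη).mul hψ), ?_, ?_⟩
  · exact (isCompact_Icc.prod isCompact_Icc).of_isClosed_subset (isClosed_tsupport _) hsup
  · refine hsup.trans ?_
    have hrr : r < R / 2 := by
      have := mul_pos hδ hR
      rw [hr]; nlinarith
    unfold rectR
    refine Set.prod_mono ?_ ?_ <;>
    · intro t ht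
      exact ⟨by linarith [ht.1], by linarith [ht.2]⟩

lemma strip_zero (R : ℝ) (G : ℝ × ℝ → ℝ) (h : ∀ p : ℝ × ℝ, p.2 ∉ Set.Ioc (-R / 2) (R / 2) → G p = 0) :
    ∫ p, G p = ∫ p, G p ∂(nuR R) := by
  rw [nuR_eq]
  symm
  refine setIntegral_eq_integral_of_forall_compl_eq_zero fun p hp => h p fun h' => hp ⟨trivial, h'⟩

/-- The trial map. -/
def PhiL (b R : ℝ) (M K : ℕ) (η : ℝ → ℝ) (φ : ℕ → ℝ → ℝ) : (Idx M K → ℂ) →ₗ[ℂ] (ℝ × ℝ → ℂ) where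
  toFun c p := gph b p * ((chi R η p : ℂ) * Sup b R φ c p)
  map_add' c d := by
    ext p
    simp only [Sup, Pi.add_apply, add_mul, Finset.sum_add_distrib]; ring
  map_smul' z c := by
    ext p
    simp only [Sup, Pi.smul_apply, smul_eq_mul, mul_assoc, RingHom.id_apply, ← Finset.mul_sum]; ring

lemma lower_form (b R δ ε B : ℝ) (hb : 0 < b) (hR : 0 < R) (hδ : 0 < δ) (hε : 0 < ε) (M K : ℕ)
    (η : ℝ → ℝ) (hη : ContDiff ℝ (⊤ : ℕ∞) η) (h0 : ∀ t, 0 ≤ η t) (h1 : ∀ t, η t ≤ 1)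
    (hz : ∀ t, (1 - δ / 2) / 2 ≤ |t| → η t = 0) (hB : ∀ t, |deriv η t| ≤ B)
    (φ φ' : ℕ → ℝ → ℝ) (hφ : ∀ n, ContDiff ℝ (⊤ : ℕ∞) (φ n)) (hd : ∀ n x, HasDerivAt (φ n) (φ' n x) x)
    (hφ' : ∀ n, Continuous (φ' n)) (i1 : ∀ n, Integrable fun x => φ n x ^ 2)
    (i2 : ∀ n, Integrable fun x => φ' n x ^ 2) (i3 : ∀ n, Integrable fun x => (x * φ n x) ^ 2)
    (o1 : ∀ m n, ∫ x, φ m x * φ n x = if m = n then 1 else 0)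
    (o2 : ∀ m n, (∫ x, φ' m x * φ' n x) + b ^ 2 * (∫ x, (x * φ m x) * (x * φ n x)) =
      if m = n then (2 * n + 1) * b else 0) (c : Idx M K → ℂ) :
    qb b (PhiL b R M K η φ c) ≤
      ((1 + ε) * ((2 * K - 1) * b) + (1 + 1 / ε) * (2 * B ^ 2 / R ^ 2)) * ∑ α, ‖c α‖ ^ 2 := by
  have hψ := Sup_contDiff b R φ hφ c
  have hcφ : ∀ n, Continuous (φ n) := fun n => (hφ n).continuous
  have hcx : ∀ n, Continuous (fun x => b * (x * φ n x)) := fun n => by have := hcφ n; fun_prop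
  have ix : ∀ n, Integrable fun x => (b * (x * φ n x)) ^ 2 := by
    intro n; simp_rw [mul_pow b]; exact (i3 n).const_mul _
  set v : ℝ × ℝ → ℂ := fun p => (chi R η p : ℂ) * Sup b R φ c p with hv
  have hvd : ContDiff ℝ (⊤ : ℕ∞) v := (chiC_contDiff R η hη).mul hψ
  have hq : qb b (PhiL b R M K η φ c) = _ := gauge_form b v (hvd.differentiable (by simp))
  have hts : tsupport v ⊆ rectR R R := by
    have := (cut_test 0 R δ hR hδ η hη hz (Sup b R φ c) hψ).2.2
    simpa [gph, ← hv] using this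
  have hzero : ∀ p : ℝ × ℝ, p.2 ∉ Set.Ioc (-R / 2) (R / 2) →
      ‖dX v p‖ ^ 2 + ‖-Complex.I * dY v p + ((b * p.1 : ℝ) : ℂ) * v p‖ ^ 2 = 0 := by
    intro p hp
    have hpt : p ∉ tsupport v := fun h => hp ⟨(hts h).2.1, (hts h).2.2.le⟩
    have a1 : v p = 0 := image_eq_zero_of_notMem_tsupport hpt
    have a2 : fderiv ℝ v p = 0 := fderiv_of_notMem_tsupport ℝ hpt
    simp [dX, dY, a1, a2]
  rw [hq, strip_zero R _ hzero]
  have I1 := Sup_int b R hR φ hcφ i1 c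
  have I2 := Sup_int b R hR φ' hφ' i2 c
  have I3 := Sup_int b R hR _ hcx ix c
  have N1 : ∫ p, ‖Sup b R φ c p‖ ^ 2 ∂(nuR R) = ∑ α, ‖c α‖ ^ 2 := by
    rw [Sup_norm b R hR φ hcφ i1 c]
    simp_rw [o1]
    simpa using diag_sum c (fun _ => 1)
  have N2 : (∫ p, ‖Sup b R φ' c p‖ ^ 2 ∂(nuR R)) + ∫ p, ‖Sup b R (fun n x => b * (x * φ n x)) c p‖ ^ 2 ∂(nuR R)
      = ∑ α : Idx M K, ((2 * ((α.2 : ℕ) : ℝ) + 1) * b) * ‖c α‖ ^ 2 := by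
    rw [Sup_norm b R hR φ' hφ' i2 c, Sup_norm b R hR _ hcx ix c, ← Finset.sum_add_distrib]
    rw [← diag_sum c (fun n => (2 * (n : ℝ) + 1) * b)]
    refine Finset.sum_congr rfl fun α _ => ?_
    rw [← Finset.sum_add_distrib]
    refine Finset.sum_congr rfl fun β _ => ?_
    split_ifs with ha hb'
    · have := o2 α.2 β.2
      rw [if_pos hb'] at this
      rw [← this, ← mul_add, ← integral_const_mul]
      congr 3; ext x; ring
    · have := o2 α.2 β.2
      rw [if_neg hb'] at this
      rw [← this, ← mul_add, ← integral_const_mul]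
      congr 3; ext x; ring
    · simp
  have N3 : ∑ α : Idx M K, ((2 * ((α.2 : ℕ) : ℝ) + 1) * b) * ‖c α‖ ^ 2 ≤ (2 * K - 1) * b * ∑ α, ‖c α‖ ^ 2 := by
    rw [Finset.mul_sum]
    refine Finset.sum_le_sum fun α _ => ?_
    have h2 : ((α.2 : ℕ) : ℝ) + 1 ≤ K := by exact_mod_cast α.2.2
    gcongr
    linarith
  calc _ ≤ ∫ p, ((1 + ε) * (‖Sup b R φ' c p‖ ^ 2 + ‖Sup b R (fun n x => b * (x * φ n x)) c p‖ ^ 2) +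
        (1 + 1 / ε) * (2 * B ^ 2 / R ^ 2) * ‖Sup b R φ c p‖ ^ 2) ∂(nuR R) := by
        refine integral_mono_of_nonneg (ae_of_all _ fun p => by positivity)
          (((I2.add I3).const_mul _).add (I1.const_mul _)) (ae_of_all _ fun p => ?_)
        have := kin_pt b R hR η B ε hε hη h0 h1 hB (Sup b R φ c) (hψ.differentiable (by simp)) p
        rw [Sup_pY b R hb φ hφ, Sup_dX b R φ φ' hφ hd] at this
        exact this
    _ = (1 + ε) * ((∫ p, ‖Sup b R φ' c p‖ ^ 2 ∂(nuR R)) + ∫ p, ‖Sup b R (fun n x => b * (x * φ n x)) c p‖ ^ 2 ∂(nuR R))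
        + (1 + 1 / ε) * (2 * B ^ 2 / R ^ 2) * ∫ p, ‖Sup b R φ c p‖ ^ 2 ∂(nuR R) := by
        rw [integral_add (f := fun p => (1 + ε) * (‖Sup b R φ' c p‖ ^ 2 + ‖Sup b R (fun n x => b * (x * φ n x)) c p‖ ^ 2))
          ((I2.add I3).const_mul _) (I1.const_mul _), integral_const_mul, integral_const_mul,
          integral_add (f := fun p => ‖Sup b R φ' c p‖ ^ 2) I2 I3]
    _ ≤ _ := by
        rw [N1, N2, add_mul ((1 + ε) * ((2 * K - 1) * b)), mul_assoc (1 + ε)]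
        gcongr

lemma lower_norm (b R δ ε : ℝ) (hR : 0 < R) (hδ : 0 < δ) (hδ1 : δ < 1) (hε : 0 < ε) (M K : ℕ)
    (η : ℝ → ℝ) (hη : ContDiff ℝ (⊤ : ℕ∞) η) (h0 : ∀ t, 0 ≤ η t) (h1 : ∀ t, η t ≤ 1)
    (hone : ∀ t, |t| ≤ (1 - δ) / 2 → η t = 1)
    (hz : ∀ t, (1 - δ / 2) / 2 ≤ |t| → η t = 0)
    (hM : ∀ m ∈ Finset.Icc (-(M : ℤ)) M, |2 * π * m / R / b| ≤ (1 - 2 * δ) * R / 2)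
    (φ : ℕ → ℝ → ℝ) (hφ : ∀ n, ContDiff ℝ (⊤ : ℕ∞) (φ n))
    (i1 : ∀ n, Integrable fun x => φ n x ^ 2)
    (i3 : ∀ n, Integrable fun x => (x * φ n x) ^ 2)
    (o1 : ∀ m n, ∫ x, φ m x * φ n x = if m = n then 1 else 0)
    (hX : ∀ n < K, 4 / (δ * R) ^ 2 * ∫ x, (x * φ n x) ^ 2 ≤ δ) :
    ∃ W : Submodule ℂ (Idx M K → ℂ), ((2 * M + 1) * K : ℝ) * (1 - 2 * δ / ε) ≤ Module.finrank ℂ W ∧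
      ∀ c ∈ W, (1 - ε) * ∑ α, ‖c α‖ ^ 2 ≤ ∫ p, ‖PhiL b R M K η φ c p‖ ^ 2 := by
  have hcφ : ∀ n, Continuous (φ n) := fun n => (hφ n).continuous
  have hchi1 : ∀ p, chi R η p ≤ 1 := fun p => mul_le_one₀ (h1 _) (h0 _) (h1 _)
  have hchi0 : ∀ p, 0 ≤ chi R η p := fun p => mul_nonneg (h0 _) (h0 _)
  have hchi : ∀ p, 0 ≤ 1 - chi R η p ^ 2 := by
    intro p
    nlinarith [hchi0 p, hchi1 p]
  have hFi := fun α β : Idx M K => Fw_int b R hR η (φ α.2) (φ β.2) hη.continuous h0 h1 (hcφ _) (hcφ _) (i1 _) (i1 _) α.1 β.1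
  obtain ⟨W, hW1, hW2⟩ := trace_sub _ (gram_psd (nuR R) (fun α : Idx M K => Fw b R η (φ α.2) α.1) hFi) ε hε
  refine ⟨W, ?_, ?_⟩
  · refine le_trans ?_ hW1
    have hcard : (Fintype.card (Idx M K) : ℝ) = (2 * M + 1) * K := by
      rw [Fintype.card_prod, Fintype.card_coe, Int.card_Icc, Fintype.card_fin]
      have : ((M : ℤ) + 1 - -(M : ℤ)).toNat = 2 * M + 1 := by omega
      rw [this]; push_cast; ring
    have htr : (Matrix.trace (Matrix.of fun α β : Idx M K => ∫ p, star (Fw b R η (φ α.2) α.1 p) * Fw b R η (φ β.2) β.1 p ∂(nuR R))).re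
        ≤ (Fintype.card (Idx M K) : ℝ) * (2 * δ) := by
      rw [Matrix.trace, Complex.re_sum]
      calc _ ≤ ∑ α : Idx M K, 2 * δ := Finset.sum_le_sum fun α _ => ?_
        _ = _ := by simp [Finset.sum_const]
      rw [Matrix.diag_apply, Matrix.of_apply]
      have e : ∀ p, star (Fw b R η (φ α.2) α.1 p) * Fw b R η (φ α.2) α.1 p =
          (((1 - chi R η p ^ 2) * ‖Ew b R (φ α.2) α.1 p‖ ^ 2 : ℝ) : ℂ) := by
        intro p
        rw [Fw_prod b R η _ _ h0 h1]
        have := Complex.conj_mul' (Ew b R (φ α.2) α.1 p)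
        rw [Complex.star_def, this]; push_cast; ring
      simp_rw [e]
      rw [integral_complex_ofReal, Complex.ofReal_re]
      have hn : ∫ x, φ α.2 x ^ 2 = 1 := by
        have := o1 α.2 α.2
        simpa [← pow_two] using this
      have := diag_bd b R δ hR hδ hδ1 η h0 h1 hone α.1 (hM _ α.1.2) (φ α.2) (i1 _) (i3 _) hn
      linarith [hX α.2 α.2.2]
    have h3 := div_le_div_of_nonneg_right htr hε.le
    rw [hcard] at *
    have e : ((2 * M + 1) * K : ℝ) * (1 - 2 * δ / ε) = (2 * M + 1) * K - (2 * M + 1) * K * (2 * δ) / ε := by ring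
    rw [e]
    linarith
  · intro c hc
    have hw := hW2 c hc
    rw [gram_norm (nuR R) (fun α : Idx M K => Fw b R η (φ α.2) α.1) hFi c, Complex.ofReal_re] at hw
    have I1 := Sup_int b R hR φ hcφ i1 c
    have I2 := gram_int (nuR R) (fun α : Idx M K => Fw b R η (φ α.2) α.1) hFi c
    have N1 : ∫ p, ‖Sup b R φ c p‖ ^ 2 ∂(nuR R) = ∑ α, ‖c α‖ ^ 2 := by
      rw [Sup_norm b R hR φ hcφ i1 c]
      simp_rw [o1]
      simpa using diag_sum c (fun _ => 1)
    have e1 : ∀ p, ‖PhiL b R M K η φ c p‖ ^ 2 = chi R η p ^ 2 * ‖Sup b R φ c p‖ ^ 2 := by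
      intro p
      change ‖gph b p * ((chi R η p : ℂ) * Sup b R φ c p)‖ ^ 2 = _
      rw [norm_mul, gph_norm, one_mul, norm_mul, Complex.norm_real, mul_pow, norm_eq_abs, sq_abs]
    have e2 : ∀ p, ‖∑ α : Idx M K, c α * Fw b R η (φ α.2) α.1 p‖ ^ 2 = (1 - chi R η p ^ 2) * ‖Sup b R φ c p‖ ^ 2 := by
      intro p
      have : ∑ α : Idx M K, c α * Fw b R η (φ α.2) α.1 p = ((√(1 - chi R η p ^ 2) : ℝ) : ℂ) * Sup b R φ c p := by
        unfold Sup Fw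
        rw [Finset.mul_sum]
        exact Finset.sum_congr rfl fun α _ => by ring
      rw [this, norm_mul, mul_pow, Complex.norm_real, norm_eq_abs, sq_abs, sq_sqrt (hchi p)]
    have hz' : ∀ p : ℝ × ℝ, p.2 ∉ Set.Ioc (-R / 2) (R / 2) → ‖PhiL b R M K η φ c p‖ ^ 2 = 0 := by
      intro p hp
      have hts := (cut_test b R δ hR hδ η hη hz (Sup b R φ c) (Sup_contDiff b R φ hφ c)).2.2
      have hpt : p ∉ tsupport (PhiL b R M K η φ c) := fun h => hp ⟨(hts h).2.1, (hts h).2.2.le⟩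
      rw [image_eq_zero_of_notMem_tsupport hpt]; simp
    rw [strip_zero R _ hz']
    have e3 : ∀ p, ‖PhiL b R M K η φ c p‖ ^ 2 = ‖Sup b R φ c p‖ ^ 2 - ‖∑ α : Idx M K, c α * Fw b R η (φ α.2) α.1 p‖ ^ 2 := by
      intro p; rw [e1, e2]; ring
    simp_rw [e3]
    rw [integral_sub (f := fun p => ‖Sup b R φ c p‖ ^ 2) I1 I2, N1]
    linarith

lemma M_cond (a R : ℝ) (hR : 0 < R) (m : ℤ)
    (hm : m ∉ Finset.Icc (-((⌊R / (2 * π) * a⌋₊ : ℕ) : ℤ)) (⌊R / (2 * π) * a⌋₊ : ℕ)) :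
    a ≤ |2 * π * m / R| := by
  set M := ⌊R / (2 * π) * a⌋₊
  have h1 : R / (2 * π) * a < M + 1 := Nat.lt_floor_add_one _
  have h2 : (M : ℤ) + 1 ≤ |m| := by
    rw [Finset.mem_Icc] at hm
    by_contra h
    apply hm
    have : |m| ≤ M := by omega
    exact abs_le.1 this
  have h3 : (M : ℝ) + 1 ≤ |(m : ℝ)| := by exact_mod_cast h2
  rw [abs_div, abs_mul, abs_of_pos (by positivity : 0 < 2 * π), abs_of_pos hR, le_div_iff₀ hR]
  have h4 : R / (2 * π) * a ≤ |(m : ℝ)| := by linarith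
  calc a * R = (2 * π) * (R / (2 * π) * a) := by field_simp
    _ ≤ _ := by gcongr

lemma count_upper (b lam R : ℝ) (hb : 0 < b) (hlam : 0 < lam) (hR : 0 < R) (K : ℕ)
    (hK : lam ≤ (2 * K + 1) * b) (V : Submodule ℂ (ℝ × ℝ → ℂ))
    (hV : (V : Set (ℝ × ℝ → ℂ)) ⊆ {u | IsTestOn (rectR R R) u})
    (hq : ∀ u ∈ V, u ≠ 0 → qb b u < lam * ∫ p, ‖u p‖ ^ 2) :
    Module.finrank ℂ V ≤ (2 * ⌊R / (2 * π) * (b * R / 2 + √lam)⌋₊ + 1) * K :=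
  upper_dim b lam R hb hlam hR K hK _ (fun m hm => M_cond _ R hR m hm) V hV hq

lemma NNb_upper (b lam R : ℝ) (hb : 0 < b) (hlam : 0 < lam) (hR : 0 < R) (K : ℕ)
    (hK : lam ≤ (2 * K + 1) * b) :
    NNb b lam (rectR R R) ≤ (2 * ⌊R / (2 * π) * (b * R / 2 + √lam)⌋₊ + 1) * K := by
  unfold NNb NN
  refine csSup_le' ?_
  rintro n ⟨V, hV, rfl, hq⟩
  exact count_upper b lam R hb hlam hR K hK V hV hq

lemma NNb_ge (b lam R : ℝ) (hb : 0 < b) (hlam : 0 < lam) (hR : 0 < R) (K : ℕ)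
    (hK : lam ≤ (2 * K + 1) * b) (V : Submodule ℂ (ℝ × ℝ → ℂ))
    (hV : (V : Set (ℝ × ℝ → ℂ)) ⊆ {u | IsTestOn (rectR R R) u})
    (hq : ∀ u ∈ V, u ≠ 0 → qb b u < lam * ∫ p, ‖u p‖ ^ 2) :
    Module.finrank ℂ V ≤ NNb b lam (rectR R R) := by
  unfold NNb NN
  refine le_csSup ⟨(2 * ⌊R / (2 * π) * (b * R / 2 + √lam)⌋₊ + 1) * K, ?_⟩ ⟨V, hV, rfl, hq⟩
  rintro n ⟨V, hV, rfl, hq⟩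
  exact count_upper b lam R hb hlam hR K hK V hV hq

lemma NNb_lower (b lam ε : ℝ) (hb : 0 < b) (hlam : 0 < lam) (hε : 0 < ε) (hε1 : ε < 1) (K : ℕ)
    (hK : lam ≤ (2 * K + 1) * b)
    (hKε : (1 + ε) * ((2 * K - 1) * b) < lam * (1 - ε)) :
    ∀ᶠ R : ℝ in atTop, ∀ M : ℕ, 2 * π * M / R / b ≤ (1 - 2 * ε ^ 2) * R / 2 →
      ((2 * M + 1) * K : ℝ) * (1 - 2 * ε) ≤ NNb b lam (rectR R R) := by
  obtain ⟨φ, φ', hφ, hd, hφ', i1, i2, i3, o1, o2⟩ := osc_basis b hb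
  have hδ : 0 < ε ^ 2 := by positivity
  have hδ1 : ε ^ 2 < 1 := by nlinarith
  obtain ⟨η, B, hη, h0, h1, hone, hz, hB0, hB⟩ := cutoff (ε ^ 2) hδ hδ1
  have tz : ∀ a : ℝ, Tendsto (fun R : ℝ => a / R ^ 2) atTop (nhds 0) := fun a =>
    tendsto_const_nhds.div_atTop (tendsto_pow_atTop (by norm_num))
  have E1 : ∀ᶠ R : ℝ in atTop, ∀ n ∈ Finset.range K, 4 * (∫ x, (x * φ n x) ^ 2) / (ε ^ 2) ^ 2 / R ^ 2 < ε ^ 2 := by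
    rw [Filter.eventually_all_finset]
    intro n _
    exact (tz _).eventually_lt_const hδ
  have E2 : ∀ᶠ R : ℝ in atTop, ((1 + 1 / ε) * (2 * B ^ 2)) / R ^ 2 < lam * (1 - ε) - (1 + ε) * ((2 * K - 1) * b) :=
    (tz _).eventually_lt_const (by linarith)
  filter_upwards [E1, E2, eventually_gt_atTop 0] with R hE1 hE2 hR M hM
  have hMm : ∀ m ∈ Finset.Icc (-(M : ℤ)) M, |2 * π * m / R / b| ≤ (1 - 2 * ε ^ 2) * R / 2 := by
    intro m hm
    refine le_trans ?_ hM
    have : |(m : ℝ)| ≤ M := by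
      rw [Finset.mem_Icc] at hm
      exact_mod_cast abs_le.2 hm
    rw [abs_div, abs_div, abs_mul, abs_of_pos (by positivity : 0 < 2 * π), abs_of_pos hR, abs_of_pos hb]
    gcongr
  have hX : ∀ n < K, 4 / (ε ^ 2 * R) ^ 2 * ∫ x, (x * φ n x) ^ 2 ≤ ε ^ 2 := by
    intro n hn
    have := hE1 n (Finset.mem_range.2 hn)
    refine le_trans (le_of_eq ?_) this.le
    field_simp
  obtain ⟨W, hW1, hW2⟩ := lower_norm b R (ε ^ 2) ε hR hδ hδ1 hε M K η hη h0 h1 hone hz hMm φ hφ i1 i3 o1 hX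
  set Φ := PhiL b R M K η φ with hΦ
  have hpos : ∀ c ∈ W, c ≠ 0 → 0 < ∑ α, ‖c α‖ ^ 2 := by
    intro c _ hc
    obtain ⟨α, hα⟩ := Function.ne_iff.1 hc
    refine Finset.sum_pos' (fun _ _ => by positivity) ⟨α, Finset.mem_univ _, ?_⟩
    have : 0 < ‖c α‖ := norm_pos_iff.2 hα
    positivity
  have hinj : Function.Injective (Φ.domRestrict W) := by
    rw [← LinearMap.ker_eq_bot, LinearMap.ker_eq_bot']
    rintro ⟨c, hc⟩ h
    have h' : Φ c = 0 := h
    by_contra hne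
    have hne' : c ≠ 0 := fun h => hne (Subtype.ext h)
    have := hW2 c hc
    rw [h'] at this
    simp only [Pi.zero_apply, norm_zero, ne_eq, OfNat.ofNat_ne_zero, not_false_eq_true, zero_pow, integral_zero] at this
    have := mul_pos (sub_pos.2 hε1) (hpos c hc hne')
    linarith
  have hfr := LinearMap.finrank_range_of_inj hinj
  have := NNb_ge b lam R hb hlam hR K hK (LinearMap.range (Φ.domRestrict W)) ?_ ?_
  · rw [hfr] at this
    have h3 : (Module.finrank ℂ W : ℝ) ≤ NNb b lam (rectR R R) := by exact_mod_cast this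
    refine le_trans (le_of_eq ?_) (hW1.trans h3)
    congr 2
    field_simp
  · rintro u ⟨⟨c, hc⟩, rfl⟩
    exact cut_test b R (ε ^ 2) hR hδ η hη hz (Sup b R φ c) (Sup_contDiff b R φ hφ c)
  · rintro u ⟨⟨c, hc⟩, rfl⟩ hu
    have hc0 : c ≠ 0 := by
      rintro rfl
      apply hu
      exact map_zero Φ
    have hS := hpos c hc hc0
    have q1 := lower_form b R (ε ^ 2) ε B hb hR hδ hε M K η hη h0 h1 hz hB φ φ' hφ hd hφ' i1 i2 i3 o1 o2 c
    have q2 := hW2 c hc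
    change qb b (Φ c) < lam * ∫ p, ‖Φ c p‖ ^ 2
    calc _ ≤ _ := q1
      _ < lam * (1 - ε) * ∑ α, ‖c α‖ ^ 2 := by
        refine mul_lt_mul_of_pos_right ?_ hS
        rw [← mul_div_assoc]; linarith
      _ ≤ _ := by
        rw [mul_assoc]
        exact mul_le_mul_of_nonneg_left q2 hlam.le

lemma lc_iff (b lam : ℝ) (hb : 0 < b) (n : ℕ) : (2 * (n : ℝ) + 1) * b < lam ↔ n < landauCount b lam := by
  have key : ∀ n : ℕ, (2 * (n : ℝ) + 1) * b < lam ↔ n < ⌈(lam / b - 1) / 2⌉₊ := by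
    intro n
    rw [Nat.lt_ceil, ← lt_div_iff₀ hb]
    constructor <;> intro h <;> linarith
  have : landauCount b lam = ⌈(lam / b - 1) / 2⌉₊ := by
    unfold landauCount
    have : {n : ℕ | (2 * (n : ℝ) + 1) * b < lam} = Set.Iio ⌈(lam / b - 1) / 2⌉₊ := by
      ext n; exact key n
    rw [this]; simp
  rw [this]; exact key n

/-- Colin de Verdière's formula for the density of states of the
constant-field Landau Hamiltonian on ℝ². -/
theorem landau_density_of_states (b lam : ℝ) (hb : 0 < b) (hlam : 0 < lam) :
    Tendsto (fun R : ℝ => (NNb b lam (rectR R R) : ℝ) / R ^ 2) atTop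
      (nhds ((b / (2 * π)) * (landauCount b lam : ℝ))) := by
  have hiff := lc_iff b lam hb
  set K := landauCount b lam with hKdef
  have hK : lam ≤ (2 * K + 1) * b := not_lt.1 fun h => lt_irrefl _ ((hiff K).1 h)
  have tz : ∀ a : ℝ, Tendsto (fun R : ℝ => a / R ^ 2) atTop (nhds 0) := fun a =>
    tendsto_const_nhds.div_atTop (tendsto_pow_atTop (by norm_num))
  have tz1 : ∀ a : ℝ, Tendsto (fun R : ℝ => a / R) atTop (nhds 0) := fun a =>
    tendsto_const_nhds.div_atTop tendsto_id
  have hup : ∀ᶠ R : ℝ in atTop, (NNb b lam (rectR R R) : ℝ) / R ^ 2 ≤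
      b / (2 * π) * K + (√lam / π * K) / R + K / R ^ 2 := by
    filter_upwards [eventually_gt_atTop 0] with R hR
    have h1 := NNb_upper b lam R hb hlam hR K hK
    have h2 : (NNb b lam (rectR R R) : ℝ) ≤ (2 * (⌊R / (2 * π) * (b * R / 2 + √lam)⌋₊ : ℝ) + 1) * K := by
      exact_mod_cast h1
    have h3 : (⌊R / (2 * π) * (b * R / 2 + √lam)⌋₊ : ℝ) ≤ R / (2 * π) * (b * R / 2 + √lam) :=
      Nat.floor_le (by positivity)
    rw [div_le_iff₀ (by positivity)]
    calc _ ≤ _ := h2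
      _ ≤ (2 * (R / (2 * π) * (b * R / 2 + √lam)) + 1) * K := by gcongr
      _ = _ := by field_simp
  have tup : Tendsto (fun R : ℝ => b / (2 * π) * K + (√lam / π * K) / R + K / R ^ 2) atTop
      (nhds (b / (2 * π) * K)) := by
    have := (tendsto_const_nhds (x := b / (2 * π) * (K : ℝ))).add (tz1 (√lam / π * K)) |>.add (tz K)
    simpa using this
  rw [tendsto_order]
  refine ⟨fun a ha => ?_, fun a ha => ?_⟩
  · rcases Nat.eq_zero_or_pos K with h | h
    · rw [h] at ha
      filter_upwards with R
      refine lt_of_lt_of_le ha ?_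
      simp only [Nat.cast_zero, mul_zero]
      positivity
    · have hlt : (2 * (K : ℝ) - 1) * b < lam := by
        have := (hiff (K - 1)).2 (by omega)
        rw [Nat.cast_sub h] at this
        push_cast at this
        linarith
      have c1 : ∀ᶠ ε : ℝ in nhds 0, a < (1 - 2 * ε) * K * ((1 - 2 * ε ^ 2) * b / (2 * π)) := by
        have : Tendsto (fun ε : ℝ => (1 - 2 * ε) * K * ((1 - 2 * ε ^ 2) * b / (2 * π))) (nhds 0)
            (nhds ((1 - 2 * 0) * K * ((1 - 2 * 0 ^ 2) * b / (2 * π)))) :=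
          Continuous.tendsto (by fun_prop) _
        refine this.eventually_const_lt ?_
        convert ha using 1
        ring
      have c2 : ∀ᶠ ε : ℝ in nhds 0, (1 + ε) * ((2 * K - 1) * b) - lam * (1 - ε) < 0 := by
        have : Tendsto (fun ε : ℝ => (1 + ε) * ((2 * K - 1) * b) - lam * (1 - ε)) (nhds 0)
            (nhds ((1 + 0) * ((2 * K - 1) * b) - lam * (1 - 0))) :=
          Continuous.tendsto (by fun_prop) _
        refine this.eventually_lt_const ?_
        linarith
      have c3 : ∀ᶠ ε : ℝ in nhds 0, ε < 1 / 2 := eventually_lt_nhds (by norm_num)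
      obtain ⟨ε, ⟨⟨h1, h2⟩, h3⟩, hε⟩ :=
        (((c1.and c2).and c3).filter_mono (nhdsWithin_le_nhds (s := Set.Ioi 0)) |>.and self_mem_nhdsWithin).exists
      have hε : 0 < ε := hε
      have hl := NNb_lower b lam ε hb hlam hε (by linarith) K hK (by linarith)
      have t2 : Tendsto (fun R : ℝ => (1 - 2 * ε) * K * ((1 - 2 * ε ^ 2) * b / (2 * π) - 1 / R ^ 2)) atTop
          (nhds ((1 - 2 * ε) * K * ((1 - 2 * ε ^ 2) * b / (2 * π) - 0))) :=
        (tendsto_const_nhds.sub (tz 1)).const_mul _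
      rw [sub_zero] at t2
      filter_upwards [hl, t2.eventually_const_lt h1, eventually_gt_atTop 0] with R hlR haR hR
      have hpos : 0 ≤ (1 - 2 * ε ^ 2) * R / 2 * b * R / (2 * π) := by
        have : 0 ≤ 1 - 2 * ε ^ 2 := by nlinarith
        positivity
      have hM := hlR ⌊(1 - 2 * ε ^ 2) * R / 2 * b * R / (2 * π)⌋₊ ?_
      · have hf : (1 - 2 * ε ^ 2) * R / 2 * b * R / (2 * π) < ⌊(1 - 2 * ε ^ 2) * R / 2 * b * R / (2 * π)⌋₊ + 1 :=
          Nat.lt_floor_add_one _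
        refine lt_of_lt_of_le haR ?_
        rw [le_div_iff₀ (by positivity)]
        refine le_trans ?_ hM
        have e : (1 - 2 * ε) * K * ((1 - 2 * ε ^ 2) * b / (2 * π) - 1 / R ^ 2) * R ^ 2 =
            ((2 * ((1 - 2 * ε ^ 2) * R / 2 * b * R / (2 * π)) - 1) * K) * (1 - 2 * ε) := by
          field_simp
        rw [e]
        have h4 : 0 ≤ 1 - 2 * ε := by linarith
        gcongr
        linarith
      · have hf := Nat.floor_le hpos
        rw [div_div, div_le_iff₀ (by positivity)]
        calc _ ≤ 2 * π * ((1 - 2 * ε ^ 2) * R / 2 * b * R / (2 * π)) := by gcongr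
          _ = _ := by field_simp
  · filter_upwards [hup, tup.eventually_lt_const ha] with R h1 h2
    exact lt_of_le_of_lt h1 h2
end
end

section
/- Let b > 0, let Ω_R = (-R₁/2, R₁/2) × (-R₂/2, R₂/2) with R₁, R₂ > 0, and let λ > 1. Then N(λ; q_b, Ω_R) ≤ (b |Ω_R| / 2π) · #{ n ∈ ℕ : (2n+1)b < λ }. -/
open MeasureTheory Real Filter

noncomputable section

lemma int_deriv_zero {F F' : ℝ → ℝ} (h : ∀ x, HasDerivAt F (F' x) x) (hc : Continuous F')
    (hs : HasCompactSupport F) : ∫ x, F' x = 0 := by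
  have hF : Continuous F := continuous_iff_continuousAt.2 fun x => (h x).continuousAt
  have e : F' = deriv F := by ext x; exact (h x).deriv.symm
  have hs' : HasCompactSupport F' := by rw [e]; exact hs.deriv
  exact integral_eq_zero_of_hasDerivAt_of_integrable h
    (hc.integrable_of_hasCompactSupport hs') (hF.integrable_of_hasCompactSupport hs)

/-- compactly supported C¹ function together with its derivative -/
structure C1c (w w' : ℝ → ℝ) : Prop where
  der : ∀ x, HasDerivAt w (w' x) x
  cont' : Continuous w'
  supp : HasCompactSupport w

lemma C1c.cont {w w' : ℝ → ℝ} (h : C1c w w') : Continuous w :=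
  continuous_iff_continuousAt.2 fun x => (h.der x).continuousAt

lemma C1c.supp' {w w' : ℝ → ℝ} (h : C1c w w') : HasCompactSupport w' := by
  have e : w' = deriv w := by ext x; exact (h.der x).deriv.symm
  rw [e]; exact h.supp.deriv

lemma C1c.integ {w w' : ℝ → ℝ} (h : C1c w w') {g : ℝ → ℝ} (hg : Continuous g) :
    Integrable (fun x => w x * g x) :=
  (h.cont.mul hg).integrable_of_hasCompactSupport h.supp.mul_right

lemma C1c.integ' {w w' : ℝ → ℝ} (h : C1c w w') {g : ℝ → ℝ} (hg : Continuous g) :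
    Integrable (fun x => w' x * g x) :=
  (h.cont'.mul hg).integrable_of_hasCompactSupport h.supp'.mul_right

/-- integration by parts -/
lemma C1c.ibp {w w' : ℝ → ℝ} (h : C1c w w') {g g' : ℝ → ℝ} (hg : ∀ x, HasDerivAt g (g' x) x)
    (hg' : Continuous g') : ∫ x, w' x * g x = - ∫ x, w x * g' x := by
  have hgc : Continuous g := continuous_iff_continuousAt.2 fun x => (hg x).continuousAt
  have := int_deriv_zero (F := fun x => w x * g x) (F' := fun x => w' x * g x + w x * g' x)
    (fun x => (h.der x).mul (hg x)) ((h.cont'.mul hgc).add (h.cont.mul hg')) h.supp.mul_right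
  rw [integral_add (h.integ' hgc) (h.integ hg')] at this
  linarith

lemma C1c.cross {w w' : ℝ → ℝ} (h : C1c w w') (b s : ℝ) :
    ∫ x, w' x * (b * (x - s) * w x) = - (b / 2) * ∫ x, w x ^ 2 := by
  have h1 := h.ibp (g := fun x => b * (x - s) * w x)
    (g' := fun x => b * w x + b * (x - s) * w' x)
    (fun x => by
      have := (((hasDerivAt_id x).sub_const s).const_mul b).mul (h.der x)
      exact HasDerivAt.congr_deriv this (by simp))
    (by have := h.cont; have := h.cont'; fun_prop)
  have e : ∫ x, w x * (b * w x + b * (x - s) * w' x)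
      = (∫ x, w' x * (b * (x - s) * w x)) + b * ∫ x, w x ^ 2 := by
    have hc := h.cont
    rw [← integral_const_mul, ← integral_add (h.integ' (by fun_prop))]
    · congr 1; ext x; ring
    · have := h.integ (g := fun x => b * w x) (by fun_prop)
      refine this.congr (Eventually.of_forall fun x => ?_)
      simp only; ring
  rw [e] at h1
  linarith

lemma C1c.sqint {w w' : ℝ → ℝ} (h : C1c w w') : Integrable (fun x => w x ^ 2) := by
  simpa [sq] using h.integ h.cont

lemma C1c.hosc_int {w w' : ℝ → ℝ} (h : C1c w w') (b s : ℝ) :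
    Integrable (fun x => w' x ^ 2 + (b * (x - s)) ^ 2 * w x ^ 2) := by
  have hc := h.cont
  have := (h.integ' h.cont').add (h.integ (g := fun x => (b * (x - s)) ^ 2 * w x) (by fun_prop))
  refine this.congr (Eventually.of_forall fun x => ?_)
  simp only [Pi.add_apply]; ring

lemma C1c.sq_a {w w' : ℝ → ℝ} (h : C1c w w') (b s : ℝ) (t : ℝ) (ht : t ^ 2 = 1) :
    ∫ x, (t * w' x + b * (x - s) * w x) ^ 2 =
      (∫ x, (w' x ^ 2 + (b * (x - s)) ^ 2 * w x ^ 2)) - t * b * ∫ x, w x ^ 2 := by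
  have hc := h.cont
  have e : ∀ x, (t * w' x + b * (x - s) * w x) ^ 2 =
      (w' x ^ 2 + (b * (x - s)) ^ 2 * w x ^ 2) + (2 * t) * (w' x * (b * (x - s) * w x)) := by
    intro x
    linear_combination (w' x)^2 * ht
  simp_rw [e]
  rw [integral_add (h.hosc_int b s) ((h.integ' (by fun_prop)).const_mul _),
    integral_const_mul, h.cross]
  ring

/-- Gaussian -/
def gau (b s x : ℝ) : ℝ := exp (-(b * (x - s) ^ 2 / 2))

lemma gau_pos (b s x : ℝ) : 0 < gau b s x := exp_pos _

lemma gau_der (b s x : ℝ) : HasDerivAt (gau b s) (-(b * (x - s)) * gau b s x) x := by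
  have h1 : HasDerivAt (fun x : ℝ => -(b * (x - s) ^ 2 / 2)) (-(b * (x - s))) x := by
    have := (((((hasDerivAt_id x).sub_const s).pow 2).const_mul b).div_const 2).neg
    exact HasDerivAt.congr_deriv this (by simp; ring)
  exact HasDerivAt.congr_deriv h1.exp (by unfold gau; ring)

lemma gau_cont (b s : ℝ) : Continuous (gau b s) := by unfold gau; fun_prop

/-- test functions: `Phi k` solves `Φ' + b (x-s) Φ = Φ_{k-1}` -/
def Phi (b s : ℝ) : ℕ → ℝ → ℝ
  | 0 => gau b s
  | k + 1 => fun x => gau b s x * ∫ t in (0 : ℝ)..x, (gau b s t)⁻¹ * Phi b s k t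

lemma Phi_cont (b s : ℝ) (k : ℕ) : Continuous (Phi b s k) := by
  induction k with
  | zero => exact gau_cont b s
  | succ k ih =>
    have hc : Continuous fun t => (gau b s t)⁻¹ * Phi b s k t :=
      ((gau_cont b s).inv₀ fun x => (gau_pos b s x).ne').mul ih
    have : Continuous fun x => ∫ t in (0 : ℝ)..x, (gau b s t)⁻¹ * Phi b s k t :=
      intervalIntegral.continuous_primitive (fun a b => hc.intervalIntegrable a b) 0
    exact (gau_cont b s).mul this

lemma Phi_der (b s : ℝ) (k : ℕ) (x : ℝ) :
    HasDerivAt (Phi b s (k + 1)) (Phi b s k x - b * (x - s) * Phi b s (k + 1) x) x := by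
  have hc : Continuous fun t => (gau b s t)⁻¹ * Phi b s k t :=
      ((gau_cont b s).inv₀ fun x => (gau_pos b s x).ne').mul (Phi_cont b s k)
  have h1 := intervalIntegral.integral_hasDerivAt_right (hc.intervalIntegrable 0 x)
    hc.stronglyMeasurable.stronglyMeasurableAtFilter hc.continuousAt
  have := (gau_der b s x).mul h1
  have hx := (gau_pos b s x).ne'
  refine HasDerivAt.congr_deriv this ?_
  simp only [Phi]
  field_simp
  ring

/-- solve `-f' + b (x-s) f = w`. -/
lemma exists_f {w w' : ℝ → ℝ} (h : C1c w w') (b s : ℝ) (h0 : ∫ x, Phi b s 0 x * w x = 0) :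
    ∃ f : ℝ → ℝ, C1c f (fun x => b * (x - s) * f x - w x) := by
  obtain ⟨A₀, hA₀⟩ := h.supp.isCompact.isBounded.subset_closedBall 0
  obtain ⟨A, hApos, hA⟩ : ∃ A : ℝ, 0 < A ∧ A₀ < A := ⟨max A₀ 0 + 1, by positivity,
    by linarith [le_max_left A₀ 0]⟩
  have hz : ∀ x, A ≤ |x| → w x = 0 := by
    intro x hx
    by_contra hne
    have := hA₀ (subset_tsupport _ hne)
    simp at this
    linarith
  have hc : Continuous fun t => gau b s t * w t := (gau_cont b s).mul h.cont
  have hi : Integrable fun t => gau b s t * w t :=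
    hc.integrable_of_hasCompactSupport h.supp.mul_left
  set J : ℝ → ℝ := fun x => ∫ t in (-A)..x, gau b s t * w t with hJ
  have hJd : ∀ x, HasDerivAt J (gau b s x * w x) x := fun x =>
    intervalIntegral.integral_hasDerivAt_right (hc.intervalIntegrable _ x)
      hc.stronglyMeasurable.stronglyMeasurableAtFilter hc.continuousAt
  have hlow : ∀ x, x < - A → J x = 0 := by
    intro x hx
    simp only [hJ]
    rw [intervalIntegral.integral_congr (g := fun _ => (0:ℝ))]
    · simp
    · intro t ht
      rw [Set.uIcc_of_ge hx.le] at ht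
      simp only
      rw [hz t (by rw [abs_of_nonpos (by linarith [ht.2])]; linarith [ht.2]), mul_zero]
  have hhigh : ∀ x, A < x → J x = 0 := by
    intro x hx
    simp only [hJ]
    rw [intervalIntegral.integral_eq_integral_of_support_subset]
    · exact h0
    · intro t ht
      have h1 : |t| < A := by
        by_contra h2
        exact ht (by simp [hz t (not_lt.1 h2)])
      rw [abs_lt] at h1
      exact ⟨h1.1, by linarith⟩
  refine ⟨fun x => -(gau b s x)⁻¹ * J x, ?_, ?_, ?_⟩
  · intro x
    have hx := (gau_pos b s x).ne'
    have := (((gau_der b s x).inv hx).neg).mul (hJd x)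
    refine HasDerivAt.congr_deriv this ?_
    simp only [Pi.neg_apply, Pi.inv_apply]
    field_simp
    ring
  · have : Continuous J := continuous_iff_continuousAt.2 fun x => (hJd x).continuousAt
    have h3 : Continuous fun x => (gau b s x)⁻¹ := (gau_cont b s).inv₀ fun x => (gau_pos b s x).ne'
    have := h.cont
    fun_prop
  · refine HasCompactSupport.intro (isCompact_closedBall (0:ℝ) A) fun x hx => ?_
    simp at hx
    rcases lt_abs.1 hx with h1 | h1
    · simp [hhigh x h1]
    · simp [hlow x (by linarith)]

lemma osc_aux (b s : ℝ) (hb : 0 < b) (n : ℕ) : ∀ (w w' : ℝ → ℝ), C1c w w' →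
    (∀ k < n, ∫ x, Phi b s k x * w x = 0) →
    2 * n * b * ∫ x, w x ^ 2 ≤ ∫ x, (1 * w' x + b * (x - s) * w x) ^ 2 := by
  induction n with
  | zero =>
    intro w w' h _
    simp
    exact integral_nonneg fun x => by positivity
  | succ n ih =>
    intro w w' h ho
    obtain ⟨f, hf⟩ := exists_f h b s (ho 0 (by omega))
    have hfc := hf.cont
    have hwc := h.cont
    have hwc' := h.cont'
    have ho' : ∀ k < n, ∫ x, Phi b s k x * f x = 0 := by
      intro k hk
      have h1 := ho (k + 1) (by omega)
      have hP := Phi_cont b s (k+1)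
      have hP0 := Phi_cont b s k
      have h2 := hf.ibp (Phi_der b s k) (by fun_prop)
      have h3 : ∫ x, (b * (x - s) * f x - w x) * Phi b s (k+1) x =
          (∫ x, f x * (b * (x - s) * Phi b s (k+1) x)) - ∫ x, Phi b s (k+1) x * w x := by
        rw [← integral_sub (hf.integ (by fun_prop))]
        · congr 1; ext x; ring
        · simpa [mul_comm] using h.integ hP
      have h4 : ∫ x, f x * (Phi b s k x - b * (x - s) * Phi b s (k+1) x) =
          (∫ x, Phi b s k x * f x) - ∫ x, f x * (b * (x - s) * Phi b s (k+1) x) := by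
        rw [← integral_sub _ (hf.integ (by fun_prop))]
        · congr 1; ext x; ring
        · simpa [mul_comm] using hf.integ hP0
      rw [h3, h4, h1] at h2
      linarith
    have hI := ih f _ hf ho'
    have e1 := hf.sq_a b s 1 (by norm_num)
    have e2 := hf.sq_a b s (-1) (by norm_num)
    have e3 : ∫ x, (-1 * (b * (x - s) * f x - w x) + b * (x - s) * f x) ^ 2 = ∫ x, w x ^ 2 := by
      congr 1; ext x; ring
    rw [e3] at e2
    have hcw : 2 * (n + 1 : ℝ) * b * ∫ x, f x ^ 2 ≤ ∫ x, w x ^ 2 := by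
      rw [e1] at hI
      linarith
    set aw : ℝ → ℝ := fun x => 1 * w' x + b * (x - s) * w x with haw
    -- ∫ w² = ∫ aw f
    have e4 : ∫ x, f x * aw x = ∫ x, w x ^ 2 := by
      have h2 := h.ibp hf.der hf.cont'
      have h3 : ∫ x, w x * (b * (x - s) * f x - w x) =
          (∫ x, w x * (b * (x - s) * f x)) - ∫ x, w x ^ 2 := by
        rw [← integral_sub (h.integ (by fun_prop)) h.sqint]
        congr 1; ext x; ring
      have h4 : ∫ x, f x * aw x = (∫ x, w' x * f x) + ∫ x, w x * (b * (x - s) * f x) := by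
        rw [← integral_add (h.integ' hfc) (h.integ (by fun_prop))]
        congr 1; ext x; simp only [haw]; ring
      rw [h3] at h2
      linarith
    set c : ℝ := 2 * (n + 1 : ℝ) * b with hcdef
    have hc0 : 0 ≤ c := by positivity
    have hawi : Integrable fun x => aw x ^ 2 := by
      have := (h.integ' (g := fun x => aw x) (by fun_prop)).add
        (h.integ (g := fun x => b * (x - s) * aw x) (by fun_prop))
      refine this.congr (Eventually.of_forall fun x => ?_)
      simp only [haw, Pi.add_apply]; ring
    have e5 : ∫ x, (aw x - c * f x) ^ 2 =
        (∫ x, aw x ^ 2) - 2 * c * (∫ x, f x * aw x) + c ^ 2 * ∫ x, f x ^ 2 := by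
      have i1 : Integrable fun x => f x * aw x := hf.integ (by fun_prop)
      rw [← integral_const_mul, ← integral_const_mul, ← integral_sub hawi (i1.const_mul _),
        ← integral_add (f := fun x => aw x ^ 2 - 2 * c * (f x * aw x))
          (hawi.sub (i1.const_mul _)) (hf.sqint.const_mul _)]
      congr 1; ext x; ring
    have e6 : 0 ≤ ∫ x, (aw x - c * f x) ^ 2 := integral_nonneg fun x => by positivity
    push_cast
    rw [e5, e4] at e6
    have := mul_le_mul_of_nonneg_left hcw hc0
    nlinarith

lemma osc (b s : ℝ) (hb : 0 < b) (n : ℕ) {w w' : ℝ → ℝ} (h : C1c w w')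
    (ho : ∀ k < n, ∫ x, Phi b s k x * w x = 0) :
    (2 * n + 1) * b * ∫ x, w x ^ 2 ≤ ∫ x, (w' x ^ 2 + (b * (x - s)) ^ 2 * w x ^ 2) := by
  have h1 := osc_aux b s hb n w w' h ho
  rw [h.sq_a b s 1 (by norm_num)] at h1
  linarith


lemma oscC_int {c c' : ℝ → ℂ} (hd : ∀ x, HasDerivAt c (c' x) x)
    (hc' : Continuous c') (hs : HasCompactSupport c) (b s : ℝ) :
    Integrable (fun x => ‖c' x‖ ^ 2 + (b * (x - s)) ^ 2 * ‖c x‖ ^ 2) ∧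
    Integrable (fun x => ‖c x‖ ^ 2) := by
  have hc : Continuous c := continuous_iff_continuousAt.2 fun x => (hd x).continuousAt
  have e : c' = deriv c := by ext x; exact (hd x).deriv.symm
  have hs' : HasCompactSupport c' := by rw [e]; exact hs.deriv
  have h2 : HasCompactSupport fun x => ‖c x‖ ^ 2 := hs.norm.comp_left (g := fun t : ℝ => t ^ 2) (by simp)
  have h3 : HasCompactSupport fun x => ‖c' x‖ ^ 2 := hs'.norm.comp_left (g := fun t : ℝ => t ^ 2) (by simp)
  refine ⟨Integrable.add (Continuous.integrable_of_hasCompactSupport (by fun_prop) h3)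
    (Continuous.integrable_of_hasCompactSupport (by fun_prop) (h2.mul_left)),
    Continuous.integrable_of_hasCompactSupport (by fun_prop) h2⟩

lemma oscC (b s : ℝ) (hb : 0 < b) (n : ℕ) {c c' : ℝ → ℂ} (hd : ∀ x, HasDerivAt c (c' x) x)
    (hc' : Continuous c') (hs : HasCompactSupport c)
    (ho : ∀ k < n, ∫ x, (Phi b s k x : ℂ) * c x = 0) :
    (2 * n + 1) * b * ∫ x, ‖c x‖ ^ 2 ≤ ∫ x, (‖c' x‖ ^ 2 + (b * (x - s)) ^ 2 * ‖c x‖ ^ 2) := by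
  have hc : Continuous c := continuous_iff_continuousAt.2 fun x => (hd x).continuousAt
  have hre : C1c (fun x => (c x).re) (fun x => (c' x).re) :=
    ⟨fun x => Complex.reCLM.hasFDerivAt.comp_hasDerivAt x (hd x), by fun_prop, hs.comp_left (g := Complex.re) rfl⟩
  have him : C1c (fun x => (c x).im) (fun x => (c' x).im) :=
    ⟨fun x => Complex.imCLM.hasFDerivAt.comp_hasDerivAt x (hd x), by fun_prop, hs.comp_left (g := Complex.im) rfl⟩
  have hint : ∀ k, Integrable fun x => (Phi b s k x : ℂ) * c x := fun k =>
    Continuous.integrable_of_hasCompactSupport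
      ((Complex.continuous_ofReal.comp (Phi_cont b s k)).mul hc) hs.mul_left
  have o1 : ∀ k < n, ∫ x, Phi b s k x * (c x).re = 0 := by
    intro k hk
    have := Complex.reCLM.integral_comp_comm (hint k)
    rw [ho k hk] at this
    simpa using this
  have o2 : ∀ k < n, ∫ x, Phi b s k x * (c x).im = 0 := by
    intro k hk
    have := Complex.imCLM.integral_comp_comm (hint k)
    rw [ho k hk] at this
    simpa using this
  have i1 := osc b s hb n hre o1
  have i2 := osc b s hb n him o2
  have hn : ∀ z : ℂ, ‖z‖ ^ 2 = z.re ^ 2 + z.im ^ 2 := by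
    intro z; rw [Complex.sq_norm, Complex.normSq_apply]; ring
  have e1 : ∫ x, ‖c x‖ ^ 2 = (∫ x, (c x).re ^ 2) + ∫ x, (c x).im ^ 2 := by
    rw [← integral_add hre.sqint him.sqint]; simp_rw [hn]
  have e2 : ∫ x, (‖c' x‖ ^ 2 + (b * (x - s)) ^ 2 * ‖c x‖ ^ 2) =
      (∫ x, ((c' x).re ^ 2 + (b * (x - s)) ^ 2 * (c x).re ^ 2)) +
      ∫ x, ((c' x).im ^ 2 + (b * (x - s)) ^ 2 * (c x).im ^ 2) := by
    rw [← integral_add (hre.hosc_int b s) (him.hosc_int b s)]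
    congr 1; ext x; rw [hn, hn]; ring
  rw [e1, e2]; linarith

lemma oscC_far (b s lam : ℝ) {c c' : ℝ → ℂ} (hd : ∀ x, HasDerivAt c (c' x) x)
    (hc' : Continuous c') (hs : HasCompactSupport c)
    (ho : ∀ x, c x ≠ 0 → lam ≤ (b * (x - s)) ^ 2) :
    lam * ∫ x, ‖c x‖ ^ 2 ≤ ∫ x, (‖c' x‖ ^ 2 + (b * (x - s)) ^ 2 * ‖c x‖ ^ 2) := by
  obtain ⟨h1, h2⟩ := oscC_int hd hc' hs b s
  rw [← integral_const_mul]
  refine integral_mono (h2.const_mul _) h1 fun x => ?_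
  simp only
  by_cases hx : c x = 0
  · simp [hx]
  · have := mul_le_mul_of_nonneg_right (ho x hx) (sq_nonneg ‖c x‖)
    have := sq_nonneg ‖c' x‖
    linarith

/-- partial Fourier coefficient in `y` -/
def FC (T : ℝ) (k : ℤ) (g : ℝ × ℝ → ℂ) (x : ℝ) : ℂ :=
  ∫ y in (-T / 2)..(T / 2), Complex.exp (-((2 * π * k / T * y : ℝ) : ℂ) * Complex.I) * g (x, y)

lemma FC_cont (T : ℝ) (k : ℤ) {g : ℝ × ℝ → ℂ} (hg : Continuous g) : Continuous (FC T k g) := by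
  unfold FC
  apply intervalIntegral.continuous_parametric_intervalIntegral_of_continuous'
  simp only [Function.uncurry_def]
  fun_prop

lemma FC_parseval_pt {T : ℝ} (hT : 0 < T) {g : ℝ × ℝ → ℂ} (hg : Continuous g)
    (hz : ∀ p : ℝ × ℝ, T / 2 ≤ |p.2| → g p = 0) (x : ℝ) :
    HasSum (fun k : ℤ => ‖FC T k g x‖ ^ 2) (T * ∫ y, ‖g (x, y)‖ ^ 2) := by
  have hab : -T / 2 < T / 2 := by linarith
  have hgx : Continuous fun y => g (x, y) := by fun_prop
  have hsub : ∀ y, g (x, y) ≠ 0 → -T / 2 < y ∧ y < T / 2 := by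
    intro y hy
    have : |y| < T / 2 := by by_contra h; exact hy (hz (x, y) (not_lt.1 h))
    rw [abs_lt] at this
    exact ⟨by linarith [this.1], this.2⟩
  have hsupp : HasCompactSupport fun y => g (x, y) := by
    refine HasCompactSupport.intro (isCompact_Icc (a := -T / 2) (b := T / 2)) fun y hy => ?_
    by_contra hne
    have := hsub y hne
    exact hy ⟨this.1.le, this.2.le⟩
  have h := hasSum_sq_fourierCoeffOn (f := fun y => g (x, y)) hab
    ((hgx.memLp_of_hasCompactSupport hsupp).restrict _)
  have hk : ∀ k : ℤ, ‖fourierCoeffOn hab (fun y => g (x, y)) k‖ ^ 2 = (T⁻¹) ^ 2 * ‖FC T k g x‖ ^ 2 := by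
    intro k
    rw [fourierCoeffOn_eq_integral, norm_smul, mul_pow]
    have hTT : T / 2 - -T / 2 = T := by ring
    congr 2
    · rw [hTT]; simp [abs_of_pos hT]
    · unfold FC
      congr 1
      apply intervalIntegral.integral_congr
      intro y _
      simp only [smul_eq_mul, fourier_coe_apply]
      rw [hTT]
      congr 2
      push_cast
      ring
  simp_rw [hk] at h
  rw [intervalIntegral.integral_eq_integral_of_support_subset] at h
  · have h2 := h.mul_left (T ^ 2)
    have e1 : (fun i : ℤ => T ^ 2 * (T⁻¹ ^ 2 * ‖FC T i g x‖ ^ 2)) = fun k : ℤ => ‖FC T k g x‖ ^ 2 := by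
      ext k; field_simp
    have hTT : T / 2 - -T / 2 = T := by ring
    rw [e1, hTT, smul_eq_mul, ← mul_assoc] at h2
    rwa [show T ^ 2 * T⁻¹ = T by field_simp] at h2
  · intro y hy
    have := hsub y (by intro h0; exact hy (by simp [h0]))
    exact ⟨this.1, this.2.le⟩

lemma sqn_int {g : ℝ × ℝ → ℂ} (hg : Continuous g) (hs : HasCompactSupport g) :
    Integrable fun p => ‖g p‖ ^ 2 :=
  Continuous.integrable_of_hasCompactSupport (by fun_prop)
    (hs.norm.comp_left (g := fun t : ℝ => t ^ 2) (by simp))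

lemma FC_parseval {T : ℝ} (hT : 0 < T) {g : ℝ × ℝ → ℂ} (hg : Continuous g)
    (hs : HasCompactSupport g)
    (hz : ∀ p : ℝ × ℝ, T / 2 ≤ |p.2| → g p = 0) :
    HasSum (fun k : ℤ => ∫ x, ‖FC T k g x‖ ^ 2) (T * ∫ p, ‖g p‖ ^ 2) := by
  have hi := sqn_int hg hs
  rw [Measure.volume_eq_prod] at hi ⊢
  rw [integral_prod _ hi, ← integral_const_mul]
  refine hasSum_integral_of_dominated_convergence (fun k x => ‖FC T k g x‖ ^ 2) ?_ ?_ ?_ ?_ ?_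
  · intro k
    have := FC_cont T k hg
    exact Continuous.aestronglyMeasurable (by fun_prop)
  · intro k; exact Eventually.of_forall fun x => by simp
  · exact Eventually.of_forall fun x => (FC_parseval_pt hT hg hz x).summable
  · simp_rw [fun x => (FC_parseval_pt hT hg hz x).tsum_eq]
    exact hi.integral_prod_left.const_mul _
  · exact Eventually.of_forall fun x => FC_parseval_pt hT hg hz x

section test
variable {L T : ℝ} {v : ℝ × ℝ → ℂ}

lemma IsTestOn.diff {Ω : Set (ℝ × ℝ)} (h : IsTestOn Ω v) (p) : HasFDerivAt v (fderiv ℝ v p) p :=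
  (h.1.differentiable (by simp) p).hasFDerivAt

lemma IsTestOn.contX {Ω : Set (ℝ × ℝ)} (h : IsTestOn Ω v) : Continuous (dX v) := by
  have : Continuous (fderiv ℝ v) := h.1.continuous_fderiv (by simp)
  unfold dX; fun_prop

lemma IsTestOn.contY {Ω : Set (ℝ × ℝ)} (h : IsTestOn Ω v) : Continuous (dY v) := by
  have : Continuous (fderiv ℝ v) := h.1.continuous_fderiv (by simp)
  unfold dY; fun_prop

lemma zX {p : ℝ × ℝ} (h : p ∉ tsupport v) : dX v p = 0 := by
  have : fderiv ℝ v p = 0 := by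
    by_contra h2
    exact h (support_fderiv_subset ℝ h2)
  simp [dX, this]

lemma zY {p : ℝ × ℝ} (h : p ∉ tsupport v) : dY v p = 0 := by
  have : fderiv ℝ v p = 0 := by
    by_contra h2
    exact h (support_fderiv_subset ℝ h2)
  simp [dY, this]

lemma z0 {p : ℝ × ℝ} (h : p ∉ tsupport v) : v p = 0 := image_eq_zero_of_notMem_tsupport h

lemma IsTestOn.hderX {Ω : Set (ℝ × ℝ)} (h : IsTestOn Ω v) (x y : ℝ) :
    HasDerivAt (fun x => v (x, y)) (dX v (x, y)) x :=
  (h.diff (x, y)).comp_hasDerivAt x ((hasDerivAt_id x).prodMk (hasDerivAt_const x y))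

lemma IsTestOn.hderY {Ω : Set (ℝ × ℝ)} (h : IsTestOn Ω v) (x y : ℝ) :
    HasDerivAt (fun y => v (x, y)) (dY v (x, y)) y :=
  (h.diff (x, y)).comp_hasDerivAt y ((hasDerivAt_const y x).prodMk (hasDerivAt_id y))

lemma IsTestOn.suppX {Ω : Set (ℝ × ℝ)} (h : IsTestOn Ω v) : HasCompactSupport (dX v) :=
  HasCompactSupport.intro h.2.1 fun _ hp => zX hp

lemma IsTestOn.suppY {Ω : Set (ℝ × ℝ)} (h : IsTestOn Ω v) : HasCompactSupport (dY v) :=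
  HasCompactSupport.intro h.2.1 fun _ hp => zY hp

lemma not_rect_y {p : ℝ × ℝ} (hp : T / 2 ≤ |p.2|) : p ∉ rectR L T := by
  intro h
  have : |p.2| < T / 2 := by
    rw [abs_lt]; exact ⟨by have := h.2.1; linarith, h.2.2⟩
  linarith

lemma FC_deriv {Ω : Set (ℝ × ℝ)} (h : IsTestOn Ω v) (k : ℤ) (x : ℝ) :
    HasDerivAt (FC T k v) (FC T k (dX v) x) x := by
  obtain ⟨C, hC⟩ := h.contX.bounded_above_of_compact_support h.suppX
  have hv := h.1.continuous
  have hX := h.contX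
  refine (intervalIntegral.hasDerivAt_integral_of_dominated_loc_of_deriv_le
    (F := fun x y => Complex.exp (-((2 * π * k / T * y : ℝ) : ℂ) * Complex.I) * v (x, y))
    (F' := fun x y => Complex.exp (-((2 * π * k / T * y : ℝ) : ℂ) * Complex.I) * dX v (x, y))
    (bound := fun _ => C) (s := Set.univ) univ_mem ?_ ?_ ?_ ?_ ?_ ?_).2
  · exact Eventually.of_forall fun x => Continuous.aestronglyMeasurable (by fun_prop)
  · exact Continuous.intervalIntegrable (by fun_prop) _ _
  · exact Continuous.aestronglyMeasurable (by fun_prop)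
  · refine Eventually.of_forall fun y _ x _ => ?_
    rw [norm_mul, ← Complex.ofReal_neg, Complex.norm_exp_ofReal_mul_I, one_mul]
    exact hC _
  · exact intervalIntegrable_const
  · exact Eventually.of_forall fun y _ x _ => (h.hderX x y).const_mul _

lemma FC_dY (h : IsTestOn (rectR L T) v) (b : ℝ) (k : ℤ) (x : ℝ) :
    FC T k (fun p => -Complex.I * dY v p + ((b * p.1 : ℝ) : ℂ) * v p) x =
      ((2 * π * k / T + b * x : ℝ) : ℂ) * FC T k v x := by
  have hv := h.1.continuous
  have hY := h.contY
  set κ : ℝ := 2 * π * k / T with hκ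
  have he : ∀ y : ℝ, HasDerivAt (fun y : ℝ => Complex.exp (-((κ * y : ℝ) : ℂ) * Complex.I))
      (Complex.exp (-((κ * y : ℝ) : ℂ) * Complex.I) * (-(κ : ℂ) * Complex.I)) y := by
    intro y
    have h1 : HasDerivAt (fun y : ℝ => -((κ * y : ℝ) : ℂ) * Complex.I) (-(κ : ℂ) * Complex.I) y := by
      have := (((hasDerivAt_id y).const_mul κ).ofReal_comp.neg).mul_const Complex.I
      exact HasDerivAt.congr_deriv this (by simp)
    exact h1.cexp
  have hb1 : v (x, T / 2) = 0 := z0 fun hp => not_rect_y (L := L) (T := T) (p := (x, T/2))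
    (le_abs_self _) (h.2.2 hp)
  have hb2 : v (x, -T / 2) = 0 := z0 fun hp => not_rect_y (L := L) (T := T) (p := (x, -T/2))
    (by simp only; rw [neg_div, abs_neg]; exact le_abs_self _) (h.2.2 hp)
  have ibp := intervalIntegral.integral_mul_deriv_eq_deriv_mul (a := -T/2) (b := T/2)
    (u := fun y : ℝ => Complex.exp (-((κ * y : ℝ) : ℂ) * Complex.I))
    (v := fun y => v (x, y)) (fun y _ => he y) (fun y _ => h.hderY x y)
    (Continuous.intervalIntegrable (by fun_prop) _ _)
    (Continuous.intervalIntegrable (by fun_prop) _ _)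
  simp only [hb1, hb2, mul_zero, sub_zero, zero_sub] at ibp
  have e2 : ∫ y in (-T/2)..(T/2), Complex.exp (-((κ * y : ℝ) : ℂ) * Complex.I) * (-(κ : ℂ) * Complex.I) * v (x, y)
      = (-(κ : ℂ) * Complex.I) * ∫ y in (-T/2)..(T/2), Complex.exp (-((κ * y : ℝ) : ℂ) * Complex.I) * v (x, y) := by
    rw [← intervalIntegral.integral_const_mul]
    congr 1; ext y; ring
  rw [e2] at ibp
  unfold FC
  simp only [← hκ]
  have e3 : ∫ y in (-T/2)..(T/2), Complex.exp (-((κ * y : ℝ) : ℂ) * Complex.I) *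
        (-Complex.I * dY v (x, y) + ((b * x : ℝ) : ℂ) * v (x, y)) =
      (-Complex.I) * (∫ y in (-T/2)..(T/2), Complex.exp (-((κ * y : ℝ) : ℂ) * Complex.I) * dY v (x, y))
      + ((b * x : ℝ) : ℂ) * ∫ y in (-T/2)..(T/2), Complex.exp (-((κ * y : ℝ) : ℂ) * Complex.I) * v (x, y) := by
    rw [← intervalIntegral.integral_const_mul, ← intervalIntegral.integral_const_mul,
      ← intervalIntegral.integral_add (Continuous.intervalIntegrable (by fun_prop) _ _)
        (Continuous.intervalIntegrable (by fun_prop) _ _)]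
    congr 1; ext y; ring
  rw [e3, ibp]
  push_cast
  linear_combination (-(κ : ℂ) * ∫ y in (-T/2)..(T/2), Complex.exp (-((κ:ℂ) * y) * Complex.I) * v (x, y)) * Complex.I_sq

lemma FC_zero (h : IsTestOn (rectR L T) v) (k : ℤ) (x : ℝ) (hx : L / 2 ≤ |x|) : FC T k v x = 0 := by
  unfold FC
  have : ∀ y, v (x, y) = 0 := fun y => z0 fun hp => by
    have h1 := (h.2.2 hp).1
    have : |x| < L / 2 := by
      rw [abs_lt]; exact ⟨by have := h1.1; linarith, h1.2⟩
    linarith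
  simp [this]

lemma FC_supp (h : IsTestOn (rectR L T) v) (k : ℤ) : HasCompactSupport (FC T k v) := by
  refine HasCompactSupport.intro (isCompact_closedBall (0:ℝ) (L/2)) fun x hx => ?_
  simp at hx
  exact FC_zero h k x hx.le

end test

/-- Landau-gauge form -/
def Qv (b : ℝ) (v : ℝ × ℝ → ℂ) : ℝ :=
  ∫ p : ℝ × ℝ, (‖dX v p‖ ^ 2 + ‖-Complex.I * dY v p + ((b * p.1 : ℝ) : ℂ) * v p‖ ^ 2)

lemma lower_bound {b L T lam : ℝ} (hb : 0 < b) (hT : 0 < T) {n : ℕ}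
    (hn : lam ≤ (2 * n + 1) * b) (s : Finset ℤ)
    (hsfar : ∀ k : ℤ, k ∉ s → ∀ x : ℝ, |x| < L / 2 → lam ≤ (2 * π * k / T + b * x) ^ 2)
    {v : ℝ × ℝ → ℂ} (h : IsTestOn (rectR L T) v)
    (ho : ∀ k ∈ s, ∀ j < n, ∫ x, (Phi b (-(2 * π * k / T) / b) j x : ℂ) * FC T k v x = 0) :
    lam * ∫ p, ‖v p‖ ^ 2 ≤ Qv b v := by
  have hv := h.1.continuous
  have hY := h.contY
  have hX := h.contX
  have hcY : Continuous fun p : ℝ × ℝ => -Complex.I * dY v p + ((b * p.1 : ℝ) : ℂ) * v p := by fun_prop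
  have hsY : HasCompactSupport fun p : ℝ × ℝ => -Complex.I * dY v p + ((b * p.1 : ℝ) : ℂ) * v p :=
    HasCompactSupport.intro h.2.1 fun p hp => by rw [zY hp, z0 hp]; simp
  have hnt : ∀ p : ℝ × ℝ, T / 2 ≤ |p.2| → p ∉ tsupport v := fun p hp hh =>
    not_rect_y hp (h.2.2 hh)
  have H0 := (FC_parseval hT hv h.2.1 fun p hp => z0 (hnt p hp)).mul_left lam
  have H1 := FC_parseval hT hX h.suppX fun p hp => zX (hnt p hp)
  have H2 := FC_parseval hT hcY hsY fun p hp => by rw [zY (hnt p hp), z0 (hnt p hp)]; simp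
  have key : ∀ k : ℤ, lam * ∫ x, ‖FC T k v x‖ ^ 2 ≤ (∫ x, ‖FC T k (dX v) x‖ ^ 2) +
      ∫ x, ‖FC T k (fun p => -Complex.I * dY v p + ((b * p.1 : ℝ) : ℂ) * v p) x‖ ^ 2 := by
    intro k
    have hd := FC_deriv (T := T) h k
    have hc' := FC_cont T k hX
    have hs := FC_supp h k
    set σ : ℝ := -(2 * π * k / T) / b with hσ
    have hbx : ∀ x, b * (x - σ) = 2 * π * k / T + b * x := by
      intro x; rw [hσ]; field_simp; ring
    have hsX : HasCompactSupport (FC T k (dX v)) := by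
      have e : FC T k (dX v) = deriv (FC T k v) := by ext x; exact (hd x).deriv.symm
      rw [e]; exact hs.deriv
    have hc := FC_cont T k hv
    have e : (∫ x, ‖FC T k (dX v) x‖ ^ 2) +
      ∫ x, ‖FC T k (fun p => -Complex.I * dY v p + ((b * p.1 : ℝ) : ℂ) * v p) x‖ ^ 2 =
      ∫ x, (‖FC T k (dX v) x‖ ^ 2 + (b * (x - σ)) ^ 2 * ‖FC T k v x‖ ^ 2) := by
      simp_rw [hbx, FC_dY h b k, norm_mul, mul_pow, Complex.norm_real, Real.norm_eq_abs, sq_abs]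
      rw [integral_add]
      · exact Continuous.integrable_of_hasCompactSupport (by fun_prop)
          (hsX.norm.comp_left (g := fun t : ℝ => t ^ 2) (by simp))
      · exact Continuous.integrable_of_hasCompactSupport (by fun_prop)
          (hs.norm.comp_left (g := fun t : ℝ => t ^ 2) (by simp)).mul_left
    rw [e]
    by_cases hk : k ∈ s
    · refine le_trans ?_ (oscC b σ hb n hd hc' hs (ho k hk))
      exact mul_le_mul_of_nonneg_right hn (integral_nonneg fun x => by positivity)
    · refine oscC_far b σ lam hd hc' hs fun x hx => ?_
      rw [hbx]
      exact hsfar k hk x (by by_contra h2; exact hx (FC_zero h k x (not_lt.1 h2)))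
  have := hasSum_le key H0 (H1.add H2)
  have e : Qv b v = (∫ p, ‖dX v p‖ ^ 2) +
      ∫ p : ℝ × ℝ, ‖-Complex.I * dY v p + ((b * p.1 : ℝ) : ℂ) * v p‖ ^ 2 :=
    integral_add (sqn_int hX h.suppX) (sqn_int hcY hsY)
  rw [e]
  rw [← mul_add] at this
  have h3 : T * (lam * ∫ p, ‖v p‖ ^ 2) ≤ T * ((∫ p, ‖dX v p‖ ^ 2) +
      ∫ p : ℝ × ℝ, ‖-Complex.I * dY v p + ((b * p.1 : ℝ) : ℂ) * v p‖ ^ 2) := by linarith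
  exact le_of_mul_le_mul_left h3 hT


/-- a linear family of trial functions -/
def GoodE (b lam L T : ℝ) (E : Type) [AddCommGroup E] [Module ℂ E] : Prop :=
  ∃ U : E →ₗ[ℂ] (ℝ × ℝ → ℂ), ∀ c, IsTestOn (rectR L T) (U c) ∧
    (c ≠ 0 → Qv b (U c) < lam * ∫ p, ‖U c p‖ ^ 2)

lemma FC_add (T : ℝ) (k : ℤ) {f g : ℝ × ℝ → ℂ} (hf : Continuous f) (hg : Continuous g) (x : ℝ) :
    FC T k (f + g) x = FC T k f x + FC T k g x := by
  unfold FC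
  rw [← intervalIntegral.integral_add (Continuous.intervalIntegrable (by fun_prop) _ _)
    (Continuous.intervalIntegrable (by fun_prop) _ _)]
  congr 1; ext y; simp only [Pi.add_apply]; ring

lemma FC_smul (T : ℝ) (k : ℤ) (c : ℂ) (f : ℝ × ℝ → ℂ) (x : ℝ) :
    FC T k (c • f) x = c * FC T k f x := by
  unfold FC
  rw [← intervalIntegral.integral_const_mul]
  congr 1; ext y; simp only [Pi.smul_apply, smul_eq_mul]; ring

lemma count_bound {b L T lam : ℝ} (hb : 0 < b) (hT : 0 < T) (hL : 0 < L) {n : ℕ}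
    (hn : lam ≤ (2 * n + 1) * b) (E : Type) [AddCommGroup E] [Module ℂ E] [FiniteDimensional ℂ E]
    (hE : GoodE b lam L T E) :
    (Module.finrank ℂ E : ℝ) ≤ n * (T * (b * L + 2 * √lam) / (2 * π) + 1) := by
  obtain ⟨U, hU⟩ := hE
  set M : ℝ := T * (b * L / 2 + √lam) / (2 * π) with hM
  have hM0 : 0 ≤ M := by positivity
  set s : Finset ℤ := Finset.Icc ⌈-M⌉ ⌊M⌋ with hs
  have hcard : (s.card : ℝ) ≤ 2 * M + 1 := by
    rw [hs, Int.card_Icc, Int.ceil_neg]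
    have h0 : 0 ≤ ⌊M⌋ := Int.floor_nonneg.2 hM0
    have h1 : ((⌊M⌋ + 1 - -⌊M⌋).toNat : ℤ) = ⌊M⌋ + 1 - -⌊M⌋ := Int.toNat_of_nonneg (by omega)
    have h2 : ((⌊M⌋ + 1 - -⌊M⌋).toNat : ℝ) = ((⌊M⌋ + 1 - -⌊M⌋ : ℤ) : ℝ) := by
      exact_mod_cast congrArg (Int.cast : ℤ → ℝ) h1
    rw [h2]; push_cast
    have := Int.floor_le M
    linarith
  have hfar : ∀ k : ℤ, k ∉ s → ∀ x : ℝ, |x| < L / 2 → lam ≤ (2 * π * k / T + b * x) ^ 2 := by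
    intro k hk x hx
    have hkM : M < |(k : ℝ)| := by
      by_contra hcon
      rw [not_lt, abs_le] at hcon
      exact hk (Finset.mem_Icc.2 ⟨Int.ceil_le.2 hcon.1, Int.le_floor.2 hcon.2⟩)
    have h1 : b * L / 2 + √lam < |2 * π * k / T| := by
      rw [abs_div, abs_mul, abs_of_pos hT, abs_of_pos (by positivity : (0:ℝ) < 2 * π), lt_div_iff₀ hT]
      rw [hM, div_lt_iff₀ (by positivity)] at hkM
      linarith
    have h2 : |b * x| ≤ b * L / 2 := by
      rw [abs_mul, abs_of_pos hb]; nlinarith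
    have h3 : |2 * π * k / T| - |b * x| ≤ |2 * π * k / T + b * x| := by
      have := abs_sub_abs_le_abs_sub (2 * π * k / T) (-(b * x))
      rwa [abs_neg, sub_neg_eq_add] at this
    have h4 : √lam ≤ |2 * π * k / T + b * x| := by linarith
    rw [← sq_abs]
    exact (Real.sqrt_le_left (abs_nonneg _)).1 h4
  have hfin : (Module.finrank ℂ E) ≤ s.card * n := by
    by_contra hcon
    rw [not_le] at hcon
    have hint : ∀ (k : ℤ) (j : ℕ) (c : E),
        Integrable fun x => (Phi b (-(2 * π * k / T) / b) j x : ℂ) * FC T k (U c) x := by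
      intro k j c
      exact Continuous.integrable_of_hasCompactSupport
        ((Complex.continuous_ofReal.comp (Phi_cont _ _ _)).mul (FC_cont T k (hU c).1.1.continuous))
        (FC_supp (hU c).1 k).mul_left
    let Λ : E →ₗ[ℂ] (s × Fin n → ℂ) :=
      { toFun := fun c i => ∫ x, (Phi b (-(2 * π * (i.1 : ℤ) / T) / b) i.2 x : ℂ) * FC T i.1 (U c) x
        map_add' := by
          intro c d
          ext i
          simp only [Pi.add_apply]
          rw [← integral_add (hint _ _ _) (hint _ _ _)]
          congr 1; ext x
          rw [map_add, FC_add _ _ (hU c).1.1.continuous (hU d).1.1.continuous]; ring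
        map_smul' := by
          intro a c
          ext i
          simp only [Pi.smul_apply, smul_eq_mul, RingHom.id_apply]
          rw [← integral_const_mul]
          congr 1; ext x
          rw [map_smul, FC_smul]; ring }
    have hker : LinearMap.ker Λ ≠ ⊥ := LinearMap.ker_ne_bot_of_finrank_lt (by
      rw [Module.finrank_fintype_fun_eq_card]; simpa using hcon)
    obtain ⟨c, hc, hc0⟩ := (Submodule.ne_bot_iff _).1 hker
    have h1 := (hU c).2 hc0
    have h2 := lower_bound hb hT hn s hfar (hU c).1 (by
      intro k hk j hj
      exact congrFun (LinearMap.mem_ker.1 hc) (⟨k, hk⟩, ⟨j, hj⟩))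
    linarith
  calc (Module.finrank ℂ E : ℝ) ≤ ((s.card * n : ℕ) : ℝ) := by exact_mod_cast hfin
    _ = n * s.card := by push_cast; ring
    _ ≤ n * (2 * M + 1) := by gcongr
    _ = _ := by rw [hM]; ring

/-- gauge change composed with a translation -/
def MT (α β a : ℝ) : (ℝ × ℝ → ℂ) →ₗ[ℂ] (ℝ × ℝ → ℂ) where
  toFun u p := Complex.exp (((α * p.1 * p.2 + β * p.2 : ℝ) : ℂ) * Complex.I) * u (p - (a, 0))
  map_add' u v := by ext p; simp only [Pi.add_apply]; ring
  map_smul' c u := by ext p; simp only [Pi.smul_apply, smul_eq_mul, RingHom.id_apply]; ring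

lemma MT_apply (α β a : ℝ) (u : ℝ × ℝ → ℂ) (p : ℝ × ℝ) : MT α β a u p =
    Complex.exp (((α * p.1 * p.2 + β * p.2 : ℝ) : ℂ) * Complex.I) * u (p - (a, 0)) := rfl

lemma MT_norm (α β a : ℝ) (u : ℝ × ℝ → ℂ) (p : ℝ × ℝ) : ‖MT α β a u p‖ = ‖u (p - (a, 0))‖ := by
  rw [MT_apply, norm_mul, Complex.norm_exp_ofReal_mul_I, one_mul]

lemma MT_nsq (α β a : ℝ) (u : ℝ × ℝ → ℂ) : ∫ p, ‖MT α β a u p‖ ^ 2 = ∫ p, ‖u p‖ ^ 2 := by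
  simp_rw [MT_norm]
  exact integral_sub_right_eq_self (fun p => ‖u p‖ ^ 2) ((a, 0) : ℝ × ℝ)

lemma MT_test {Ω Ω' : Set (ℝ × ℝ)} (α β a : ℝ) {u : ℝ × ℝ → ℂ} (h : IsTestOn Ω u)
    (hΩ : ∀ p : ℝ × ℝ, p - (a, 0) ∈ Ω → p ∈ Ω') :
    IsTestOn Ω' (MT α β a u) := by
  have hsub : tsupport (MT α β a u) ⊆ (fun p : ℝ × ℝ => p - (a, 0)) ⁻¹' tsupport u := by
    refine closure_minimal ?_ ((isClosed_tsupport u).preimage (by fun_prop))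
    intro p hp
    refine subset_tsupport u ?_
    intro h0
    exact hp (by rw [MT_apply, h0, mul_zero])
  refine ⟨?_, ?_, fun p hp => hΩ p (h.2.2 (hsub hp))⟩
  · have hu := h.1
    have h1 : ContDiff ℝ (⊤ : ℕ∞) fun p : ℝ × ℝ => α * p.1 * p.2 + β * p.2 := by fun_prop
    have h2 : ContDiff ℝ (⊤ : ℕ∞) fun p : ℝ × ℝ => ((α * p.1 * p.2 + β * p.2 : ℝ) : ℂ) :=
      Complex.ofRealCLM.contDiff.comp h1
    exact ((h2.mul contDiff_const).cexp).mul (hu.comp (by fun_prop))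
  · have : IsCompact ((fun p : ℝ × ℝ => p - (a, 0)) ⁻¹' tsupport u) := by
      have := (Homeomorph.subRight ((a, 0) : ℝ × ℝ)).isCompact_preimage.2 h.2.1
      exact this
    exact this.of_isClosed_subset (isClosed_tsupport _) hsub

lemma dX_eq {v : ℝ × ℝ → ℂ} {p : ℝ × ℝ} (h : DifferentiableAt ℝ v p) {d : ℂ}
    (hd : HasDerivAt (fun x => v (x, p.2)) d p.1) : dX v p = d := by
  have h1 : HasDerivAt (fun x => v (x, p.2)) (dX v p) p.1 :=
    HasFDerivAt.comp_hasDerivAt (f := fun x => (x, p.2)) p.1 h.hasFDerivAt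
      ((hasDerivAt_id p.1).prodMk (hasDerivAt_const p.1 p.2))
  exact h1.unique hd

lemma dY_eq {v : ℝ × ℝ → ℂ} {p : ℝ × ℝ} (h : DifferentiableAt ℝ v p) {d : ℂ}
    (hd : HasDerivAt (fun y => v (p.1, y)) d p.2) : dY v p = d := by
  have h1 : HasDerivAt (fun y => v (p.1, y)) (dY v p) p.2 :=
    HasFDerivAt.comp_hasDerivAt (f := fun y => (p.1, y)) p.2 h.hasFDerivAt
      ((hasDerivAt_const p.2 p.1).prodMk (hasDerivAt_id p.2))
  exact h1.unique hd

lemma MT_dX {Ω : Set (ℝ × ℝ)} (α β a : ℝ) {u : ℝ × ℝ → ℂ} (h : IsTestOn Ω u) (p : ℝ × ℝ) :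
    dX (MT α β a u) p = Complex.exp (((α * p.1 * p.2 + β * p.2 : ℝ) : ℂ) * Complex.I) *
      (dX u (p - (a, 0)) + Complex.I * ((α * p.2 : ℝ) : ℂ) * u (p - (a, 0))) := by
  have ht := MT_test (Ω' := Set.univ) α β a h (fun _ _ => trivial)
  apply dX_eq (ht.diff p).differentiableAt
  have h1 : HasDerivAt (fun x : ℝ => ((α * x * p.2 + β * p.2 : ℝ) : ℂ) * Complex.I)
      (((α * p.2 : ℝ) : ℂ) * Complex.I) p.1 := by
    have := ((((hasDerivAt_id p.1).const_mul α).mul_const p.2).add_const (β * p.2)).ofReal_comp.mul_const Complex.I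
    exact HasDerivAt.congr_deriv this (by simp)
  have h2 : HasDerivAt (fun x : ℝ => u (x - a, p.2)) (dX u (p.1 - a, p.2)) p.1 := by
    have := (h.hderX (p.1 - a) p.2).comp_sub_const p.1 a
    exact this
  have h3 := h1.cexp.mul h2
  have e : p - (a, 0) = (p.1 - a, p.2) := by ext <;> simp
  rw [e]
  have e2 : (fun x => MT α β a u (x, p.2)) = (fun x : ℝ => Complex.exp (((α * x * p.2 + β * p.2 : ℝ) : ℂ) * Complex.I)) * fun x : ℝ => u (x - a, p.2) := by
    ext x; simp [MT_apply]
  rw [e2]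
  exact HasDerivAt.congr_deriv h3 (by ring)

lemma MT_dY {Ω : Set (ℝ × ℝ)} (α β a : ℝ) {u : ℝ × ℝ → ℂ} (h : IsTestOn Ω u) (p : ℝ × ℝ) :
    dY (MT α β a u) p = Complex.exp (((α * p.1 * p.2 + β * p.2 : ℝ) : ℂ) * Complex.I) *
      (dY u (p - (a, 0)) + Complex.I * ((α * p.1 + β : ℝ) : ℂ) * u (p - (a, 0))) := by
  have ht := MT_test (Ω' := Set.univ) α β a h (fun _ _ => trivial)
  apply dY_eq (ht.diff p).differentiableAt
  have h1 : HasDerivAt (fun y : ℝ => ((α * p.1 * y + β * y : ℝ) : ℂ) * Complex.I)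
      (((α * p.1 + β : ℝ) : ℂ) * Complex.I) p.2 := by
    have := (((hasDerivAt_id p.2).const_mul (α * p.1)).add ((hasDerivAt_id p.2).const_mul β)).ofReal_comp.mul_const Complex.I
    exact HasDerivAt.congr_deriv this (by simp)
  have h2 := h.hderY (p.1 - a) p.2
  have h3 := h1.cexp.mul h2
  have e : p - (a, 0) = (p.1 - a, p.2) := by ext <;> simp
  rw [e]
  have e2 : (fun y => MT α β a u (p.1, y)) = (fun y : ℝ => Complex.exp (((α * p.1 * y + β * y : ℝ) : ℂ) * Complex.I)) * fun y : ℝ => u (p.1 - a, y) := by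
    ext x; simp [MT_apply]
  rw [e2]
  exact HasDerivAt.congr_deriv h3 (by ring)

lemma Qv_translate {Ω : Set (ℝ × ℝ)} (b a : ℝ) {u : ℝ × ℝ → ℂ} (h : IsTestOn Ω u) :
    Qv b (MT 0 (-(b * a)) a u) = Qv b u := by
  unfold Qv
  rw [← integral_sub_right_eq_self (fun p : ℝ × ℝ =>
    (‖dX u p‖ ^ 2 + ‖-Complex.I * dY u p + ((b * p.1 : ℝ) : ℂ) * u p‖ ^ 2)) ((a, 0) : ℝ × ℝ)]
  congr 1; ext p
  rw [MT_dX _ _ _ h, MT_dY _ _ _ h, MT_apply]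
  set e := Complex.exp (((0 * p.1 * p.2 + -(b * a) * p.2 : ℝ) : ℂ) * Complex.I) with he
  have hen : ‖e‖ = 1 := Complex.norm_exp_ofReal_mul_I _
  congr 2
  · rw [norm_mul, hen]; simp
  · rw [show -Complex.I * (e * (dY u (p - (a, 0)) + Complex.I * ((0 * p.1 + -(b * a) : ℝ) : ℂ) * u (p - (a, 0))))
      + ((b * p.1 : ℝ) : ℂ) * (e * u (p - (a, 0))) = e * (-Complex.I * dY u (p - (a, 0)) +
        ((b * (p - (a, 0)).1 : ℝ) : ℂ) * u (p - (a, 0))) by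
      simp only [Prod.fst_sub]; push_cast
      linear_combination (e * b * a * u (p - (a, 0))) * Complex.I_sq]
    rw [norm_mul, hen, one_mul]

lemma Qv_gauge {Ω : Set (ℝ × ℝ)} (b : ℝ) {u : ℝ × ℝ → ℂ} (h : IsTestOn Ω u) :
    Qv b (MT (-(b / 2)) 0 0 u) = qb b u := by
  unfold Qv qb
  congr 1; ext p
  rw [MT_dX _ _ _ h, MT_dY _ _ _ h, MT_apply]
  have hp : p - (0, 0) = p := by ext <;> simp
  rw [hp]
  set e := Complex.exp (((-(b / 2) * p.1 * p.2 + 0 * p.2 : ℝ) : ℂ) * Complex.I) with he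
  have hen : ‖e‖ = 1 := Complex.norm_exp_ofReal_mul_I _
  congr 2
  · rw [show e * (dX u p + Complex.I * ((-(b / 2) * p.2 : ℝ) : ℂ) * u p) =
      (e * Complex.I) * (-Complex.I * dX u p - ((b * p.2 / 2 : ℝ) : ℂ) * u p) by
      push_cast
      linear_combination (e * dX u p) * Complex.I_sq]
    rw [norm_mul, norm_mul, hen, Complex.norm_I, one_mul, one_mul]
  · rw [show -Complex.I * (e * (dY u p + Complex.I * ((-(b / 2) * p.1 + 0 : ℝ) : ℂ) * u p))
      + ((b * p.1 : ℝ) : ℂ) * (e * u p) = e * (-Complex.I * dY u p +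
        ((b * p.1 / 2 : ℝ) : ℂ) * u p) by
      push_cast
      linear_combination (e * (b / 2) * p.1 * u p) * Complex.I_sq]
    rw [norm_mul, hen, one_mul]

lemma IsTestOn.Qint {Ω : Set (ℝ × ℝ)} {v : ℝ × ℝ → ℂ} (h : IsTestOn Ω v) (b : ℝ) :
    Integrable fun p : ℝ × ℝ => (‖dX v p‖ ^ 2 + ‖-Complex.I * dY v p + ((b * p.1 : ℝ) : ℂ) * v p‖ ^ 2) := by
  have hv := h.1.continuous
  have hY := h.contY
  have hX := h.contX
  exact Continuous.integrable_of_hasCompactSupport (by fun_prop)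
    (HasCompactSupport.intro h.2.1 fun p hp => by rw [zX hp, zY hp, z0 hp]; simp)

lemma add_disjoint {Ω₁ Ω₂ : Set (ℝ × ℝ)} (hd : Disjoint Ω₁ Ω₂) {u v : ℝ × ℝ → ℂ}
    (hu : IsTestOn Ω₁ u) (hv : IsTestOn Ω₂ v) (b : ℝ) :
    Qv b (u + v) = Qv b u + Qv b v ∧
    ∫ p, ‖(u + v) p‖ ^ 2 = (∫ p, ‖u p‖ ^ 2) + ∫ p, ‖v p‖ ^ 2 := by
  have hX : ∀ p, dX (u + v) p = dX u p + dX v p := fun p => by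
    unfold dX; rw [fderiv_add (hu.diff p).differentiableAt (hv.diff p).differentiableAt]; rfl
  have hY : ∀ p, dY (u + v) p = dY u p + dY v p := fun p => by
    unfold dY; rw [fderiv_add (hu.diff p).differentiableAt (hv.diff p).differentiableAt]; rfl
  have hcase : ∀ p, p ∉ tsupport u ∨ p ∉ tsupport v := by
    intro p
    by_contra hcon
    push Not at hcon
    exact Set.disjoint_left.1 hd (hu.2.2 hcon.1) (hv.2.2 hcon.2)
  constructor
  · unfold Qv
    rw [← integral_add (hu.Qint b) (hv.Qint b)]
    congr 1; ext p
    rw [hX, hY, Pi.add_apply]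
    rcases hcase p with hp | hp <;> rw [zX hp, zY hp, z0 hp] <;> simp
  · rw [← integral_add (sqn_int hu.1.continuous hu.2.1) (sqn_int hv.1.continuous hv.2.1)]
    congr 1; ext p
    rw [Pi.add_apply]
    rcases hcase p with hp | hp <;> rw [z0 hp] <;> simp

lemma doubling {b lam L T : ℝ} (E : Type) [AddCommGroup E] [Module ℂ E]
    (hE : GoodE b lam L T E) : GoodE b lam (2 * L) T (E × E) := by
  obtain ⟨U, hU⟩ := hE
  have hle : ∀ c, Qv b (U c) ≤ lam * ∫ p, ‖U c p‖ ^ 2 := by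
    intro c
    by_cases hc : c = 0
    · have : (U c) = fun _ => 0 := by rw [hc, map_zero]; rfl
      rw [this]; simp [Qv, dX, dY]
    · exact ((hU c).2 hc).le
  set Ω₁ : Set (ℝ × ℝ) := {p | p - (-(L/2), 0) ∈ rectR L T} with hΩ₁
  set Ω₂ : Set (ℝ × ℝ) := {p | p - (L/2, 0) ∈ rectR L T} with hΩ₂
  have hdisj : Disjoint Ω₁ Ω₂ := by
    rw [Set.disjoint_left]
    intro p h1 h2
    have h1' := h1.1.2
    have h2' := h2.1.1
    simp at h1' h2'
    linarith
  refine ⟨(MT 0 (-(b * -(L/2))) (-(L/2)) ∘ₗ U).coprod (MT 0 (-(b * (L/2))) (L/2) ∘ₗ U), ?_⟩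
  rintro ⟨c, d⟩
  have t1 : IsTestOn Ω₁ (MT 0 (-(b * -(L/2))) (-(L/2)) (U c)) := MT_test _ _ _ (hU c).1 fun p hp => hp
  have t2 : IsTestOn Ω₂ (MT 0 (-(b * (L/2))) (L/2) (U d)) := MT_test _ _ _ (hU d).1 fun p hp => hp
  obtain ⟨a1, a2⟩ := add_disjoint hdisj t1 t2 b
  rw [Qv_translate b _ (hU c).1, Qv_translate b _ (hU d).1] at a1
  rw [MT_nsq, MT_nsq] at a2
  simp only [LinearMap.coprod_apply, LinearMap.comp_apply]
  refine ⟨⟨t1.1.add t2.1, t1.2.1.add t2.2.1, ?_⟩, ?_⟩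
  · refine (tsupport_add _ _).trans (Set.union_subset (t1.2.2.trans ?_) (t2.2.2.trans ?_))
    · intro p hp
      obtain ⟨⟨h1, h2⟩, h3, h4⟩ := hp
      simp at h1 h2 h3 h4
      exact ⟨⟨by linarith, by linarith⟩, by linarith, by linarith⟩
    · intro p hp
      obtain ⟨⟨h1, h2⟩, h3, h4⟩ := hp
      simp at h1 h2 h3 h4
      exact ⟨⟨by linarith, by linarith⟩, by linarith, by linarith⟩
  · intro hne
    rw [a1, a2]
    by_cases hc : c = 0
    · have hd : d ≠ 0 := by
        intro hd; exact hne (by rw [hc, hd]; rfl)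
      have := (hU d).2 hd
      have := hle c
      linarith
    · have := (hU c).2 hc
      have := hle d
      linarith

lemma doubling_iter {b lam L T : ℝ} (E : Type) [AddCommGroup E] [Module ℂ E] [FiniteDimensional ℂ E]
    (hE : GoodE b lam L T E) (j : ℕ) : ∃ (F : Type) (_ : AddCommGroup F) (_ : Module ℂ F),
      FiniteDimensional ℂ F ∧ GoodE b lam (2 ^ j * L) T F ∧
      Module.finrank ℂ F = 2 ^ j * Module.finrank ℂ E := by
  induction j with
  | zero => exact ⟨E, _, _, inferInstance, by simpa using hE, by simp⟩
  | succ j ih =>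
    obtain ⟨F, i1, i2, i3, hF, hd⟩ := ih
    refine ⟨F × F, inferInstance, inferInstance, inferInstance, ?_, ?_⟩
    · have := doubling F hF
      rwa [show (2:ℝ) ^ (j+1) * L = 2 * (2 ^ j * L) by ring]
    · rw [Module.finrank_prod, hd]; ring

lemma landau_le (b lam : ℝ) (hb : 0 < b) : lam ≤ (2 * (landauCount b lam : ℝ) + 1) * b := by
  by_contra hcon
  rw [not_le] at hcon
  set N := landauCount b lam with hN
  have hfin : {n : ℕ | (2 * (n : ℝ) + 1) * b < lam}.Finite := by
    refine (Set.finite_le_nat ⌈lam / b⌉₊).subset fun n hn => ?_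
    have h1 : (2 * (n : ℝ) + 1) * b < lam := hn
    rw [← lt_div_iff₀ hb] at h1
    have h2 := Nat.le_ceil (lam / b)
    have h3 : (n : ℝ) ≤ ⌈lam / b⌉₊ := by
      have : (0:ℝ) ≤ n := Nat.cast_nonneg n
      linarith
    exact_mod_cast h3
  have hsub : (Finset.range (N + 1) : Set ℕ) ⊆ {n : ℕ | (2 * (n : ℝ) + 1) * b < lam} := by
    intro n hn
    have h1 : n ≤ N := by simpa [Nat.lt_succ_iff] using hn
    have h2 : (n : ℝ) ≤ N := by exact_mod_cast h1
    show (2 * (n : ℝ) + 1) * b < lam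
    nlinarith
  have := Set.ncard_le_ncard hsub hfin
  rw [Set.ncard_coe_finset, Finset.card_range] at this
  have h2 : {n : ℕ | (2 * (n : ℝ) + 1) * b < lam}.ncard = N := rfl
  omega

lemma main_bound (b R₁ R₂ lam : ℝ) (hb : 0 < b) (hR₁ : 0 < R₁) (hR₂ : 0 < R₂)
    (E : Type) [AddCommGroup E] [Module ℂ E] [FiniteDimensional ℂ E]
    (hE : GoodE b lam R₁ R₂ E) :
    (Module.finrank ℂ E : ℝ) ≤ b * (R₁ * R₂) / (2 * π) * (landauCount b lam : ℝ) := by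
  set n := landauCount b lam with hn
  set d := Module.finrank ℂ E with hd
  by_contra hcon
  rw [not_le] at hcon
  set A := b * (R₁ * R₂) / (2 * π) * (n : ℝ) with hA
  set B : ℝ := n * (R₂ * (2 * √lam) / (2 * π) + 1) with hB
  have key : ∀ j : ℕ, (2:ℝ) ^ j * d ≤ 2 ^ j * A + B := by
    intro j
    obtain ⟨F, i1, i2, i3, hF, hdF⟩ := doubling_iter E hE j
    have := count_bound hb hR₂ (by positivity) (landau_le b lam hb) F hF
    rw [hdF] at this
    push_cast at this
    refine this.trans (le_of_eq ?_)
    rw [hA, hB]; ring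
  obtain ⟨j, hj⟩ := pow_unbounded_of_one_lt (B / (d - A)) (one_lt_two : (1:ℝ) < 2)
  rw [div_lt_iff₀ (by linarith)] at hj
  have := key j
  nlinarith

/-- Colin de Verdière's upper bound on a rectangle. -/
theorem landau_rectangle_upper_bound (b R₁ R₂ lam : ℝ)
    (hb : 0 < b) (hR₁ : 0 < R₁) (hR₂ : 0 < R₂) (hlam : 1 < lam) :
    (NNb b lam (rectR R₁ R₂) : ℝ) ≤
      b * (R₁ * R₂) / (2 * π) * (landauCount b lam : ℝ) := by
  have hbd : ∀ d ∈ {n : ℕ | ∃ V : Submodule ℂ (ℝ × ℝ → ℂ),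
      (V : Set (ℝ × ℝ → ℂ)) ⊆ {u | IsTestOn (rectR R₁ R₂) u} ∧
      Module.finrank ℂ V = n ∧ ∀ u ∈ V, u ≠ 0 → qb b u < lam * ∫ p : ℝ × ℝ, ‖u p‖ ^ 2},
      (d : ℝ) ≤ b * (R₁ * R₂) / (2 * π) * (landauCount b lam : ℝ) := by
    rintro d ⟨V, hV, hd, hq⟩
    rcases Nat.eq_zero_or_pos d with h0 | h0
    · rw [h0]; simp only [Nat.cast_zero]; positivity
    · have : FiniteDimensional ℂ V := Module.finite_of_finrank_pos (by rw [hd]; exact h0)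
      rw [← hd]
      refine main_bound b R₁ R₂ lam hb hR₁ hR₂ V ⟨MT (-(b/2)) 0 0 ∘ₗ V.subtype, fun c => ?_⟩
      have ht : IsTestOn (rectR R₁ R₂) (c : ℝ × ℝ → ℂ) := hV c.2
      refine ⟨MT_test _ _ _ ht fun p hp => by
        rwa [show p - ((0:ℝ), (0:ℝ)) = p by ext <;> simp] at hp, fun hc => ?_⟩
      simp only [LinearMap.comp_apply, Submodule.subtype_apply]
      rw [Qv_gauge b ht, MT_nsq]
      exact hq c c.2 (by simpa using hc)
  unfold NNb NN
  refine hbd _ (Nat.sSup_mem ⟨0, ⊥, ?_, by simp, ?_⟩ ?_)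
  · intro u hu
    have : u = fun _ => 0 := by have h0 : u = 0 := by simpa using hu
                                exact h0
    rw [this]
    exact ⟨contDiff_const, HasCompactSupport.zero, by simp [tsupport, Function.support]⟩
  · intro u hu hne
    exact absurd (by simpa using hu) hne
  · exact ⟨⌊b * (R₁ * R₂) / (2 * π) * (landauCount b lam : ℝ)⌋₊, fun d hd => Nat.le_floor (hbd d hd)⟩
end
end
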